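/- Let G be a countable group that is not virtually cyclic. Then G is acylindrically hyperbolic if and only if G admits an action by homeomorphisms on the Baire space ℕ^ℕ (the countable product of copies of ℕ with the product topology) satisfying condition (C) and such that some element of G has north–south dynamics on ℕ^ℕ. -/

import Mathlib

/-!
Acylindrical hyperbolicity of a countable group `G` is read off from a convergence-like action on
the Baire space.

**From the dynamics to hyperbolicity.** Let `f` be an element with north–south dynamics from `x` to
`y`. Since the Baire space is zero-dimensional, the translates of a clopen neighbourhood of `y`
under a power `g` of `f` give an integer-valued height function on the complement of `{x, y}` that
`g` shifts by one (`Frame`, `exists_frame`). Condition (C) at `((x, x), (y, y))` says that only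
finitely many elements squeeze one given pair to height `-∞` and another to `+∞`, and that an
element cannot stretch all four height quadrants at once (`exists_strip`). Consequently the
translates of the axis `{x, y}` other than the axis itself have uniformly bounded height spread
(`exists_bound`), the stabiliser of the axis contains `⟨g⟩` with finite index (`finite_cosets`), and
the Behrstock inequality holds (`behrstock`). The orbit of the axis thus carries projection data in
the sense of Bestvina, Bromberg and Fujiwara (`projData`). Replacing the coarse projections by
exact ones, the number of barriers between two axes becomes, up to bounded error, a metric which
is four-point hyperbolic (`space_fourPt`), roughly geodesic (`space_rough`) and on which `G` acts
acylindrically (`Inv.acyl`) and non-elementarily unless `G` preserves the axis, that is, unless `G`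
is virtually cyclic (`Inv.nonelem`, `Axial.ah`). The injective hull turns this roughly geodesic
space into a geodesic one without losing these properties (`ah_of_rough`).

**From hyperbolicity to the dynamics.** Let `G` act acylindrically and non-elementarily on `S`. The
Gromov product of orbit points makes `G` a uniform space with countable basis; its completion is a
Polish `G`-space consisting of (a copy of) `G` and the limit set (`GpFrame`, `orbitFrame`). Three
limit points produce a loxodromic element `f` with north–south dynamics on the completion
(`exists_lox`, `exists_north_south`). Inside the closure of the orbit of a fixed point of `f`,
remove one further orbit and all translates of countably many spheres missing the orbits of the
fixed points: what remains is an invariant zero-dimensional Polish space without compact clopen subsets,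
hence a copy of the Baire space (`homeo_baire`, `exists_baire_subset`, `exists_baire_model`).
Condition (C) comes from acylindricity (`condC_core`): fix two points far apart on the way from
`ξ` to `η`. An element that moves one divergent pair towards `ξ` and another towards `η` must carry
points from a bounded region, pinned between the two pairs, to these two points, and
acylindricity allows only finitely many of those.
-/

/-- A geodesic segment from `u` to `v`: the image of an isometric embedding of
`[0, dist u v]` sending the endpoints to `u` and `v`. -/
def IsGeodesicSegment {S : Type*} [MetricSpace S] (Γ : Set S) (u v : S) : Prop :=
  ∃ γ : ℝ → S, γ 0 = u ∧ γ (dist u v) = v ∧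
    (∀ s ∈ Set.Icc (0 : ℝ) (dist u v), ∀ t ∈ Set.Icc (0 : ℝ) (dist u v),
      dist (γ s) (γ t) = |s - t|) ∧
    Γ = γ '' Set.Icc (0 : ℝ) (dist u v)

/-- A geodesic metric space: every pair of points is joined by a geodesic segment. -/
def GeodesicSpace (S : Type*) [MetricSpace S] : Prop :=
  ∀ u v : S, ∃ Γ : Set S, IsGeodesicSegment Γ u v

/-- `δ`-hyperbolicity: every geodesic triangle is `δ`-slim. -/
def DeltaHyperbolic (S : Type*) [MetricSpace S] (δ : ℝ) : Prop :=
  ∀ x y z : S, ∀ Γ₁ Γ₂ Γ₃ : Set S,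
    IsGeodesicSegment Γ₁ x y → IsGeodesicSegment Γ₂ y z → IsGeodesicSegment Γ₃ z x →
    ∀ p ∈ Γ₁, Metric.infDist p (Γ₂ ∪ Γ₃) ≤ δ

/-- A (left) action of a group `G` on a set `M`, given as a plain function. -/
def IsAction {G M : Type*} [Group G] (act : G → M → M) : Prop :=
  (∀ x : M, act 1 x = x) ∧ ∀ (g h : G) (x : M), act (g * h) x = act g (act h x)

/-- An action by homeomorphisms on a topological space. -/
def IsActionByHomeos {G M : Type*} [Group G] [TopologicalSpace M] (act : G → M → M) : Prop :=
  IsAction act ∧ ∀ g : G, Continuous (act g)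

/-- An action by isometries on a metric space. -/
def IsIsometricAction {G S : Type*} [Group G] [MetricSpace S] (act : G → S → S) : Prop :=
  IsAction act ∧ ∀ g : G, Isometry (act g)

theorem IsAction.injective {G M : Type*} [Group G] {act : G → M → M}
    (h : IsAction act) (g : G) : Function.Injective (act g) := by
  intro a b hab
  have h2 := congrArg (act g⁻¹) hab
  rw [← h.2 g⁻¹ g a, ← h.2 g⁻¹ g b, inv_mul_cancel, h.1, h.1] at h2
  exact h2

/-- The Gromov product of `x` and `y` with respect to the basepoint `e`. -/
noncomputable def gprod {S : Type*} [MetricSpace S] (e x y : S) : ℝ :=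
  (dist x e + dist y e - dist x y) / 2

/-- A sequence converges to infinity if its pairwise Gromov products tend to infinity. -/
def ConvToInfty {S : Type*} [MetricSpace S] (e : S) (s : ℕ → S) : Prop :=
  Filter.Tendsto (fun p : ℕ × ℕ => gprod e (s p.1) (s p.2)) Filter.atTop Filter.atTop

/-- The type of sequences in `S` converging to infinity. -/
def BSeq (S : Type*) [MetricSpace S] (e : S) := {s : ℕ → S // ConvToInfty e s}

/-- Two sequences converging to infinity are equivalent if their mutual Gromov
products tend to infinity. -/
def bequiv {S : Type*} [MetricSpace S] (e : S) (s t : BSeq S e) : Prop :=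
  Filter.Tendsto (fun n => gprod e (s.1 n) (t.1 n)) Filter.atTop Filter.atTop

/-- The Gromov boundary of `S` with respect to the basepoint `e`. -/
def GBoundary (S : Type*) [MetricSpace S] (e : S) := Quot (bequiv (S := S) e)

/-- A sequence in `S` tends to the boundary point `x`. -/
def TendstoBd {S : Type*} [MetricSpace S] (e : S) (s : ℕ → S) (x : GBoundary S e) : Prop :=
  ∃ h : ConvToInfty e s, Quot.mk _ (⟨s, h⟩ : BSeq S e) = x

/-- The induced map on pairs. -/
def pairMap {M : Type*} (f : M → M) (p : M × M) : M × M := (f p.1, f p.2)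

/-- Condition (C) for an action on a topological space. -/
def ConditionC {G M : Type*} [TopologicalSpace M] (act : G → M → M) : Prop :=
  ∀ u v : M × M, u.1 = u.2 → v.1 = v.2 → u ≠ v →
    ∃ U V : Set (M × M), IsOpen U ∧ IsOpen V ∧ u ∈ U ∧ v ∈ V ∧
      ∀ a b : M × M, a.1 ≠ a.2 → b.1 ≠ b.2 → a ≠ b →
        ∃ A B : Set (M × M), IsOpen A ∧ IsOpen B ∧ a ∈ A ∧ b ∈ B ∧
          {g : G | (pairMap (act g) '' A ∩ U).Nonempty ∧
            (pairMap (act g) '' B ∩ V).Nonempty}.Finite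

/-- Condition (C₁) for a pair of open sets `U, V`. -/
def CondC1 {G M : Type*} [TopologicalSpace M] (act : G → M → M) (U V : Set M) : Prop :=
  ∀ p q : M, p ≠ q →
    ∃ A B : Set M, IsOpen A ∧ IsOpen B ∧ p ∈ A ∧ q ∈ B ∧
      {g : G | (act g '' A ∩ U).Nonempty ∧ (act g '' A ∩ V).Nonempty ∧
        (act g '' B ∩ U).Nonempty ∧ (act g '' B ∩ V).Nonempty}.Finite

/-- Condition (C₂) for a pair of open sets `U, V`. -/
def CondC2 {G M : Type*} [TopologicalSpace M] (act : G → M → M) (U V : Set M) : Prop :=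
  ∀ p q r : M, p ≠ q → q ≠ r → p ≠ r →
    ∃ A B C : Set M, IsOpen A ∧ IsOpen B ∧ IsOpen C ∧ p ∈ A ∧ q ∈ B ∧ r ∈ C ∧
      {g : G | (act g '' A ∩ U).Nonempty ∧ (act g '' B ∩ V).Nonempty ∧
        (act g '' C ∩ U).Nonempty ∧ (act g '' C ∩ V).Nonempty}.Finite

/-- Condition (C₃) for a pair of open sets `U, V`. -/
def CondC3 {G M : Type*} [TopologicalSpace M] (act : G → M → M) (U V : Set M) : Prop :=
  ∀ p q r s : M, p ≠ q → p ≠ r → p ≠ s → q ≠ r → q ≠ s → r ≠ s →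
    ∃ A B C D : Set M, IsOpen A ∧ IsOpen B ∧ IsOpen C ∧ IsOpen D ∧
      p ∈ A ∧ q ∈ B ∧ r ∈ C ∧ s ∈ D ∧
      {g : G | (act g '' A ∩ U).Nonempty ∧ (act g '' B ∩ U).Nonempty ∧
        (act g '' C ∩ V).Nonempty ∧ (act g '' D ∩ V).Nonempty}.Finite

/-- Two points `x, y` satisfy (C₁): some open sets `U ∋ x`, `V ∋ y` satisfy (C₁). -/
def PairC1 {G M : Type*} [TopologicalSpace M] (act : G → M → M) (x y : M) : Prop :=
  ∃ U V : Set M, IsOpen U ∧ IsOpen V ∧ x ∈ U ∧ y ∈ V ∧ CondC1 (G := G) act U V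

/-- Two points `x, y` satisfy (C₂). -/
def PairC2 {G M : Type*} [TopologicalSpace M] (act : G → M → M) (x y : M) : Prop :=
  ∃ U V : Set M, IsOpen U ∧ IsOpen V ∧ x ∈ U ∧ y ∈ V ∧ CondC2 (G := G) act U V

/-- Two points `x, y` satisfy (C₃). -/
def PairC3 {G M : Type*} [TopologicalSpace M] (act : G → M → M) (x y : M) : Prop :=
  ∃ U V : Set M, IsOpen U ∧ IsOpen V ∧ x ∈ U ∧ y ∈ V ∧ CondC3 (G := G) act U V

/-- `g` has north–south dynamics on `M` with fixed points `x ≠ y`. -/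
def NorthSouthAt {G M : Type*} [Group G] [TopologicalSpace M] (act : G → M → M)
    (g : G) (x y : M) : Prop :=
  x ≠ y ∧ (∀ z : M, act g z = z ↔ z = x ∨ z = y) ∧
  ∀ U V : Set M, IsOpen U → IsOpen V → x ∈ U → y ∈ V →
    ∃ N : ℕ, ∀ n : ℕ, N < n → act (g ^ n) '' Uᶜ ⊆ V

/-- `g` has north–south dynamics on `M`. -/
def NorthSouth {G M : Type*} [Group G] [TopologicalSpace M] (act : G → M → M) (g : G) : Prop :=
  ∃ x y : M, NorthSouthAt act g x y

/-- A completely Hausdorff space: distinct points are separated by open sets with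
disjoint closures. -/
def CompletelyHausdorff (M : Type*) [TopologicalSpace M] : Prop :=
  ∀ u v : M, u ≠ v → ∃ U V : Set M, IsOpen U ∧ IsOpen V ∧ u ∈ U ∧ v ∈ V ∧
    closure U ∩ closure V = ∅

/-- An acylindrical action on a metric space. -/
def AcylindricalAction {G S : Type*} [Group G] [MetricSpace S] (act : G → S → S) : Prop :=
  ∀ ε : ℝ, 0 < ε → ∃ (R : ℝ) (N : ℕ), 0 < R ∧ 0 < N ∧
    ∀ x y : S, R ≤ dist x y →
      {g : G | dist x (act g x) ≤ ε ∧ dist y (act g y) ≤ ε}.Finite ∧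
      {g : G | dist x (act g x) ≤ ε ∧ dist y (act g y) ≤ ε}.ncard ≤ N

/-- The limit set of the action of `G` on the boundary of `S`. -/
def limitSet {G S : Type*} [Group G] [MetricSpace S] (act : G → S → S) (e : S) :
    Set (GBoundary S e) :=
  {x | ∃ (s : S) (gs : ℕ → G), TendstoBd e (fun n => act (gs n) s) x}

/-- The action is non-elementary: the limit set has at least 3 points. -/
def NonelemAction {G S : Type*} [Group G] [MetricSpace S] (act : G → S → S) (e : S) : Prop :=
  ∃ x y z : GBoundary S e, x ∈ limitSet act e ∧ y ∈ limitSet act e ∧ z ∈ limitSet act e ∧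
    x ≠ y ∧ y ≠ z ∧ x ≠ z

/-- A group is acylindrically hyperbolic if it admits a non-elementary acylindrical
isometric action on a geodesic Gromov hyperbolic space. -/
def AcylindricallyHyperbolic (G : Type*) [Group G] : Prop :=
  ∃ (S : Type) (_i : MetricSpace S) (act : G → S → S) (δ : ℝ),
    0 ≤ δ ∧ GeodesicSpace S ∧ DeltaHyperbolic S δ ∧ IsIsometricAction act ∧
    AcylindricalAction act ∧ ∃ e : S, NonelemAction act e

/-- A group is virtually cyclic if it has a cyclic subgroup of finite index. -/
def VirtuallyCyclic (G : Type*) [Group G] : Prop :=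
  ∃ H : Subgroup G, IsCyclic H ∧ H.index ≠ 0

/-! ### Four-point hyperbolicity -/

namespace AcylDyn

/-- Gromov's four-point condition, in the form that is symmetric in the three pairings. -/
def FourPt (S : Type*) [MetricSpace S] (δ : ℝ) : Prop :=
  ∀ x y z w : S, dist x y + dist z w ≤ dist x z + dist y w + 2 * δ ∨
    dist x y + dist z w ≤ dist x w + dist y z + 2 * δ

section
variable {S : Type*} [MetricSpace S]

theorem gprod_comm (e x y : S) : gprod e x y = gprod e y x := by
  unfold gprod; rw [dist_comm x y]; ring

theorem gprod_self (e x : S) : gprod e x x = dist x e := by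
  unfold gprod; rw [dist_self]; ring

theorem gprod_nonneg (e x y : S) : 0 ≤ gprod e x y := by
  unfold gprod
  have := dist_triangle x e y
  rw [dist_comm e y] at this; linarith

theorem gprod_le_left (e x y : S) : gprod e x y ≤ dist x e := by
  unfold gprod
  have := dist_triangle y x e
  rw [dist_comm y x] at this; linarith

theorem gprod_le_right (e x y : S) : gprod e x y ≤ dist y e := by
  rw [gprod_comm]; exact gprod_le_left e y x

/-- The Gromov product is `1`-Lipschitz in its first variable. -/
theorem gprod_lip (e x x' y : S) : gprod e x y ≤ gprod e x' y + dist x x' := by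
  unfold gprod
  have h1 := dist_triangle x x' e
  have h2 := dist_triangle x' x y
  rw [dist_comm x' x] at h2
  linarith

theorem gprod_lip_base (e e' x y : S) : gprod e x y ≤ gprod e' x y + dist e e' := by
  unfold gprod
  have h1 := dist_triangle x e' e
  have h2 := dist_triangle y e' e
  rw [dist_comm e' e] at h1 h2
  linarith

theorem FourPt.nonneg {δ : ℝ} (h : FourPt S δ) (e : S) : 0 ≤ δ := by
  have := h e e e e
  simp at this; linarith

theorem FourPt.gp {δ : ℝ} (h : FourPt S δ) (e x y z : S) :
    gprod e x y ≤ gprod e x z + δ ∨ gprod e y z ≤ gprod e x z + δ := by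
  have h1 := h x z y e
  unfold gprod
  rw [dist_comm z y] at h1
  rcases h1 with h1 | h1
  · left; linarith
  · right; linarith

theorem FourPt.gp_min {δ : ℝ} (h : FourPt S δ) (e x y z : S) :
    min (gprod e x y) (gprod e y z) ≤ gprod e x z + δ := by
  rcases h.gp e x y z with h1 | h1
  · exact (min_le_left _ _).trans h1
  · exact (min_le_right _ _).trans h1

theorem seg_dist {Γ : Set S} {u v p : S} (h : IsGeodesicSegment Γ u v) (hp : p ∈ Γ) :
    dist u p + dist p v = dist u v := by
  obtain ⟨γ, h0, h1, hi, rfl⟩ := h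
  obtain ⟨s, hs, rfl⟩ := hp
  have hd : (0:ℝ) ≤ dist u v := dist_nonneg
  have e1 := hi 0 ⟨le_refl _, hd⟩ s hs
  have e2 := hi s hs (dist u v) ⟨hd, le_refl _⟩
  rw [h0] at e1; rw [h1] at e2
  rw [e1, e2, abs_of_nonpos (by linarith [hs.1]), abs_of_nonpos (by linarith [hs.2])]; ring

theorem seg_exists {Γ : Set S} {u v : S} (h : IsGeodesicSegment Γ u v) {r : ℝ} (hr : 0 ≤ r)
    (hr' : r ≤ dist u v) : ∃ p ∈ Γ, dist u p = r ∧ dist p v = dist u v - r := by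
  obtain ⟨γ, h0, h1, hi, rfl⟩ := h
  have hd : (0:ℝ) ≤ dist u v := dist_nonneg
  refine ⟨γ r, ⟨r, ⟨hr, hr'⟩, rfl⟩, ?_, ?_⟩
  · have e1 := hi 0 ⟨le_refl _, hd⟩ r ⟨hr, hr'⟩
    rw [h0] at e1; rw [e1, abs_of_nonpos (by linarith)]; ring
  · have e1 := hi r ⟨hr, hr'⟩ (dist u v) ⟨hd, le_refl _⟩
    rw [h1] at e1; rw [e1, abs_of_nonpos (by linarith)]; ring

theorem seg_left {Γ : Set S} {u v : S} (h : IsGeodesicSegment Γ u v) : u ∈ Γ := by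
  obtain ⟨γ, h0, h1, hi, rfl⟩ := h
  exact ⟨0, ⟨le_refl _, dist_nonneg⟩, h0⟩

theorem seg_right {Γ : Set S} {u v : S} (h : IsGeodesicSegment Γ u v) : v ∈ Γ := by
  obtain ⟨γ, h0, h1, hi, rfl⟩ := h
  exact ⟨dist u v, ⟨dist_nonneg, le_refl _⟩, h1⟩

theorem seg_symm {Γ : Set S} {u v : S} (h : IsGeodesicSegment Γ u v) :
    IsGeodesicSegment Γ v u := by
  obtain ⟨γ, h0, h1, hi, rfl⟩ := h
  have hd : (0:ℝ) ≤ dist u v := dist_nonneg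
  refine ⟨fun t => γ (dist u v - t), by simpa using h1, by simp [dist_comm v u, h0], ?_, ?_⟩
  · intro s hs t ht
    rw [dist_comm v u] at hs ht
    rw [hi _ ⟨by linarith [hs.2], by linarith [hs.1]⟩ _ ⟨by linarith [ht.2], by linarith [ht.1]⟩,
      abs_sub_comm]
    congr 1; ring
  · ext p; constructor
    · rintro ⟨s, hs, rfl⟩
      refine ⟨dist u v - s, ?_, ?_⟩
      · rw [dist_comm v u]; exact ⟨by linarith [hs.2], by linarith [hs.1]⟩
      · simp
    · rintro ⟨s, hs, rfl⟩
      rw [dist_comm v u] at hs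
      exact ⟨dist u v - s, ⟨by linarith [hs.2], by linarith [hs.1]⟩, rfl⟩

theorem gprod_le_dist_seg {Γ : Set S} {u v p w : S} (h : IsGeodesicSegment Γ u v) (hp : p ∈ Γ) :
    gprod w u v ≤ dist p w := by
  have := seg_dist h hp
  have h1 := dist_triangle u p w
  have h2 := dist_triangle v p w
  rw [dist_comm v p] at h2
  unfold gprod; linarith

/-- On each side of a slim triangle some point is close to both other sides. -/
theorem exists_center {δ : ℝ} (hh : DeltaHyperbolic S δ) {x y z : S} {Γ₁ Γ₂ Γ₃ : Set S}
    (h₁ : IsGeodesicSegment Γ₁ x y) (h₂ : IsGeodesicSegment Γ₂ y z)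
    (h₃ : IsGeodesicSegment Γ₃ z x) (hδ : 0 ≤ δ) :
    ∃ p ∈ Γ₁, Metric.infDist p Γ₂ ≤ δ ∧ Metric.infDist p Γ₃ ≤ δ := by
  obtain ⟨γ, h0, h1, hi, hΓ⟩ := id h₁
  have hc : ContinuousOn γ (Set.Icc 0 (dist x y)) := by
    have : LipschitzOnWith 1 γ (Set.Icc 0 (dist x y)) := by
      apply LipschitzOnWith.of_dist_le_mul
      intro s hs t ht
      rw [hi s hs t ht, Real.dist_eq]; simp
    exact this.continuousOn
  have hcl : ∀ Γ : Set S, IsClosed {p : S | Metric.infDist p Γ ≤ δ} := fun Γ =>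
    isClosed_le (Metric.continuous_infDist_pt Γ) continuous_const
  have key := (isPreconnected_closed_iff.1 (isPreconnected_Icc (a := (0:ℝ)) (b := dist x y)))
    _ _ (hc.preimage_isClosed_of_isClosed isClosed_Icc (hcl Γ₂))
    (hc.preimage_isClosed_of_isClosed isClosed_Icc (hcl Γ₃)) ?_ ?_ ?_
  · obtain ⟨s, hs, ha, hb⟩ := key
    exact ⟨γ s, by rw [hΓ]; exact ⟨s, hs, rfl⟩, ha.2, hb.2⟩
  · intro s hs
    have := hh x y z Γ₁ Γ₂ Γ₃ h₁ h₂ h₃ (γ s) (by rw [hΓ]; exact ⟨s, hs, rfl⟩)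
    by_contra hcon
    simp only [Set.mem_union, Set.mem_inter_iff, hs, true_and, not_or, Set.mem_preimage,
      Set.mem_ofPred_eq, not_le] at hcon
    set m := min (Metric.infDist (γ s) Γ₂) (Metric.infDist (γ s) Γ₃)
    have hm : δ < m := lt_min hcon.1 hcon.2
    obtain ⟨q, hq, hqd⟩ := (Metric.infDist_lt_iff ⟨y, Or.inl (seg_left h₂)⟩).1 (this.trans_lt hm)
    rcases hq with hq | hq
    · exact absurd (Metric.infDist_le_dist_of_mem (x := γ s) hq)
        (not_le.2 (hqd.trans_le (min_le_left _ _)))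
    · exact absurd (Metric.infDist_le_dist_of_mem (x := γ s) hq)
        (not_le.2 (hqd.trans_le (min_le_right _ _)))
  · refine ⟨dist x y, ⟨dist_nonneg, le_refl _⟩, ⟨dist_nonneg, le_refl _⟩, ?_⟩
    simp only [Set.mem_preimage, Set.mem_ofPred_eq, h1]
    rw [Metric.infDist_zero_of_mem (seg_left h₂)]; exact hδ
  · refine ⟨0, ⟨le_refl _, dist_nonneg⟩, ⟨le_refl _, dist_nonneg⟩, ?_⟩
    simp only [Set.mem_preimage, Set.mem_ofPred_eq, h0]
    rw [Metric.infDist_zero_of_mem (seg_right h₃)]; exact hδ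

theorem exists_near {δ : ℝ} {p : S} {Γ : Set S} (hne : Γ.Nonempty)
    (h : Metric.infDist p Γ ≤ δ) : ∃ q ∈ Γ, dist p q ≤ δ + 1 := by
  obtain ⟨q, hq, hd⟩ := (Metric.infDist_lt_iff hne).1 (lt_of_le_of_lt h (lt_add_one δ))
  exact ⟨q, hq, hd.le⟩

theorem fourPt_of_slim {δ : ℝ} (hδ : 0 ≤ δ) (hg : GeodesicSpace S) (hh : DeltaHyperbolic S δ) :
    FourPt S (3 * (δ + 1)) := by
  -- the four-point condition in Gromov product form at the base point `w`
  have main : ∀ w x y z : S, gprod w x y ≤ gprod w x z + 3 * (δ + 1) ∨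
      gprod w y z ≤ gprod w x z + 3 * (δ + 1) := by
    intro w x y z
    obtain ⟨Γ, hΓ⟩ := hg x z
    obtain ⟨Γ₂, hΓ₂⟩ := hg z w
    obtain ⟨Γ₃, hΓ₃⟩ := hg w x
    obtain ⟨p, hp, hp2, hp3⟩ := exists_center hh hΓ hΓ₂ hΓ₃ hδ
    obtain ⟨q, hq, hq'⟩ := exists_near ⟨_, seg_left hΓ₂⟩ hp2
    obtain ⟨r, hr, hr'⟩ := exists_near ⟨_, seg_left hΓ₃⟩ hp3
    have e0 := seg_dist hΓ hp
    have e1 := seg_dist hΓ₂ hq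
    have e2 := seg_dist hΓ₃ hr
    have hpw : dist p w ≤ gprod w x z + 2 * (δ + 1) := by
      unfold gprod
      have t1 := dist_triangle p q w
      have t2 := dist_triangle p q z
      have t3 := dist_triangle p r w
      have t4 := dist_triangle p r x
      rw [dist_comm z q] at e1
      rw [dist_comm w r, dist_comm w x] at e2
      rw [dist_comm x p] at e0
      linarith
    obtain ⟨A, hA⟩ := hg x y
    obtain ⟨B, hB⟩ := hg y z
    have hs := hh x z y Γ B A hΓ (seg_symm hB) (seg_symm hA) p hp
    obtain ⟨s, hs1, hs2⟩ := exists_near ⟨y, Set.mem_union_left _ (seg_left hB)⟩ hs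
    have t5 := dist_triangle s p w
    rw [dist_comm s p] at t5
    rcases hs1 with hs1 | hs1
    · right
      have := gprod_le_dist_seg (w := w) hB hs1
      linarith
    · left
      have := gprod_le_dist_seg (w := w) hA hs1
      linarith
  intro x y z w
  have := main w x z y
  unfold gprod at this
  rw [dist_comm z y] at this
  rcases this with h | h
  · left; linarith
  · right; linarith

theorem slim_of_fourPt {δ : ℝ} (hf : FourPt S δ) : DeltaHyperbolic S (4 * δ) := by
  intro x y z Γ₁ Γ₂ Γ₃ h₁ h₂ h₃ p hp
  have hδ := hf.nonneg x
  have e0 := seg_dist h₁ hp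
  -- a point `p` almost on a geodesic from `a` to `z` is close to any side from `a` to `z`
  have aux : ∀ a : S, ∀ Γ : Set S, IsGeodesicSegment Γ a z →
      dist a p + dist p z ≤ dist a z + 2 * δ → ∃ q ∈ Γ, dist p q ≤ 4 * δ := by
    intro a Γ hΓ h
    rcases le_total (dist a p) (dist a z) with hl | hl
    · obtain ⟨q, hq, hq1, hq2⟩ := seg_exists hΓ dist_nonneg hl
      refine ⟨q, hq, ?_⟩
      have := hf p q a z
      rw [dist_comm p a, dist_comm q a] at this
      rcases this with h' | h' <;> linarith
    · exact ⟨z, seg_right hΓ, by linarith⟩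
  have hcase : ∃ q ∈ Γ₂ ∪ Γ₃, dist p q ≤ 4 * δ := by
    have := hf x y p z
    rw [dist_comm y p] at this
    rcases this with h | h
    · obtain ⟨q, hq, hd⟩ := aux y Γ₂ h₂ (by rw [dist_comm y p]; linarith)
      exact ⟨q, Or.inl hq, hd⟩
    · obtain ⟨q, hq, hd⟩ := aux x Γ₃ (seg_symm h₃) (by linarith)
      exact ⟨q, Or.inr hq, hd⟩
  obtain ⟨q, hq, hd⟩ := hcase
  exact (Metric.infDist_le_dist_of_mem hq).trans hd

theorem convToInfty_iff (e : S) (s : ℕ → S) :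
    ConvToInfty e s ↔ ∀ C : ℝ, ∃ N, ∀ m n, N ≤ m → N ≤ n → C ≤ gprod e (s m) (s n) := by
  unfold ConvToInfty
  rw [Filter.tendsto_atTop]
  constructor
  · intro h C
    obtain ⟨⟨a, b⟩, hab⟩ := Filter.eventually_atTop.1 (h C)
    exact ⟨max a b, fun m n hm hn => hab (m, n)
      ⟨(le_max_left _ _).trans hm, (le_max_right _ _).trans hn⟩⟩
  · intro h C
    obtain ⟨N, hN⟩ := h C
    exact Filter.eventually_atTop.2 ⟨(N, N), fun p hp => hN p.1 p.2 hp.1 hp.2⟩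

theorem bequiv_iff {e : S} (s t : BSeq S e) :
    bequiv e s t ↔ ∀ C : ℝ, ∃ N, ∀ n, N ≤ n → C ≤ gprod e (s.1 n) (t.1 n) := by
  unfold bequiv
  rw [Filter.tendsto_atTop]
  exact forall_congr' fun C => Filter.eventually_atTop

theorem bequiv_equivalence {δ : ℝ} (hf : FourPt S δ) (e : S) :
    Equivalence (bequiv (S := S) e) := by
  refine ⟨?_, ?_, ?_⟩
  · intro s
    rw [bequiv_iff]
    intro C
    obtain ⟨N, hN⟩ := (convToInfty_iff e s.1).1 s.2 C
    exact ⟨N, fun n hn => hN n n hn hn⟩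
  · intro s t h
    rw [bequiv_iff] at h ⊢
    intro C
    obtain ⟨N, hN⟩ := h C
    exact ⟨N, fun n hn => by rw [gprod_comm]; exact hN n hn⟩
  · intro s t u h1 h2
    rw [bequiv_iff] at h1 h2 ⊢
    intro C
    obtain ⟨N, hN⟩ := h1 (C + δ)
    obtain ⟨N', hN'⟩ := h2 (C + δ)
    refine ⟨max N N', fun n hn => ?_⟩
    have a1 := hN n ((le_max_left _ _).trans hn)
    have a2 := hN' n ((le_max_right _ _).trans hn)
    rcases hf.gp e (s.1 n) (t.1 n) (u.1 n) with h | h <;> linarith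

theorem mk_eq_iff {δ : ℝ} (hf : FourPt S δ) {e : S} (s t : BSeq S e) :
    (Quot.mk (bequiv e) s : GBoundary S e) = Quot.mk (bequiv e) t ↔ bequiv e s t := by
  constructor
  · intro h
    exact (bequiv_equivalence hf e).eqvGen_iff.1 (Quot.eqvGen_exact h)
  · exact fun h => Quot.sound h

end
end AcylDyn

/-! ### The injective hull of a roughly geodesic hyperbolic space -/

namespace AcylDyn

/-- Rough geodesicity: every intermediate length is realised up to the error `C`. -/
def RoughGeod (X : Type*) [MetricSpace X] (C : ℝ) : Prop :=
  ∀ x y : X, ∀ r : ℝ, 0 ≤ r → r ≤ dist x y →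
    ∃ w, dist x w ≤ r + C ∧ dist w y ≤ dist x y - r + C

section Hull
variable {X : Type*} [MetricSpace X]

/-- Functions that dominate the metric: `d x y ≤ f x + f y`. -/
def Dom (f : X → ℝ) : Prop := ∀ x y, dist x y ≤ f x + f y

/-- The conjugate `f*` of a dominating function. -/
noncomputable def conj (f : X → ℝ) (x : X) : ℝ := ⨆ y, (dist x y - f y)

/-- Averaging a dominating function with its conjugate. -/
noncomputable def avg (f : X → ℝ) (x : X) : ℝ := (f x + conj f x) / 2

theorem Dom.nonneg {f : X → ℝ} (h : Dom f) (x : X) : 0 ≤ f x := by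
  have := h x x; rw [dist_self] at this; linarith

theorem Dom.bdd {f : X → ℝ} (h : Dom f) (x : X) :
    BddAbove (Set.range fun y => dist x y - f y) :=
  ⟨f x, by rintro _ ⟨y, rfl⟩; have := h x y; simp only; linarith⟩

theorem Dom.le_conj {f : X → ℝ} (h : Dom f) (x y : X) : dist x y - f y ≤ conj f x :=
  le_ciSup (h.bdd x) y

theorem conj_le {f : X → ℝ} {x : X} {c : ℝ} (h : ∀ y, dist x y - f y ≤ c) : conj f x ≤ c :=
  haveI : Nonempty X := ⟨x⟩
  ciSup_le h

theorem Dom.conj_le_self {f : X → ℝ} (h : Dom f) (x : X) : conj f x ≤ f x :=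
  conj_le fun y => by have := h x y; linarith

theorem Dom.avg_le {f : X → ℝ} (h : Dom f) (x : X) : avg f x ≤ f x := by
  have := h.conj_le_self x; unfold avg; linarith

theorem Dom.avg_dom {f : X → ℝ} (h : Dom f) : Dom (avg f) := by
  intro x y
  have h1 := h.le_conj x y
  have h2 := h.le_conj y x
  rw [dist_comm y x] at h2
  unfold avg
  linarith

theorem conj_close {f g : X → ℝ} (hf : Dom f) {c : ℝ} (h : ∀ x, |f x - g x| ≤ c)
    (x : X) : conj g x ≤ conj f x + c :=
  conj_le fun y => by
    have h1 := hf.le_conj x y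
    have h2 := (abs_le.1 (h y)).2
    linarith

theorem avg_close {f g : X → ℝ} (hf : Dom f) (hg : Dom g) {c : ℝ}
    (h : ∀ x, |f x - g x| ≤ c) (x : X) : |avg f x - avg g x| ≤ c := by
  have h1 := conj_close hf h x
  have h2 := conj_close hg (fun x => by rw [abs_sub_comm]; exact h x) x
  have h3 := abs_le.1 (h x)
  unfold avg
  rw [abs_le]; constructor <;> linarith

theorem Dom.iter {f : X → ℝ} (h : Dom f) (n : ℕ) : Dom (avg^[n] f) := by
  induction n with
  | zero => exact h
  | succ n ih => rw [Function.iterate_succ_apply']; exact ih.avg_dom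

theorem iter_close {f g : X → ℝ} (hf : Dom f) (hg : Dom g) {c : ℝ}
    (h : ∀ x, |f x - g x| ≤ c) (n : ℕ) (x : X) : |avg^[n] f x - avg^[n] g x| ≤ c := by
  induction n generalizing x with
  | zero => exact h x
  | succ n ih =>
    rw [Function.iterate_succ_apply', Function.iterate_succ_apply']
    exact avg_close (hf.iter n) (hg.iter n) ih x

/-- The limit of iterated averaging; a `1`-Lipschitz retraction of the dominating functions onto
the extremal ones. -/
noncomputable def retr (f : X → ℝ) (x : X) : ℝ := ⨅ n : ℕ, avg^[n] f x

theorem Dom.tendsto_retr {f : X → ℝ} (h : Dom f) (x : X) :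
    Filter.Tendsto (fun n : ℕ => avg^[n] f x) Filter.atTop (nhds (retr f x)) := by
  apply tendsto_atTop_ciInf
  · apply antitone_nat_of_succ_le
    intro n
    rw [Function.iterate_succ_apply']
    exact (h.iter n).avg_le x
  · exact ⟨0, by rintro _ ⟨n, rfl⟩; exact (h.iter n).nonneg x⟩

theorem Dom.retr_le_iter {f : X → ℝ} (h : Dom f) (n : ℕ) (x : X) : retr f x ≤ avg^[n] f x :=
  ciInf_le ⟨0, by rintro _ ⟨n, rfl⟩; exact (h.iter n).nonneg x⟩ n

theorem Dom.retr_dom {f : X → ℝ} (h : Dom f) : Dom (retr f) := fun x y =>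
  ge_of_tendsto' ((h.tendsto_retr x).add (h.tendsto_retr y)) fun n => h.iter n x y

theorem Dom.conj_retr {f : X → ℝ} (h : Dom f) (x : X) : conj (retr f) x = retr f x := by
  apply le_antisymm (h.retr_dom.conj_le_self x)
  have h1 := h.tendsto_retr x
  have h2 : Filter.Tendsto (fun n : ℕ => 2 * avg^[n+1] f x - avg^[n] f x) Filter.atTop
      (nhds (2 * retr f x - retr f x)) :=
    (((Filter.tendsto_add_atTop_iff_nat 1).2 h1).const_mul 2).sub h1
  have h3 : 2 * retr f x - retr f x = retr f x := by ring
  rw [h3] at h2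
  refine le_of_tendsto' h2 fun n => ?_
  rw [Function.iterate_succ_apply']
  have : 2 * avg (avg^[n] f) x - avg^[n] f x = conj (avg^[n] f) x := by unfold avg; ring
  rw [this]
  apply conj_le
  intro y
  have a1 := h.retr_dom.le_conj x y
  have a2 := h.retr_le_iter n y
  linarith

theorem retr_close {f g : X → ℝ} (hf : Dom f) (hg : Dom g) {c : ℝ}
    (h : ∀ x, |f x - g x| ≤ c) (x : X) : |retr f x - retr g x| ≤ c :=
  le_of_tendsto' ((hf.tendsto_retr x).sub (hg.tendsto_retr x)).abs
    fun n => iter_close hf hg h n x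

theorem retr_fixed {f : X → ℝ} (h : ∀ x, conj f x = f x) : retr f = f := by
  have h1 : avg f = f := by funext x; unfold avg; rw [h x]; ring
  funext x
  unfold retr
  have : ∀ n : ℕ, avg^[n] f x = f x := by
    intro n; rw [Function.iterate_fixed h1]
  simp [this]

variable (X) in
/-- The injective hull: extremal dominating functions. -/
def Hull := {f : X → ℝ // Dom f ∧ ∀ x, conj f x = f x}

theorem Hull.lip (f : Hull X) (x y : X) : f.1 x ≤ f.1 y + dist x y := by
  rw [← f.2.2 x]
  apply conj_le
  intro z
  have h1 := f.2.1 y z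
  have h2 := dist_triangle x y z
  linarith

theorem Hull.bdd (f g : Hull X) : BddAbove (Set.range fun x => |f.1 x - g.1 x|) := by
  rcases isEmpty_or_nonempty X with h | ⟨⟨x0⟩⟩
  · exact ⟨0, by rintro _ ⟨x, rfl⟩; exact h.elim x⟩
  refine ⟨f.1 x0 + g.1 x0, ?_⟩
  rintro _ ⟨x, rfl⟩
  have h1 := f.lip x x0
  have h2 := g.lip x x0
  have h3 := f.2.1 x x0
  have h4 := g.2.1 x x0
  have h5 := f.2.1.nonneg x0
  have h6 := g.2.1.nonneg x0
  simp only
  rw [abs_le]; constructor <;> linarith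

/-- An extremal function almost attains its defining supremum. -/
theorem Hull.extremal (f : Hull X) (x : X) {ε : ℝ} (hε : 0 < ε) :
    ∃ y, f.1 x + f.1 y ≤ dist x y + ε := by
  by_contra h
  push Not at h
  have : conj f.1 x ≤ f.1 x - ε := conj_le fun y => by linarith [h y]
  rw [f.2.2 x] at this; linarith

noncomputable instance : Dist (Hull X) := ⟨fun f g => ⨆ x, |f.1 x - g.1 x|⟩

theorem Hull.le_dist (f g : Hull X) (x : X) : |f.1 x - g.1 x| ≤ dist f g :=
  le_ciSup (Hull.bdd f g) x

theorem Hull.dist_nonneg' (f g : Hull X) : 0 ≤ dist f g := Real.iSup_nonneg fun _ => abs_nonneg _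

theorem Hull.dist_le {f g : Hull X} {c : ℝ} (hc : 0 ≤ c) (h : ∀ x, |f.1 x - g.1 x| ≤ c) :
    dist f g ≤ c := Real.iSup_le h hc

noncomputable instance : MetricSpace (Hull X) where
  dist_self f := le_antisymm (Hull.dist_le le_rfl fun x => by simp) (Hull.dist_nonneg' f f)
  dist_comm f g := by
    change (⨆ x, |f.1 x - g.1 x|) = ⨆ x, |g.1 x - f.1 x|
    simp only [abs_sub_comm]
  dist_triangle f g h := Hull.dist_le (add_nonneg (Hull.dist_nonneg' f g) (Hull.dist_nonneg' g h))
    fun x => (abs_sub_le _ (g.1 x) _).trans (add_le_add (Hull.le_dist f g x) (Hull.le_dist g h x))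
  eq_of_dist_eq_zero {f g} h := by
    apply Subtype.ext; funext x
    have := Hull.le_dist f g x
    rw [h] at this
    exact sub_eq_zero.1 (abs_eq_zero.1 (le_antisymm this (abs_nonneg _)))

/-- The retraction as a map into the hull. -/
noncomputable def toHull (f : X → ℝ) (h : Dom f) : Hull X := ⟨retr f, h.retr_dom, h.conj_retr⟩

/-- The isometric embedding `x ↦ d(·, x)` into the hull. -/
noncomputable def emb (x : X) : Hull X :=
  ⟨fun y => dist y x, fun y z => by simp only; rw [dist_comm z x]; exact dist_triangle y x z,
  fun y => by
    apply le_antisymm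
    · exact conj_le fun z => by linarith [dist_triangle y x z, dist_comm z x]
    · have : Dom fun y => dist y x := fun y z => by
        simp only; rw [dist_comm z x]; exact dist_triangle y x z
      simpa using this.le_conj y x⟩

theorem emb_dist (x y : X) : dist (emb x) (emb y) = dist x y := by
  apply le_antisymm
  · apply Hull.dist_le dist_nonneg
    intro z
    rw [dist_comm x y]
    have h1 := dist_triangle z y x
    have h2 := dist_triangle z x y
    rw [dist_comm x y] at h2
    change |dist z x - dist z y| ≤ _
    rw [abs_le]; constructor <;> linarith
  · have := Hull.le_dist (emb x) (emb y) y
    change |dist y x - dist y y| ≤ _ at this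
    simpa [dist_comm] using this

theorem emb_dist_hull (f : Hull X) (w : X) : dist f (emb w) ≤ f.1 w := by
  apply Hull.dist_le (f.2.1.nonneg w)
  intro z
  change |f.1 z - dist z w| ≤ _
  have h1 := f.lip z w
  have h2 := f.2.1 z w
  rw [abs_le]; constructor <;> linarith

/-- Affine interpolation followed by the retraction gives geodesics in the hull. -/
theorem hull_geodesic : GeodesicSpace (Hull X) := by
  intro f g
  by_cases hfg : f = g
  · subst hfg
    refine ⟨_, fun _ => f, rfl, rfl, ?_, rfl⟩
    intro s hs t ht
    rw [dist_self] at hs ht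
    have h1 := le_antisymm hs.2 hs.1
    have h2 := le_antisymm ht.2 ht.1
    simp [h1, h2]
  have hD : 0 < dist f g := dist_pos.2 hfg
  set D := dist f g with hDdef
  -- clamped affine interpolation, so that it is dominating for every parameter
  let c : ℝ → ℝ := fun t => max 0 (min 1 (t / D))
  have c0 : ∀ t, 0 ≤ c t := fun t => le_max_left _ _
  have c1 : ∀ t, c t ≤ 1 := fun t => max_le zero_le_one (min_le_left _ _)
  have cc : ∀ t ∈ Set.Icc 0 D, c t = t / D := by
    intro t ht
    have a1 : 0 ≤ t / D := div_nonneg ht.1 hD.le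
    have a2 : t / D ≤ 1 := (div_le_one hD).2 ht.2
    simp only [c]; rw [min_eq_right a2, max_eq_right a1]
  let F : ℝ → X → ℝ := fun t x => (1 - c t) * f.1 x + c t * g.1 x
  have hF : ∀ t, Dom (F t) := by
    intro t x y
    have h1 := mul_le_mul_of_nonneg_left (f.2.1 x y) (sub_nonneg.2 (c1 t))
    have h2 := mul_le_mul_of_nonneg_left (g.2.1 x y) (c0 t)
    simp only [F]; linarith
  let γ : ℝ → Hull X := fun t => toHull (F t) (hF t)
  have h0 : γ 0 = f := by
    apply Subtype.ext
    have : F 0 = f.1 := by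
      funext x; simp only [F]; rw [cc 0 ⟨le_rfl, hD.le⟩]; simp
    change retr (F 0) = f.1
    rw [this]; exact retr_fixed f.2.2
  have h1 : γ D = g := by
    apply Subtype.ext
    have : F D = g.1 := by
      funext x; simp only [F]; rw [cc D ⟨hD.le, le_rfl⟩, div_self hD.ne']; simp
    change retr (F D) = g.1
    rw [this]; exact retr_fixed g.2.2
  have hlip : ∀ s ∈ Set.Icc 0 D, ∀ t ∈ Set.Icc 0 D, dist (γ s) (γ t) ≤ |s - t| := by
    intro s hs t ht
    apply Hull.dist_le (abs_nonneg _)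
    refine retr_close (hF s) (hF t) ?_
    intro x
    have : F s x - F t x = (t - s) / D * (f.1 x - g.1 x) := by
      simp only [F]; rw [cc s hs, cc t ht]; field_simp; ring
    rw [this, abs_mul, abs_div, abs_of_pos hD, abs_sub_comm t s]
    calc |s - t| / D * |f.1 x - g.1 x| ≤ |s - t| / D * D :=
          mul_le_mul_of_nonneg_left (Hull.le_dist f g x) (div_nonneg (abs_nonneg _) hD.le)
      _ = |s - t| := by field_simp
  refine ⟨_, γ, h0, h1, ?_, rfl⟩
  have hord : ∀ s ∈ Set.Icc 0 D, ∀ t ∈ Set.Icc 0 D, s ≤ t → dist (γ s) (γ t) = |s - t| := by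
    intro s hs t ht hst
    apply le_antisymm (hlip s hs t ht)
    have a1 := hlip 0 ⟨le_rfl, hD.le⟩ s hs
    have a2 := hlip t ht D ⟨hD.le, le_rfl⟩
    rw [h0, abs_of_nonpos (by linarith [hs.1])] at a1
    rw [h1, abs_of_nonpos (by linarith [ht.2])] at a2
    rw [abs_of_nonpos (by linarith)]
    have t1 := dist_triangle f (γ s) g
    have t2 := dist_triangle (γ s) (γ t) g
    linarith
  intro s hs t ht
  rcases le_total s t with h | h
  · exact hord s hs t ht h
  · rw [dist_comm, abs_sub_comm]; exact hord t ht s hs h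

/-- A roughly geodesic hyperbolic space is coarsely dense in its hull. -/
theorem hull_dense [Nonempty X] {δ C : ℝ} (hf : FourPt X δ) (hr : RoughGeod X C)
    (f : Hull X) :
    ∃ w : X, dist f (emb w) ≤ 2 + C + 2 * δ := by
  obtain ⟨x0⟩ := ‹Nonempty X›
  obtain ⟨y, hy⟩ := f.extremal x0 one_pos
  have n0 := f.2.1.nonneg x0
  have ny := f.2.1.nonneg y
  obtain ⟨w, hw1, hw2⟩ := hr x0 y (min (f.1 x0) (dist x0 y)) (le_min n0 dist_nonneg)
    (min_le_right _ _)
  have b1 : dist x0 w ≤ f.1 x0 + C := hw1.trans (by linarith [min_le_left (f.1 x0) (dist x0 y)])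
  have b2 : dist w y ≤ f.1 y + C := by
    refine hw2.trans ?_
    have := f.2.1 x0 y
    rcases min_choice (f.1 x0) (dist x0 y) with h | h <;> rw [h] <;> linarith
  obtain ⟨v, hv⟩ := f.extremal w one_pos
  refine ⟨w, (emb_dist_hull f w).trans ?_⟩
  have c1 := f.2.1 y v
  have c2 := f.2.1 x0 v
  rw [dist_comm w y] at b2
  have := hf x0 y w v
  rcases this with h | h <;> linarith

theorem hull_fourPt [Nonempty X] {δ C : ℝ} (hf : FourPt X δ) (hr : RoughGeod X C) :
    FourPt (Hull X) (δ + 4 * (2 + C + 2 * δ)) := by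
  have pert : ∀ f g : Hull X, ∀ v w : X, dist f (emb v) ≤ 2 + C + 2 * δ →
      dist g (emb w) ≤ 2 + C + 2 * δ → |dist f g - dist v w| ≤ 2 * (2 + C + 2 * δ) := by
    intro f g v w h1 h2
    have := emb_dist v w
    have t1 := dist_triangle4 f (emb v) (emb w) g
    have t2 := dist_triangle4 (emb v) f g (emb w)
    rw [dist_comm (emb w) g] at t1
    rw [dist_comm (emb v) f] at t2
    rw [abs_le]; constructor <;> linarith
  intro a b c d
  obtain ⟨a', ha⟩ := hull_dense hf hr a
  obtain ⟨b', hb⟩ := hull_dense hf hr b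
  obtain ⟨c', hc⟩ := hull_dense hf hr c
  obtain ⟨d', hd⟩ := hull_dense hf hr d
  have p1 := abs_le.1 (pert a b a' b' ha hb)
  have p2 := abs_le.1 (pert c d c' d' hc hd)
  have p3 := abs_le.1 (pert a c a' c' ha hc)
  have p4 := abs_le.1 (pert b d b' d' hb hd)
  have p5 := abs_le.1 (pert a d a' d' ha hd)
  have p6 := abs_le.1 (pert b c b' c' hb hc)
  rcases hf a' b' c' d' with h | h
  · left; linarith [p1.2, p2.2, p3.1, p4.1]
  · right; linarith [p1.2, p2.2, p5.1, p6.1]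

end Hull

section HullAction
variable {G : Type*} [Group G] {X : Type*} [MetricSpace X]

theorem IsAction.inv_act {X : Type*} {act : G → X → X} (h : IsAction act) (g : G) (x : X) :
    act g⁻¹ (act g x) = x := by rw [← h.2, inv_mul_cancel, h.1]

theorem IsAction.act_inv {X : Type*} {act : G → X → X} (h : IsAction act) (g : G) (x : X) :
    act g (act g⁻¹ x) = x := by rw [← h.2, mul_inv_cancel, h.1]

/-- The action on the hull by precomposition with the inverse. -/
noncomputable def hullAct {act : G → X → X} (h : IsIsometricAction act) (g : G) (f : Hull X) :
    Hull X :=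
  ⟨fun x => f.1 (act g⁻¹ x), fun x y => by
      rw [← (h.2 g⁻¹).dist_eq x y]; exact f.2.1 _ _, fun x => by
      refine Eq.trans ?_ (f.2.2 (act g⁻¹ x))
      apply le_antisymm
      · apply conj_le
        intro y
        rw [← (h.2 g⁻¹).dist_eq x y]
        exact f.2.1.le_conj _ _
      · apply conj_le
        intro y
        have hd : Dom fun x => f.1 (act g⁻¹ x) := fun x y => by
          rw [← (h.2 g⁻¹).dist_eq x y]; exact f.2.1 _ _
        have := hd.le_conj x (act g y)
        rw [IsAction.inv_act h.1] at this
        rw [← (h.2 g).dist_eq (act g⁻¹ x) y, IsAction.act_inv h.1]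
        exact this⟩

theorem hullAct_isAction {act : G → X → X} (h : IsIsometricAction act) :
    IsIsometricAction (hullAct h) := by
  refine ⟨⟨?_, ?_⟩, ?_⟩
  · intro f
    apply Subtype.ext; funext x
    change f.1 (act 1⁻¹ x) = f.1 x
    rw [inv_one, h.1.1]
  · intro g k f
    apply Subtype.ext; funext x
    change f.1 (act (g * k)⁻¹ x) = f.1 (act k⁻¹ (act g⁻¹ x))
    rw [mul_inv_rev, h.1.2]
  · intro g
    apply Isometry.of_dist_eq
    intro f k
    apply le_antisymm
    · exact Hull.dist_le dist_nonneg fun x => Hull.le_dist f k (act g⁻¹ x)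
    · refine Hull.dist_le dist_nonneg fun x => ?_
      have := Hull.le_dist (hullAct h g f) (hullAct h g k) (act g x)
      change |f.1 (act g⁻¹ (act g x)) - k.1 (act g⁻¹ (act g x))| ≤ _ at this
      rwa [IsAction.inv_act h.1] at this

theorem hullAct_emb {act : G → X → X} (h : IsIsometricAction act) (g : G) (x : X) :
    hullAct h g (emb x) = emb (act g x) := by
  apply Subtype.ext; funext y
  change dist (act g⁻¹ y) x = dist y (act g x)
  rw [← (h.2 g).dist_eq, IsAction.act_inv h.1]

theorem emb_gprod (e x y : X) : gprod (emb e) (emb x) (emb y) = gprod e x y := by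
  unfold gprod; simp only [emb_dist]

end HullAction

/-- Passing to the injective hull, acylindrical hyperbolicity may be checked on a space that is
only roughly geodesic. -/
theorem ah_of_rough {G : Type*} [Group G] {X : Type} [MetricSpace X] {act : G → X → X}
    (h : IsIsometricAction act) {δ C : ℝ} (hf : FourPt X δ) (hr : RoughGeod X C) (hC : 0 ≤ C)
    (hacyl : AcylindricalAction act) (e : X) (hne : NonelemAction act e) :
    AcylindricallyHyperbolic G := by
  have : Nonempty X := ⟨e⟩
  have hδ := hf.nonneg e
  have hF := hull_fourPt hf hr
  set K := 2 + C + 2 * δ with hK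
  refine ⟨Hull X, inferInstance, hullAct h, _, ?_, hull_geodesic, slim_of_fourPt hF,
    hullAct_isAction h, ?_, emb e, ?_⟩
  · have : 0 ≤ K := by rw [hK]; linarith
    linarith
  · intro ε hε
    obtain ⟨R, N, hR, hN, hRN⟩ := hacyl (ε + 2 * K) (by rw [hK]; linarith)
    refine ⟨R + 2 * K, N, by rw [hK]; linarith, hN, ?_⟩
    intro f k hfk
    obtain ⟨v, hv⟩ := hull_dense hf hr f
    obtain ⟨w, hw⟩ := hull_dense hf hr k
    have hmove : ∀ (g : G) (p : Hull X) (u : X), dist p (emb u) ≤ K →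
        dist p (hullAct h g p) ≤ ε → dist u (act g u) ≤ ε + 2 * K := by
      intro g p u hu hp
      rw [← emb_dist, ← hullAct_emb h]
      have t1 := dist_triangle4 (emb u) p (hullAct h g p) (hullAct h g (emb u))
      rw [((hullAct_isAction h).2 g).dist_eq, dist_comm (emb u) p] at t1
      linarith
    have hsub : {g : G | dist f (hullAct h g f) ≤ ε ∧ dist k (hullAct h g k) ≤ ε} ⊆
        {g : G | dist v (act g v) ≤ ε + 2 * K ∧ dist w (act g w) ≤ ε + 2 * K} :=
      fun g hg => ⟨hmove g f v hv hg.1, hmove g k w hw hg.2⟩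
    have hvw : R ≤ dist v w := by
      rw [← emb_dist]
      have t1 := dist_triangle4 f (emb v) (emb w) k
      rw [dist_comm (emb w) k] at t1
      linarith
    obtain ⟨h1, h2⟩ := hRN v w hvw
    exact ⟨h1.subset hsub, (Set.ncard_le_ncard hsub h1).trans h2⟩
  · obtain ⟨x, y, z, hx, hy, hz, hxy, hyz, hxz⟩ := hne
    have conv : ∀ {s : ℕ → X}, ConvToInfty e s → ConvToInfty (emb e) fun n => emb (s n) := by
      intro s hs
      unfold ConvToInfty at hs ⊢
      simpa only [emb_gprod] using hs
    have lim : ∀ (gs : ℕ → G) (s : X) (hc : ConvToInfty e fun n => act (gs n) s),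
        (Quot.mk _ ⟨_, conv hc⟩ : GBoundary (Hull X) (emb e)) ∈ limitSet (hullAct h) (emb e) := by
      intro gs s hc
      have heq : (fun n => hullAct h (gs n) (emb s)) = fun n => emb (act (gs n) s) :=
        funext fun n => hullAct_emb h _ _
      refine ⟨emb s, gs, ?_⟩
      rw [heq]
      exact ⟨conv hc, rfl⟩
    have neq : ∀ {s t : ℕ → X} (hs : ConvToInfty e s) (ht : ConvToInfty e t),
        (Quot.mk _ ⟨s, hs⟩ : GBoundary X e) ≠ Quot.mk _ ⟨t, ht⟩ →
        (Quot.mk _ ⟨_, conv hs⟩ : GBoundary (Hull X) (emb e)) ≠ Quot.mk _ ⟨_, conv ht⟩ := by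
      intro s t hs ht hn hcon
      apply hn
      replace hcon := (mk_eq_iff hF _ _).1 hcon
      refine (mk_eq_iff hf _ _).2 ?_
      unfold bequiv at hcon ⊢
      simpa only [emb_gprod] using hcon
    obtain ⟨s1, g1, c1, rfl⟩ := hx
    obtain ⟨s2, g2, c2, rfl⟩ := hy
    obtain ⟨s3, g3, c3, rfl⟩ := hz
    exact ⟨_, _, _, lim g1 s1 c1, lim g2 s2 c2, lim g3 s3 c3, neq _ _ hxy, neq _ _ hyz,
      neq _ _ hxz⟩

end AcylDyn

/-! ### Projection data and its exactification -/

namespace AcylDyn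

/-- Projection data in the sense of Bestvina, Bromberg and Fujiwara: for each `Y` a coarse
distance `d Y X Z` between the projections of `X` and `Z` to `Y`.  The value is `0` by convention
when `X` or `Z` equals `Y`. -/
structure ProjData (Ω : Type*) where
  /-- The distance of `X` and `Z` seen from `Y`, as `d Y X Z`. -/
  d : Ω → Ω → Ω → ℕ
  /-- The projection constant. -/
  θ : ℕ
  symm : ∀ Y X Z, d Y X Z = d Y Z X
  tri : ∀ Y X W Z, W ≠ Y → d Y X Z ≤ d Y X W + d Y W Z
  junk : ∀ Y Z, d Y Y Z = 0
  diag : ∀ Y X, d Y X X ≤ θ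
  beh : ∀ A B C, θ < d B A C → d A B C ≤ θ
  fin : ∀ X Z, {Y | θ < d Y X Z}.Finite

theorem exists_path {α : Type*} {r : α → α → Prop} {x y : α} (h : Relation.ReflTransGen r x y) :
    ∃ (n : ℕ) (z : ℕ → α), z 0 = x ∧ z n = y ∧ ∀ i < n, r (z i) (z (i + 1)) := by
  induction h with
  | refl => exact ⟨0, fun _ => x, rfl, rfl, fun i hi => absurd hi (Nat.not_lt_zero _)⟩
  | @tail b c _ hbc ih =>
    obtain ⟨n, z, h0, h1, h2⟩ := ih
    refine ⟨n + 1, fun i => if i ≤ n then z i else c, by simp [h0], by simp, ?_⟩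
    intro i hi
    rcases Nat.lt_or_ge i n with h | h
    · simp only [h.le, if_true, Nat.succ_le_of_lt h]; exact h2 i h
    · have : i = n := by omega
      subst this
      simp [h1, hbc]

theorem exists_max_of_trans {α : Type*} {r : α → α → Prop} (hi : ∀ a, ¬ r a a)
    (ht : ∀ a b c, r a b → r b c → r a c) (F : Finset α) (hF : F.Nonempty) :
    ∃ a ∈ F, ∀ b ∈ F, ¬ r a b := by
  classical
  induction hF using Finset.Nonempty.cons_induction with
  | singleton a =>
    exact ⟨a, by simp, fun b hb => by rw [Finset.mem_singleton] at hb; subst hb; exact hi _⟩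
  | cons a s ha hs ih =>
    obtain ⟨m, hm, hmax⟩ := ih
    by_cases h : r m a
    · refine ⟨a, by simp, fun b hb => ?_⟩
      rw [Finset.mem_cons] at hb
      rcases hb with rfl | hb
      · exact hi _
      · exact fun hab => hmax b hb (ht _ _ _ h hab)
    · refine ⟨m, by simp [hm], fun b hb => ?_⟩
      rw [Finset.mem_cons] at hb
      rcases hb with rfl | hb
      · exact h
      · exact hmax b hb

namespace ProjData
variable {Ω : Type*} (P : ProjData Ω)

/-- `X` and `B` are joined, relative to `Y`, when one of them is a barrier between the other
and `Y`. -/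
def Edge (Y X B : Ω) : Prop := 6 * P.θ < P.d B X Y ∨ 6 * P.θ < P.d X B Y

/-- The equivalence relation generated by barriers; equivalent objects will have identical
exact projections to `Y`. -/
def Rel (Y : Ω) : Ω → Ω → Prop := Relation.ReflTransGen (P.Edge Y)

variable {P}

theorem Edge.symm {Y X B : Ω} (h : P.Edge Y X B) : P.Edge Y B X := Or.symm h

theorem Rel.symm {Y X Z : Ω} (h : P.Rel Y X Z) : P.Rel Y Z X :=
  haveI : Std.Symm (P.Edge Y) := ⟨fun _ _ h => h.symm⟩
  Std.Symm.symm (r := Relation.ReflTransGen (P.Edge Y)) _ _ h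

theorem Rel.trans {Y X Z W : Ω} (h : P.Rel Y X Z) (h' : P.Rel Y Z W) : P.Rel Y X W :=
  Relation.ReflTransGen.trans h h'

theorem junk' (P : ProjData Ω) (Y Z : Ω) : P.d Y Z Y = 0 := by rw [P.symm, P.junk]

theorem ne_of_lt {t : ℕ} {B X Y : Ω} (ht : P.θ ≤ t) (h : t < P.d B X Y) :
    X ≠ B ∧ Y ≠ B ∧ X ≠ Y := by
  refine ⟨?_, ?_, ?_⟩
  · rintro rfl; rw [P.junk] at h; omega
  · rintro rfl; rw [P.junk'] at h; omega
  · rintro rfl; have := P.diag B X; omega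

/-- The transitive closure of the barrier order `3θ < d b a Y` loses only `θ`. -/
theorem transGen_lt {Y a b : Ω}
    (h : Relation.TransGen (fun a b => 3 * P.θ < P.d b a Y) a b) : 2 * P.θ < P.d b a Y := by
  induction h with
  | single h => omega
  | @tail b c _ hbc ih =>
    have h1 := P.beh b c Y (by omega)
    have hcb : c ≠ b := by rintro rfl; rw [P.junk] at hbc; omega
    have h2 := P.tri b a c Y hcb
    have h3 : P.d c b a ≤ P.θ := P.beh c b a (by rw [P.symm]; omega)
    have hac : a ≠ c := by rintro rfl; omega
    have h4 := P.tri c b a Y hac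
    omega

theorem exists_maximal (Y : Ω) (F : Finset Ω) (hF : F.Nonempty) :
    ∃ A ∈ F, ∀ Q ∈ F, ¬ 3 * P.θ < P.d Q A Y := by
  obtain ⟨A, hA, hmax⟩ := exists_max_of_trans
    (r := Relation.TransGen (fun a b => 3 * P.θ < P.d b a Y))
    (fun a ha => by have := transGen_lt ha; rw [P.junk] at this; omega)
    (fun a b c => Relation.TransGen.trans) F hF
  exact ⟨A, hA, fun Q hQ h => hmax Q hQ (Relation.TransGen.single h)⟩

theorem core {Y A B u q : Ω} (hA : ¬ 3 * P.θ < P.d B A Y) (hu : 6 * P.θ < P.d A u Y)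
    (huB : u = B ∨ 4 * P.θ < P.d B u Y) (hqB : q = B ∨ 4 * P.θ < P.d B q Y) (hAB : A ≠ B) :
    4 * P.θ < P.d A q Y := by
  have step : 5 * P.θ < P.d A B Y := by
    rcases huB with rfl | huB
    · omega
    · have h1 := P.tri B u A Y hAB
      have h2 := P.beh A B u (by rw [P.symm]; omega)
      have h3 := P.tri A u B Y hAB.symm
      rw [P.symm A u B] at h3
      omega
  rcases hqB with rfl | hqB
  · omega
  · have h1 := P.beh B A Y (by omega)
    have h2 := P.tri B q A Y hAB
    have h3 := P.beh A B q (by rw [P.symm]; omega)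
    have hqA : q ≠ A := by rintro rfl; omega
    have h4 := P.tri A B q Y hqA
    omega

/-- Along any path of barriers some vertex dominates all the others. -/
theorem exists_dominating (Y : Ω) (z : ℕ → Ω) : ∀ n a : ℕ,
    (∀ i, a ≤ i → i < a + n → P.Edge Y (z i) (z (i + 1))) →
    ∃ j, a ≤ j ∧ j ≤ a + n ∧ ∀ l, a ≤ l → l ≤ a + n →
      z l = z j ∨ 4 * P.θ < P.d (z j) (z l) Y := by
  classical
  intro n
  induction n using Nat.strong_induction_on with
  | _ n ih =>
  intro a hz
  obtain ⟨A, hA, hmax⟩ := exists_maximal (P := P) Y ((Finset.Icc a (a + n)).image z)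
    ⟨z a, Finset.mem_image_of_mem _ (by simp)⟩
  obtain ⟨j, hj, rfl⟩ := Finset.mem_image.1 hA
  rw [Finset.mem_Icc] at hj
  have hmax' : ∀ i, a ≤ i → i ≤ a + n → ¬ 3 * P.θ < P.d (z i) (z j) Y := fun i h1 h2 =>
    hmax _ (Finset.mem_image_of_mem _ (Finset.mem_Icc.2 ⟨h1, h2⟩))
  refine ⟨j, hj.1, hj.2, fun l hl1 hl2 => ?_⟩
  by_cases hlA : z l = z j
  · exact Or.inl hlA
  right
  rcases le_total j l with hjl | hlj
  · -- the part of the path after the last visit of `z j` before time `l`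
    set l0 := Nat.findGreatest (fun i => z i = z j) l with hl0
    have p0 : z l0 = z j := Nat.findGreatest_spec (P := fun i => z i = z j) hjl rfl
    have p1 : l0 ≤ l := Nat.findGreatest_le l
    have p2 : j ≤ l0 := Nat.le_findGreatest hjl rfl
    have p3 : l0 ≠ l := fun h => hlA (h ▸ p0)
    obtain ⟨j', q1, q2, q3⟩ := ih (l - l0 - 1) (by omega) (l0 + 1)
      (fun i h1 h2 => hz i (by omega) (by omega))
    have hB : z j' ≠ z j := Nat.findGreatest_is_greatest (P := fun i => z i = z j) (n := l) (k := j')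
      (by omega) (by omega)
    have hedge := hz l0 (by omega) (by omega)
    rw [p0] at hedge
    rcases hedge with he | he
    · exact absurd (show 3 * P.θ < _ by omega) (hmax' (l0 + 1) (by omega) (by omega))
    · exact core (hmax' j' (by omega) (by omega)) he (q3 (l0 + 1) le_rfl (by omega))
        (q3 l (by omega) (by omega)) hB.symm
  · have hex : ∃ i, l ≤ i ∧ z i = z j := ⟨j, hlj, rfl⟩
    set l0 := Nat.find hex with hl0
    have p0 := Nat.find_spec hex
    rw [← hl0] at p0
    have p2 : l0 ≤ j := Nat.find_min' hex ⟨hlj, rfl⟩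
    have p3 : l0 ≠ l := fun h => hlA (h ▸ p0.2)
    obtain ⟨j', q1, q2, q3⟩ := ih (l0 - 1 - l) (by omega) l
      (fun i h1 h2 => hz i (by omega) (by omega))
    have hB : z j' ≠ z j := fun h => Nat.find_min hex (m := j') (by omega) ⟨q1, h⟩
    have hedge := hz (l0 - 1) (by omega) (by omega)
    rw [show l0 - 1 + 1 = l0 by omega, p0.2] at hedge
    rcases hedge with he | he
    · exact core (hmax' j' (by omega) (by omega)) he (q3 (l0 - 1) (by omega) (by omega))
        (q3 l (by omega) (by omega)) hB.symm
    · exact absurd (show 3 * P.θ < _ by omega) (hmax' (l0 - 1) (by omega) (by omega))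

/-- Equivalent objects have nearby projections to `Y`. -/
theorem Rel.no_drift {Y X Z : Ω} (h : P.Rel Y X Z) : P.d Y X Z ≤ 2 * P.θ := by
  obtain ⟨n, z, h0, h1, hz⟩ := exists_path h
  obtain ⟨j, -, hj, hdom⟩ := exists_dominating (P := P) Y z n 0
    (fun i _ hi => hz i (by omega))
  have near : ∀ l, l ≤ 0 + n → P.d Y (z j) (z l) ≤ P.θ := by
    intro l hl
    rcases hdom l (Nat.zero_le _) hl with h | h
    · rw [h]; exact P.diag _ _
    · exact P.beh Y (z j) (z l) (by rw [P.symm]; omega)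
  have a0 := near 0 (by omega)
  have a1 := near n (by omega)
  rw [h0] at a0
  rw [h1] at a1
  by_cases hY : z j = Y
  · have : z 0 = Y := by
      rcases hdom 0 (Nat.zero_le _) (by omega) with h | h
      · rw [h, hY]
      · rw [hY, P.junk'] at h; omega
    rw [← h0, this, P.junk]; omega
  · have := P.tri Y X (z j) Z hY
    rw [P.symm Y X (z j)] at this
    omega

theorem Rel.eq_of_left {Y X : Ω} (h : P.Rel Y Y X) : X = Y := by
  rcases Relation.ReflTransGen.cases_head h with h | ⟨c, h, -⟩
  · exact h.symm
  · rcases h with h | h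
    · exact absurd rfl (ne_of_lt (by omega) h).2.2
    · rw [P.junk'] at h; omega

variable (P) in
/-- `X` and `Z` have distant exact projections to `Y`. -/
def Far (Y X Z : Ω) : Prop :=
  ∃ X' Z', P.Rel Y X X' ∧ P.Rel Y Z Z' ∧ 20 * P.θ + 20 < P.d Y X' Z'

theorem Far.symm {Y X Z : Ω} (h : P.Far Y X Z) : P.Far Y Z X := by
  obtain ⟨X', Z', h1, h2, h3⟩ := h
  exact ⟨Z', X', h2, h1, by rwa [P.symm]⟩

theorem far_of_lt {Y X Z : Ω} (h : 20 * P.θ + 20 < P.d Y X Z) : P.Far Y X Z :=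
  ⟨X, Z, .refl, .refl, h⟩

theorem Far.congr_left {Y X X₁ Z : Ω} (h : P.Far Y X Z) (hr : P.Rel Y X X₁) : P.Far Y X₁ Z := by
  obtain ⟨X', Z', h1, h2, h3⟩ := h
  exact ⟨X', Z', hr.symm.trans h1, h2, h3⟩

theorem Far.congr_right {Y X Z Z₁ : Ω} (h : P.Far Y X Z) (hr : P.Rel Y Z Z₁) : P.Far Y X Z₁ :=
  (h.symm.congr_left hr).symm

theorem Far.lt {Y X Z : Ω} (h : P.Far Y X Z) : 16 * P.θ + 20 < P.d Y X Z := by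
  obtain ⟨X', Z', h1, h2, h3⟩ := h
  have hX : X ≠ Y := by
    rintro rfl
    rw [h1.eq_of_left, P.junk] at h3; omega
  have hZ : Z ≠ Y := by
    rintro rfl
    rw [h2.eq_of_left, P.junk'] at h3; omega
  have a1 := h1.symm.no_drift
  have a2 := h2.no_drift
  have a3 := P.tri Y X' X Z' hX
  have a4 := P.tri Y X Z Z' hZ
  omega

theorem Far.ne {Y X Z : Ω} (h : P.Far Y X Z) : X ≠ Y ∧ Z ≠ Y ∧ X ≠ Z :=
  ne_of_lt (by omega) h.lt

theorem rel_of_lt {Y X B : Ω} (h : 6 * P.θ < P.d B X Y) : P.Rel Y X B :=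
  Relation.ReflTransGen.single (Or.inl h)

/-- Full description of `Y` coming before `Y'` on the way from `X` to `Z`. -/
theorem Far.order {X Z Y Y' : Ω} (h : P.Far Y X Z) (h' : P.Far Y' X Z) (hne : Y ≠ Y')
    (hlt : P.θ < P.d Y X Y') :
    P.d Y Y' Z ≤ P.θ ∧ P.d Y' X Y ≤ P.θ ∧ 15 * P.θ + 20 < P.d Y X Y' ∧
      15 * P.θ + 20 < P.d Y' Y Z ∧ P.Rel Y' X Y ∧ P.Rel Y Z Y' := by
  have a1 := h.lt
  have a2 := h'.lt
  have b1 : P.d Y' Y X ≤ P.θ := P.beh Y' Y X (by rwa [P.symm])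
  rw [P.symm] at b1
  have b2 := P.tri Y' X Y Z hne
  have b3 : P.d Y Y' Z ≤ P.θ := P.beh Y Y' Z (by omega)
  have b4 := P.tri Y X Y' Z hne.symm
  refine ⟨b3, b1, by omega, by omega, rel_of_lt (by omega), rel_of_lt ?_⟩
  rw [P.symm]; omega

theorem Far.total {X Z Y Y' : Ω} (h : P.Far Y X Z) (h' : P.Far Y' X Z) (hne : Y ≠ Y') :
    P.θ < P.d Y X Y' ∨ P.θ < P.d Y' X Y := by
  by_contra hcon
  push Not at hcon
  have a1 := h.lt
  have a2 := h'.lt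
  have b1 := P.tri Y X Y' Z hne.symm
  have b2 := P.beh Y' Y Z (by omega)
  have b3 := P.tri Y' X Y Z hne
  omega

theorem Far.asymm {X Z Y Y' : Ω} (h : P.Far Y X Z) (h' : P.Far Y' X Z) (hne : Y ≠ Y')
    (hlt : P.θ < P.d Y X Y') : ¬ P.θ < P.d Y' X Y := by
  have := (h.order h' hne hlt).2.1
  omega

theorem Far.lt_trans {X Z A B C : Ω} (hA : P.Far A X Z) (hB : P.Far B X Z) (hC : P.Far C X Z)
    (h1 : P.θ < P.d A X B) (h2 : P.θ < P.d B X C) : P.θ < P.d A X C := by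
  have nAB : A ≠ B := by rintro rfl; rw [P.junk'] at h1; omega
  have nBC : B ≠ C := by rintro rfl; rw [P.junk'] at h2; omega
  by_cases nAC : A = C
  · subst nAC
    have := hB.asymm hA nAB.symm h2
    exact absurd h1 this
  by_contra hcon
  have h3 := (hA.total hC nAC).resolve_left hcon
  have o1 := hA.order hB nAB h1
  have o2 := hB.order hC nBC h2
  have o3 := hC.order hA (Ne.symm nAC) h3
  have t1 := P.tri C X B A nBC
  have t2 : P.d A C B ≤ P.θ := P.beh A C B (by rw [P.symm]; omega)
  have t3 := P.tri A X C Z (Ne.symm nAC)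
  have t4 := P.tri A C B Z nAB.symm
  have := hA.lt
  omega

/-! ### The metric counting exact barriers -/

theorem far_finite (X Z : Ω) : {Y | P.Far Y X Z}.Finite :=
  (P.fin X Z).subset fun Y hY => by
    have := Far.lt hY
    change P.θ < P.d Y X Z
    omega

variable (P) in
/-- The finite set of barriers between `X` and `Z`. -/
noncomputable def H (X Z : Ω) : Finset Ω := (far_finite (P := P) X Z).toFinset

theorem mem_H {X Z Y : Ω} : Y ∈ P.H X Z ↔ P.Far Y X Z := by simp [H]

theorem H_comm (X Z : Ω) : P.H X Z = P.H Z X := by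
  ext Y; rw [mem_H, mem_H]; exact ⟨Far.symm, Far.symm⟩

theorem H_self (X : Ω) : P.H X X = ∅ := by
  ext Y; simp only [mem_H, Finset.notMem_empty, iff_false]
  exact fun h => h.ne.2.2 rfl

open Classical in
/-- Up to three exceptions, a barrier between `X` and `Z` is one between `X` and `W` or between
`W` and `Z`. -/
theorem card_exceptions (X W Z : Ω) : (P.H X Z \ (P.H X W ∪ P.H W Z)).card ≤ 3 := by
  set E := P.H X Z \ (P.H X W ∪ P.H W Z) with hE
  have hmem : ∀ Y ∈ E, P.Far Y X Z ∧ ¬ P.Far Y X W ∧ ¬ P.Far Y W Z := by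
    intro Y hY
    simpa [hE, mem_H, not_or] using hY
  -- a barrier which still sees `W` and `Z` far apart has no exception behind it
  have hR : (E.filter fun Y => Y ≠ W ∧ 8 * P.θ + 10 < P.d Y W Z).card ≤ 1 := by
    rw [Finset.card_le_one]
    have key : ∀ a ∈ E, ∀ b ∈ E, a ≠ W → 8 * P.θ + 10 < P.d a W Z → a ≠ b →
        ¬ P.θ < P.d a X b := by
      intro a ha b hb haW had hab hlt
      obtain ⟨fa, -, -⟩ := hmem a ha
      obtain ⟨fb, -, nb⟩ := hmem b hb
      have o := fa.order fb hab hlt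
      have t := P.tri a W b Z hab.symm
      exact nb (fb.congr_left (o.2.2.2.2.1.trans (rel_of_lt (by omega)).symm))
    intro a ha b hb
    rw [Finset.mem_filter] at ha hb
    by_contra hab
    rcases (hmem a ha.1).1.total (hmem b hb.1).1 hab with h | h
    · exact key a ha.1 b hb.1 ha.2.1 ha.2.2 hab h
    · exact key b hb.1 a ha.1 hb.2.1 hb.2.2 (Ne.symm hab) h
  have hL : (E.filter fun Y => Y ≠ W ∧ 8 * P.θ + 9 < P.d Y X W).card ≤ 1 := by
    rw [Finset.card_le_one]
    have key : ∀ a ∈ E, ∀ b ∈ E, b ≠ W → 8 * P.θ + 9 < P.d b X W → a ≠ b →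
        ¬ P.θ < P.d a X b := by
      intro a ha b hb hbW hbd hab hlt
      obtain ⟨fa, na, -⟩ := hmem a ha
      obtain ⟨fb, -, -⟩ := hmem b hb
      have o := fa.order fb hab hlt
      have t := P.tri b X a W hab
      exact na (fa.congr_right (o.2.2.2.2.2.trans (rel_of_lt (by rw [P.symm]; omega)).symm))
    intro a ha b hb
    rw [Finset.mem_filter] at ha hb
    by_contra hab
    rcases (hmem a ha.1).1.total (hmem b hb.1).1 hab with h | h
    · exact key a ha.1 b hb.1 hb.2.1 hb.2.2 hab h
    · exact key b hb.1 a ha.1 ha.2.1 ha.2.2 (Ne.symm hab) h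
  have hsub : E ⊆ {W} ∪ ((E.filter fun Y => Y ≠ W ∧ 8 * P.θ + 10 < P.d Y W Z) ∪
      (E.filter fun Y => Y ≠ W ∧ 8 * P.θ + 9 < P.d Y X W)) := by
    intro Y hY
    simp only [Finset.mem_union, Finset.mem_singleton, Finset.mem_filter]
    by_cases hW : Y = W
    · exact Or.inl hW
    right
    have a1 := (hmem Y hY).1.lt
    have a2 := P.tri Y X W Z (Ne.symm hW)
    rcases Nat.lt_or_ge (8 * P.θ + 10) (P.d Y W Z) with h | h
    · exact Or.inl ⟨hY, hW, h⟩
    · exact Or.inr ⟨hY, hW, by omega⟩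
  calc E.card ≤ _ := Finset.card_le_card hsub
    _ ≤ 1 + (1 + 1) := (Finset.card_union_le _ _).trans (add_le_add (by simp)
        ((Finset.card_union_le _ _).trans (add_le_add hR hL)))
    _ = 3 := rfl

variable (P) in
/-- The number of barriers between `X` and `Z`. -/
noncomputable def rho (X Z : Ω) : ℕ := (P.H X Z).card

theorem rho_comm (X Z : Ω) : P.rho X Z = P.rho Z X := by unfold rho; rw [H_comm]

theorem rho_self (X : Ω) : P.rho X X = 0 := by unfold rho; rw [H_self]; rfl

theorem rho_tri (X W Z : Ω) : P.rho X Z ≤ P.rho X W + P.rho W Z + 3 := by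
  classical
  have h1 := card_exceptions (P := P) X W Z
  have h2 : P.H X Z ⊆ (P.H X W ∪ P.H W Z) ∪ (P.H X Z \ (P.H X W ∪ P.H W Z)) := by
    intro a ha
    by_cases h : a ∈ P.H X W ∪ P.H W Z
    · exact Finset.mem_union_left _ h
    · exact Finset.mem_union_right _ (Finset.mem_sdiff.2 ⟨ha, h⟩)
  have h3 := (Finset.card_le_card h2).trans (Finset.card_union_le _ _)
  have h4 := Finset.card_union_le (P.H X W) (P.H W Z)
  unfold rho; omega

open Classical in
variable (P) in
/-- The number of barriers that separate `X` from both `W` and `Z`; up to a bounded error, the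
Gromov product of `W` and `Z` at `X`. -/
noncomputable def cc (X W Z : Ω) : ℕ := (P.H X W ∩ P.H X Z).card

theorem cc_comm (X W Z : Ω) : P.cc X W Z = P.cc X Z W := by
  classical
  unfold cc; rw [Finset.inter_comm]

theorem card_triple (X W Z : Ω) : ∀ Y ∈ P.H X W, Y ∈ P.H X Z → Y ∈ P.H W Z →
    ∀ Y' ∈ P.H X W, Y' ∈ P.H X Z → Y' ∈ P.H W Z → Y = Y' := by
  simp only [mem_H]
  have key : ∀ Y Y' : Ω, P.Far Y X W → P.Far Y X Z → P.Far Y W Z → P.Far Y' X W →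
      P.Far Y' X Z → Y ≠ Y' → ¬ P.θ < P.d Y X Y' := by
    intro Y Y' a1 a2 a3 b1 b2 hne hlt
    have o1 := (a1.order b1 hne hlt).1
    have o2 := (a2.order b2 hne hlt).1
    have := a3.lt
    have t := P.tri Y W Y' Z hne.symm
    rw [P.symm Y W Y'] at t
    omega
  intro Y a1 a2 a3 Y' b1 b2 b3
  by_contra hne
  rcases a1.total b1 hne with h | h
  · exact key Y Y' a1 a2 a3 b1 b2 hne h
  · exact key Y' Y b1 b2 b3 a1 a2 (Ne.symm hne) h

theorem rho_le_cc (X W Z : Ω) : P.rho X W ≤ P.cc X W Z + P.cc W X Z + 3 := by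
  classical
  have h1 := card_exceptions (P := P) X Z W
  have h2 : P.H X W ⊆ ((P.H X W ∩ P.H X Z) ∪ (P.H W X ∩ P.H W Z)) ∪
      (P.H X W \ (P.H X Z ∪ P.H Z W)) := by
    intro a ha
    by_cases h : a ∈ P.H X Z
    · simp [ha, h]
    by_cases h' : a ∈ P.H Z W
    · simp [H_comm W X, H_comm W Z, ha, h']
    · simp [ha, h, h']
  have h3 := (Finset.card_le_card h2).trans (Finset.card_union_le _ _)
  have h4 := Finset.card_union_le (P.H X W ∩ P.H X Z) (P.H W X ∩ P.H W Z)
  unfold rho cc; omega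

theorem cc_le_rho (X W Z : Ω) : P.cc X W Z + P.cc W X Z ≤ P.rho X W + 1 := by
  classical
  have h1 := Finset.card_union_add_card_inter (P.H X W ∩ P.H X Z) (P.H W X ∩ P.H W Z)
  have h2 : ((P.H X W ∩ P.H X Z) ∪ (P.H W X ∩ P.H W Z)).card ≤ (P.H X W).card := by
    apply Finset.card_le_card
    intro a ha
    simp only [Finset.mem_union, Finset.mem_inter, H_comm W X] at ha
    tauto
  have h3 : ((P.H X W ∩ P.H X Z) ∩ (P.H W X ∩ P.H W Z)).card ≤ 1 := by
    rw [Finset.card_le_one]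
    intro a ha b hb
    simp only [Finset.mem_inter] at ha hb
    exact card_triple X W Z a ha.1.1 ha.1.2 ha.2.2 b hb.1.1 hb.1.2 hb.2.2
  unfold rho cc; omega

/-- Barriers shared with another endpoint form an initial segment of the barriers to `W`. -/
theorem initial {X Y W A A' : Ω} (hA : P.Far A X W) (hA' : P.Far A' X W) (hA'Y : P.Far A' X Y)
    (hne : A ≠ A') (hlt : P.θ < P.d A X A') : P.Far A X Y := by
  have o := hA.order hA' hne hlt
  have t := P.tri A' X A Y hne
  have := hA'Y.lt
  exact hA.congr_right (o.2.2.2.2.2.trans (rel_of_lt (by rw [P.symm]; omega)).symm)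

/-- The four-point inequality for the combinatorial Gromov product. -/
theorem cc_min (X Y W Z : Ω) : P.cc X Y W ≤ P.cc X Y Z ∨ P.cc X W Z ≤ P.cc X Y Z := by
  classical
  by_cases h : P.H X Y ∩ P.H X W ⊆ P.H X Z
  · left
    apply Finset.card_le_card
    intro a ha
    exact Finset.mem_inter.2 ⟨(Finset.mem_inter.1 ha).1, h ha⟩
  · right
    obtain ⟨a, ha, haZ⟩ := Finset.not_subset.1 h
    rw [Finset.mem_inter, mem_H, mem_H] at ha
    rw [mem_H] at haZ
    apply Finset.card_le_card
    intro b hb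
    rw [Finset.mem_inter, mem_H, mem_H] at hb ⊢
    refine ⟨?_, hb.2⟩
    have hne : a ≠ b := by rintro rfl; exact haZ hb.2
    rcases ha.2.total hb.1 hne with hlt | hlt
    · exact absurd (initial ha.2 hb.1 hb.2 hne hlt) haZ
    · exact initial hb.1 ha.2 ha.1 hne.symm hlt

variable (P) in
/-- The set of objects with the metric counting barriers. -/
def Space (_P : ProjData Ω) : Type _ := Ω

open Classical in
noncomputable instance : MetricSpace (Space P) where
  dist X Z := if (X : Ω) = (Z : Ω) then 0 else (P.rho X Z : ℝ) + 3
  dist_self X := by simp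
  dist_comm X Z := by
    simp only [rho_comm (P := P) X Z, eq_comm]
  dist_triangle X W Z := by
    have h := rho_tri (P := P) X W Z
    have h' : (P.rho X Z : ℝ) ≤ P.rho X W + P.rho W Z + 3 := by exact_mod_cast h
    by_cases h1 : X = Z
    · rw [if_pos h1]
      positivity
    by_cases h2 : X = W
    · subst h2; simp
    by_cases h3 : W = Z
    · subst h3; simp
    rw [if_neg h1, if_neg h2, if_neg h3]; linarith
  eq_of_dist_eq_zero {X Z} h := by
    by_contra hne
    change (if (X : Ω) = (Z : Ω) then (0 : ℝ) else (P.rho X Z : ℝ) + 3) = 0 at h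
    rw [if_neg hne] at h
    have : (0 : ℝ) ≤ P.rho X Z := Nat.cast_nonneg _
    linarith

theorem dist_of_ne {X Z : Space P} (h : X ≠ Z) : dist X Z = (P.rho X Z : ℝ) + 3 := if_neg h

theorem dist_le_rho (X Z : Space P) : dist X Z ≤ (P.rho X Z : ℝ) + 3 := by
  by_cases h : X = Z
  · subst h; rw [dist_self]; positivity
  · exact (dist_of_ne h).le

theorem rho_le_dist (X Z : Space P) : (P.rho X Z : ℝ) ≤ dist X Z := by
  by_cases h : X = Z
  · subst h; rw [dist_self]; exact_mod_cast (rho_self (P := P) X).le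
  · rw [dist_of_ne h]; linarith

theorem rho_cc (X W Z : Ω) : P.rho X W + P.rho X Z ≤ P.rho W Z + 2 * P.cc X W Z + 7 ∧
    P.rho W Z + 2 * P.cc X W Z ≤ P.rho X W + P.rho X Z + 5 := by
  have a1 := rho_le_cc (P := P) X W Z
  have a2 := cc_le_rho (P := P) X W Z
  have b1 := rho_le_cc (P := P) X Z W
  have b2 := cc_le_rho (P := P) X Z W
  have c1 := rho_le_cc (P := P) W Z X
  have c2 := cc_le_rho (P := P) W Z X
  rw [cc_comm X Z W] at b1 b2
  rw [cc_comm W Z X, cc_comm Z W X] at c1 c2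
  constructor <;> omega

theorem gprod_cc (X W Z : Space P) : |gprod X W Z - (P.cc X W Z : ℝ)| ≤ 8 := by
  have h := rho_cc (P := P) X W Z
  have a1 : (P.rho X W : ℝ) + P.rho X Z ≤ P.rho W Z + 2 * P.cc X W Z + 7 := by exact_mod_cast h.1
  have a2 : (P.rho W Z : ℝ) + 2 * P.cc X W Z ≤ P.rho X W + P.rho X Z + 5 := by exact_mod_cast h.2
  have d1 := dist_le_rho X W
  have d2 := dist_le_rho X Z
  have d3 := dist_le_rho W Z
  have e1 := rho_le_dist X W
  have e2 := rho_le_dist X Z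
  have e3 := rho_le_dist W Z
  unfold gprod
  rw [dist_comm W X, dist_comm Z X, abs_le]
  constructor <;> linarith

theorem space_fourPt : FourPt (Space P) 16 := by
  intro x y z w
  -- the Gromov product form at the base point `w`
  have g1 := abs_le.1 (gprod_cc (P := P) w x z)
  have g2 := abs_le.1 (gprod_cc (P := P) w z y)
  have g3 := abs_le.1 (gprod_cc (P := P) w x y)
  have key : gprod w x z ≤ gprod w x y + 16 ∨ gprod w z y ≤ gprod w x y + 16 := by
    rcases cc_min (P := P) w x z y with h | h
    · left
      have : (P.cc w x z : ℝ) ≤ P.cc w x y := by exact_mod_cast h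
      linarith [g1.2, g3.1]
    · right
      have : (P.cc w z y : ℝ) ≤ P.cc w x y := by exact_mod_cast h
      linarith [g2.2, g3.1]
  unfold gprod at key
  rw [dist_comm z y] at key
  rcases key with h | h
  · left; linarith
  · right; linarith

end ProjData
end AcylDyn

/-! ### Rough geodesics, acylindricity and limit points for the barrier metric -/

namespace AcylDyn
namespace ProjData
variable {Ω : Type*} {P : ProjData Ω}

open Classical in
variable (P) in
/-- The number of barriers between `X` and `Z` that precede `Y`. -/
noncomputable def rank (X Z Y : Ω) : ℕ := ((P.H X Z).filter fun A => P.θ < P.d A X Y).card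

theorem rank_lt_rank {X Z Y Y' : Ω} (h : P.Far Y X Z) (h' : P.Far Y' X Z)
    (hlt : P.θ < P.d Y X Y') : P.rank X Z Y < P.rank X Z Y' := by
  classical
  apply Finset.card_lt_card
  refine ⟨fun A hA => ?_, fun hsub => ?_⟩
  · rw [Finset.mem_filter, mem_H] at hA ⊢
    exact ⟨hA.1, hA.1.lt_trans h h' hA.2 hlt⟩
  · have : Y ∈ (P.H X Z).filter fun A => P.θ < P.d A X Y :=
      hsub (Finset.mem_filter.2 ⟨mem_H.2 h, hlt⟩)
    have := (Finset.mem_filter.1 this).2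
    rw [P.junk'] at this; omega

theorem rank_injOn {X Z Y Y' : Ω} (h : P.Far Y X Z) (h' : P.Far Y' X Z)
    (he : P.rank X Z Y = P.rank X Z Y') : Y = Y' := by
  by_contra hne
  rcases h.total h' hne with hl | hl
  · have := rank_lt_rank h h' hl; omega
  · have := rank_lt_rank h' h hl; omega

theorem rank_lt {X Z Y : Ω} (h : P.Far Y X Z) : P.rank X Z Y < P.rho X Z := by
  classical
  apply Finset.card_lt_card
  refine ⟨Finset.filter_subset _ _, fun hsub => ?_⟩
  have := (Finset.mem_filter.1 (hsub (mem_H.2 h))).2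
  rw [P.junk'] at this; omega

theorem exists_rank {X Z : Ω} {k : ℕ} (hk : k < P.rho X Z) :
    ∃ Y, P.Far Y X Z ∧ P.rank X Z Y = k := by
  classical
  have himg : (P.H X Z).image (P.rank X Z) = Finset.range (P.rho X Z) := by
    apply Finset.eq_of_subset_of_card_le
    · intro i hi
      obtain ⟨Y, hY, rfl⟩ := Finset.mem_image.1 hi
      exact Finset.mem_range.2 (rank_lt (mem_H.1 hY))
    · rw [Finset.card_range, Finset.card_image_of_injOn]
      · rfl
      · intro a ha b hb hab
        exact rank_injOn (mem_H.1 (Finset.mem_coe.1 ha)) (mem_H.1 (Finset.mem_coe.1 hb)) hab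
  have : k ∈ (P.H X Z).image (P.rank X Z) := by rw [himg]; exact Finset.mem_range.2 hk
  obtain ⟨Y, hY, rfl⟩ := Finset.mem_image.1 this
  exact ⟨Y, mem_H.1 hY, rfl⟩

theorem rank_le_rho {X Z Y : Ω} (h : P.Far Y X Z) : P.rank X Z Y ≤ P.rho X Y := by
  classical
  apply Finset.card_le_card
  intro A hA
  rw [Finset.mem_filter, mem_H] at hA
  rw [mem_H]
  have hne : A ≠ Y := by
    rintro rfl
    have := hA.2
    rw [P.junk'] at this; omega
  exact hA.1.congr_right (hA.1.order h hne hA.2).2.2.2.2.2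

/-- No barrier separates a barrier `Y` between `X` and `Z` from both `X` and `Z`. -/
theorem not_far_both {X Z Y a : Ω} (h : P.Far Y X Z) (h1 : P.Far a X Y) : ¬ P.Far a Y Z := by
  intro h2
  have a1 := h1.lt
  have a2 := h2.lt
  have b1 := P.beh Y a X (by rw [P.symm]; omega)
  have b2 := P.beh Y a Z (by omega)
  have b3 := P.tri Y X a Z h1.ne.2.1.symm
  rw [P.symm Y X a] at b3
  have := h.lt
  omega

theorem rho_le_rank {X Z Y : Ω} (h : P.Far Y X Z) : P.rho X Y ≤ P.rank X Z Y + 3 := by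
  classical
  have h1 := card_exceptions (P := P) X Z Y
  have h2 : P.H X Y ⊆ ((P.H X Z).filter fun A => P.θ < P.d A X Y) ∪
      (P.H X Y \ (P.H X Z ∪ P.H Z Y)) := by
    intro a ha
    rw [mem_H] at ha
    have hlt := ha.lt
    by_cases haZ : P.Far a X Z
    · exact Finset.mem_union_left _ (Finset.mem_filter.2 ⟨mem_H.2 haZ, by omega⟩)
    · refine Finset.mem_union_right _ (Finset.mem_sdiff.2 ⟨mem_H.2 ha, ?_⟩)
      rw [Finset.mem_union, mem_H, mem_H]
      rintro (h' | h')
      · exact haZ h'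
      · exact not_far_both h ha h'.symm
  have h3 := (Finset.card_le_card h2).trans (Finset.card_union_le _ _)
  unfold rho rank; omega

theorem rho_add_rank {X Z Y : Ω} (h : P.Far Y X Z) :
    P.rho Y Z + P.rank X Z Y ≤ P.rho X Z + 2 := by
  classical
  have h1 := card_exceptions (P := P) Y X Z
  have h2 : P.H Y Z ⊆ (((P.H X Z).filter fun A => ¬ P.θ < P.d A X Y).erase Y) ∪
      (P.H Y Z \ (P.H Y X ∪ P.H X Z)) := by
    intro a ha
    rw [mem_H] at ha
    have hne := ha.ne.1
    by_cases haZ : P.Far a X Z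
    · refine Finset.mem_union_left _ (Finset.mem_erase.2 ⟨hne.symm,
        Finset.mem_filter.2 ⟨mem_H.2 haZ, fun hlt => ?_⟩⟩)
      have := (haZ.order h hne.symm hlt).1
      have := ha.lt
      omega
    · refine Finset.mem_union_right _ (Finset.mem_sdiff.2 ⟨mem_H.2 ha, ?_⟩)
      rw [Finset.mem_union, mem_H, mem_H]
      rintro (h' | h')
      · exact not_far_both h h'.symm ha
      · exact haZ h'
  have h3 := (Finset.card_le_card h2).trans (Finset.card_union_le _ _)
  have h4 : Y ∈ (P.H X Z).filter fun A => ¬ P.θ < P.d A X Y :=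
    Finset.mem_filter.2 ⟨mem_H.2 h, by rw [P.junk']; omega⟩
  have h5 := Finset.card_erase_of_mem h4
  have h6 := Finset.card_pos.2 ⟨Y, h4⟩
  have h7 := Finset.card_filter_add_card_filter_not (s := P.H X Z) (fun A => P.θ < P.d A X Y)
  unfold rho rank; omega

theorem space_rough : RoughGeod (Space P) 10 := by
  intro X Z r h0 hr
  have hle := dist_le_rho X Z
  by_cases hz : P.rho X Z = 0
  · refine ⟨X, by rw [dist_self]; linarith, ?_⟩
    have : (P.rho X Z : ℝ) = 0 := by exact_mod_cast hz
    linarith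
  have hk : min ⌊r⌋₊ (P.rho X Z - 1) < P.rho X Z := by omega
  obtain ⟨Y, hY, hYk⟩ := exists_rank hk
  have a1 := rho_le_rank hY
  have a2 := rho_add_rank hY
  have b1 := dist_le_rho (P := P) X Y
  have b2 := dist_le_rho (P := P) Y Z
  have c1 : (P.rho X Y : ℝ) ≤ P.rank X Z Y + 3 := by exact_mod_cast a1
  have c2 : (P.rho Y Z : ℝ) + P.rank X Z Y ≤ P.rho X Z + 2 := by exact_mod_cast a2
  have d1 : (P.rank X Z Y : ℝ) ≤ r := by
    rw [hYk]
    exact (Nat.cast_le.2 (min_le_left _ _)).trans (Nat.floor_le h0)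
  have d2 : r ≤ P.rank X Z Y + 4 := by
    rw [hYk]
    have e1 := Nat.lt_floor_add_one r
    rcases min_choice ⌊r⌋₊ (P.rho X Z - 1) with h | h <;> rw [h]
    · linarith
    · have : ((P.rho X Z - 1 : ℕ) : ℝ) = (P.rho X Z : ℝ) - 1 := by
        rw [Nat.cast_sub (by omega)]; simp
      rw [this]; linarith
  have hd : (P.rho X Z : ℝ) ≤ dist X Z := rho_le_dist X Z
  exact ⟨Y, by linarith, by linarith⟩

section Action
variable {G : Type*} [Group G] [MulAction G Ω]

variable (P G) in
/-- Invariance of projection data under a group action. -/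
def Inv : Prop := ∀ (g : G) (Y X Z : Ω), P.d (g • Y) (g • X) (g • Z) = P.d Y X Z

theorem Inv.rel (hI : P.Inv G) (g : G) {Y X Z : Ω} (h : P.Rel Y X Z) :
    P.Rel (g • Y) (g • X) (g • Z) :=
  Relation.ReflTransGen.lift (fun A => g • A)
    (fun a b hab => by
      change P.Edge _ _ _
      unfold Edge at hab ⊢; rw [hI, hI]; exact hab) _ _ h

theorem Inv.far (hI : P.Inv G) (g : G) {Y X Z : Ω} (h : P.Far Y X Z) :
    P.Far (g • Y) (g • X) (g • Z) := by
  obtain ⟨X', Z', h1, h2, h3⟩ := h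
  exact ⟨g • X', g • Z', hI.rel g h1, hI.rel g h2, by rwa [hI]⟩

theorem Inv.rho (hI : P.Inv G) (g : G) (X Z : Ω) : P.rho (g • X) (g • Z) = P.rho X Z := by
  classical
  have key : ∀ (g : G) (X Z : Ω), P.rho X Z ≤ P.rho (g • X) (g • Z) := by
    intro g X Z
    unfold ProjData.rho
    rw [← Finset.card_image_of_injective (P.H X Z) (MulAction.injective g)]
    apply Finset.card_le_card
    intro a ha
    obtain ⟨b, hb, rfl⟩ := Finset.mem_image.1 ha
    exact mem_H.2 (hI.far g (mem_H.1 hb))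
  apply le_antisymm _ (key g X Z)
  have := key g⁻¹ (g • X) (g • Z)
  simpa using this

variable (P G) in
/-- The action on the barrier space. -/
def sact (g : G) : Space P → Space P := fun X : Ω => g • X

theorem Inv.isometric (hI : P.Inv G) : IsIsometricAction (P.sact G) := by
  refine ⟨⟨fun X : Ω => one_smul G X, fun g h (X : Ω) => mul_smul g h X⟩, fun g => ?_⟩
  apply Isometry.of_dist_eq
  intro X Z
  by_cases h : X = Z
  · subst h; rw [dist_self, dist_self]
  · have h' : P.sact G g X ≠ P.sact G g Z := fun hc => h (MulAction.injective (β := Ω) g hc)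
    rw [dist_of_ne h, dist_of_ne h']
    exact congrArg (fun n : ℕ => (n : ℝ) + 3) (hI.rho (Ω := Ω) g X Z)

/-- Acylindricity: an element moving `X` and `Z` little permutes most of the barriers between
them, moving their ranks little; two barriers and their images determine it up to `N₀` choices. -/
theorem Inv.acyl_core (hI : P.Inv G) {N₀ : ℕ}
    (hN : ∀ a b a' b' : Ω, a ≠ b → {g : G | g • a = a' ∧ g • b = b'}.Finite ∧
      {g : G | g • a = a' ∧ g • b = b'}.ncard ≤ N₀) (n t t' : ℕ) (ht : t = 2 * n + 8)
    (ht' : t' = t + n + 6) (X Z : Ω) (hrho : t ≤ P.rho X Z) :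
    {g : G | P.rho X (g • X) ≤ n ∧ P.rho Z (g • Z) ≤ n}.Finite ∧
      {g : G | P.rho X (g • X) ≤ n ∧ P.rho Z (g • Z) ≤ n}.ncard ≤ t' ^ 4 * N₀ := by
  classical
  set Q : Finset Ω := (P.H X Z).filter fun A => P.rank X Z A < t' with hQ
  have hQcard : Q.card ≤ t' := by
    rw [← Finset.card_range t']
    apply Finset.card_le_card_of_injOn (P.rank X Z)
    · intro a ha
      exact Finset.mem_coe.2 (Finset.mem_range.2 (Finset.mem_filter.1 (Finset.mem_coe.1 ha)).2)
    · intro a ha b hb hab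
      exact rank_injOn (mem_H.1 (Finset.mem_filter.1 (Finset.mem_coe.1 ha)).1)
        (mem_H.1 (Finset.mem_filter.1 (Finset.mem_coe.1 hb)).1) hab
  let S : (Ω × Ω) × (Ω × Ω) → Finset G := fun p =>
    if h : p.1.1 ≠ p.1.2 then (hN p.1.1 p.1.2 p.2.1 p.2.2 h).1.toFinset else ∅
  have hS : ∀ p, (S p).card ≤ N₀ := by
    intro p
    by_cases h : p.1.1 ≠ p.1.2
    · simp only [S, dif_pos h]
      rw [← Set.ncard_eq_toFinset_card _ _]
      exact (hN p.1.1 p.1.2 p.2.1 p.2.2 h).2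
    · simp only [S, dif_neg h]; simp
  have hcover : {g : G | P.rho X (g • X) ≤ n ∧ P.rho Z (g • Z) ≤ n} ⊆
      (((Q ×ˢ Q) ×ˢ (Q ×ˢ Q)).biUnion S : Finset G) := by
    rintro g ⟨mX, mZ⟩
    -- the initial barriers
    set T : Finset Ω := (P.H X Z).filter fun A => P.rank X Z A < t with hT
    have hTcard : t ≤ T.card := by
      rw [← Finset.card_range t]
      refine (Finset.card_le_card ?_).trans (Finset.card_image_le (f := P.rank X Z))
      intro k hk
      rw [Finset.mem_range] at hk
      obtain ⟨Y, hY, hYk⟩ := exists_rank (P := P) (X := X) (Z := Z) (k := k) (by omega)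
      exact Finset.mem_image.2 ⟨Y, Finset.mem_filter.2 ⟨mem_H.2 hY, by omega⟩, hYk⟩
    have hbad : (T.filter fun Y => ¬ P.Far (g • Y) X Z).card ≤ 2 * n + 6 := by
      rw [← Finset.card_image_of_injective _ (MulAction.injective g)]
      have e1 := card_exceptions (P := P) (g • X) X (g • Z)
      have e2 := card_exceptions (P := P) X Z (g • Z)
      have hsub : (T.filter fun Y => ¬ P.Far (g • Y) X Z).image (fun Y => g • Y) ⊆
          (P.H X (g • X) ∪ (P.H (g • X) (g • Z) \
            (P.H (g • X) X ∪ P.H X (g • Z)))) ∪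
          (P.H Z (g • Z) ∪ (P.H X (g • Z) \ (P.H X Z ∪ P.H Z (g • Z)))) := by
        intro a ha
        obtain ⟨Y, hY, rfl⟩ := Finset.mem_image.1 ha
        obtain ⟨hYT, hYn⟩ := Finset.mem_filter.1 hY
        have hf := hI.far g (mem_H.1 (Finset.mem_filter.1 hYT).1)
        rw [H_comm (g • X) X]
        simp only [Finset.mem_union, Finset.mem_sdiff, mem_H]
        tauto
      refine (Finset.card_le_card hsub).trans ?_
      have u1 := Finset.card_union_le (P.H X (g • X)) (P.H (g • X) (g • Z) \
            (P.H (g • X) X ∪ P.H X (g • Z)))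
      have u2 := Finset.card_union_le (P.H Z (g • Z))
        (P.H X (g • Z) \ (P.H X Z ∪ P.H Z (g • Z)))
      refine (Finset.card_union_le _ _).trans ?_
      unfold ProjData.rho at mX mZ
      omega
    have hgood : 1 < (T.filter fun Y => P.Far (g • Y) X Z).card := by
      have := Finset.card_filter_add_card_filter_not (s := T) (fun Y => P.Far (g • Y) X Z)
      omega
    obtain ⟨a, ha, b, hb, hab⟩ := Finset.one_lt_card.1 hgood
    have hmemQ : ∀ c ∈ T.filter fun Y => P.Far (g • Y) X Z, c ∈ Q ∧ g • c ∈ Q := by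
      intro c hc
      obtain ⟨hcT, hcf⟩ := Finset.mem_filter.1 hc
      obtain ⟨hcH, hcr⟩ := Finset.mem_filter.1 hcT
      refine ⟨Finset.mem_filter.2 ⟨hcH, by omega⟩, Finset.mem_filter.2 ⟨mem_H.2 hcf, ?_⟩⟩
      have r1 := rank_le_rho hcf
      have r2 := rho_tri (P := P) X (g • X) (g • c)
      have r3 := hI.rho g X c
      have r4 := rho_le_rank (mem_H.1 hcH)
      omega
    refine Finset.mem_coe.2 (Finset.mem_biUnion.2 ⟨((a, b), (g • a, g • b)), ?_, ?_⟩)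
    · simp only [Finset.mem_product]
      exact ⟨⟨(hmemQ a ha).1, (hmemQ b hb).1⟩, (hmemQ a ha).2, (hmemQ b hb).2⟩
    · simp only [S, dif_pos hab, Set.Finite.mem_toFinset]
      exact ⟨rfl, rfl⟩
  refine ⟨(Finset.finite_toSet _).subset hcover, ?_⟩
  refine (Set.ncard_le_ncard hcover (Finset.finite_toSet _)).trans ?_
  rw [Set.ncard_coe_finset]
  refine (Finset.card_biUnion_le_card_mul _ _ _ fun p _ => hS p).trans ?_
  have hpow : ((Q ×ˢ Q) ×ˢ (Q ×ˢ Q)).card ≤ t' ^ 4 := by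
    rw [Finset.card_product, Finset.card_product]
    calc Q.card * Q.card * (Q.card * Q.card) = Q.card ^ 4 := by ring
      _ ≤ t' ^ 4 := Nat.pow_le_pow_left hQcard 4
  exact Nat.mul_le_mul_right _ hpow

theorem Inv.acyl (hI : P.Inv G) {N₀ : ℕ}
    (hN : ∀ a b a' b' : Ω, a ≠ b → {g : G | g • a = a' ∧ g • b = b'}.Finite ∧
      {g : G | g • a = a' ∧ g • b = b'}.ncard ≤ N₀) : AcylindricalAction (P.sact G) := by
  intro ε hε
  refine ⟨(2 * ⌈ε⌉₊ + 8 : ℕ) + 3, (2 * ⌈ε⌉₊ + 8 + ⌈ε⌉₊ + 6) ^ 4 * N₀ + 1, by positivity,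
    by omega, ?_⟩
  intro X Z hXZ
  have hrho : 2 * ⌈ε⌉₊ + 8 ≤ P.rho X Z := by
    have := dist_le_rho X Z
    have : ((2 * ⌈ε⌉₊ + 8 : ℕ) : ℝ) ≤ P.rho X Z := by linarith
    exact_mod_cast this
  have core := hI.acyl_core (Ω := Ω) hN ⌈ε⌉₊ _ _ rfl rfl X Z hrho
  have move : ∀ (g : G) (A : Space P), dist A (P.sact G g A) ≤ ε →
      P.rho A (P.sact G g A) ≤ ⌈ε⌉₊ := by
    intro g A hA
    have h2 : ((P.rho A (P.sact G g A) : ℕ) : ℝ) ≤ ⌈ε⌉₊ :=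
      ((rho_le_dist A (P.sact G g A)).trans hA).trans (Nat.le_ceil ε)
    exact_mod_cast h2
  have hsub : {g : G | dist X (P.sact G g X) ≤ ε ∧ dist Z (P.sact G g Z) ≤ ε} ⊆
      {g : G | P.rho X (P.sact G g X) ≤ ⌈ε⌉₊ ∧ P.rho Z (P.sact G g Z) ≤ ⌈ε⌉₊} :=
    fun g hg => ⟨move g X hg.1, move g Z hg.2⟩
  exact ⟨core.1.subset hsub,
    ((Set.ncard_le_ncard hsub core.1).trans core.2).trans (Nat.le_succ _)⟩

section Nonelem
variable {X₀ : Ω} {w : G}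

/-- Local-to-global: the translates of `X₀` by powers of `w` project uniformly to `X₀`. -/
theorem Inv.forward (hI : P.Inv G) (hw : 22 * P.θ + 20 < P.d X₀ (w⁻¹ • X₀) (w • X₀)) (n : ℕ) :
    w ^ (n + 1) • X₀ ≠ X₀ ∧ P.d X₀ (w • X₀) (w ^ (n + 1) • X₀) ≤ P.θ := by
  induction n with
  | zero =>
    rw [zero_add, pow_one]
    exact ⟨(ne_of_lt (by omega) hw).2.1, P.diag _ _⟩
  | succ n ih =>
    have e1 := hI w X₀ (w • X₀) (w ^ (n + 1) • X₀)
    have e2 := hI w X₀ (w⁻¹ • X₀) (w • X₀)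
    rw [smul_inv_smul] at e2
    rw [← mul_smul w (w ^ (n + 1)), ← pow_succ'] at e1
    have hne : w ^ (n + 1 + 1) • X₀ ≠ w • X₀ := by
      rw [pow_succ', mul_smul]
      exact fun h => ih.1 (MulAction.injective w h)
    have t := P.tri (w • X₀) X₀ (w ^ (n + 1 + 1) • X₀) (w • w • X₀) hne
    rw [P.symm (w • X₀) (w ^ (n + 1 + 1) • X₀)] at t
    have hlt : P.θ < P.d (w • X₀) X₀ (w ^ (n + 1 + 1) • X₀) := by omega
    exact ⟨(ne_of_lt le_rfl hlt).2.2.symm, P.beh _ _ _ hlt⟩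

theorem Inv.far_pow (hI : P.Inv G) (hw : 22 * P.θ + 20 < P.d X₀ (w⁻¹ • X₀) (w • X₀))
    {i n : ℕ} (hi : 0 < i) (hin : i < n) : P.Far (w ^ i • X₀) X₀ (w ^ n • X₀) := by
  have hw' : 22 * P.θ + 20 < P.d X₀ (w⁻¹⁻¹ • X₀) (w⁻¹ • X₀) := by rwa [inv_inv, P.symm]
  obtain ⟨k, rfl⟩ : ∃ k, i = k + 1 := ⟨i - 1, by omega⟩
  obtain ⟨l, rfl⟩ : ∃ l, n = k + 1 + (l + 1) := ⟨n - k - 2, by omega⟩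
  have f1 := hI.forward hw l
  have f2 := hI.forward hw' k
  have t1 := P.tri X₀ (w⁻¹ • X₀) (w⁻¹ ^ (k + 1) • X₀) (w • X₀) f2.1
  have t2 := P.tri X₀ (w⁻¹ ^ (k + 1) • X₀) (w ^ (l + 1) • X₀) (w • X₀) f1.1
  rw [P.symm X₀ (w ^ (l + 1) • X₀)] at t2
  have h : P.Far X₀ (w⁻¹ ^ (k + 1) • X₀) (w ^ (l + 1) • X₀) := far_of_lt (by omega)
  have := hI.far (w ^ (k + 1)) h
  rwa [inv_pow, smul_inv_smul, ← mul_smul, ← pow_add] at this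

theorem Inv.cc_pow (hI : P.Inv G) (hw : 22 * P.θ + 20 < P.d X₀ (w⁻¹ • X₀) (w • X₀))
    {s : G} (hs : s • X₀ = X₀) (n m k : ℕ) (hn : k < n) (hm : k < m) :
    k ≤ P.cc X₀ ((s * w ^ n) • X₀) ((s * w ^ m) • X₀) := by
  classical
  have hinj : Set.InjOn (fun i : ℕ => (s * w ^ (i + 1)) • X₀) (Finset.range k) := by
    have aux : ∀ i j : ℕ, i < j → (s * w ^ (i + 1)) • X₀ ≠ (s * w ^ (j + 1)) • X₀ := by
      intro i j hij h
      rw [mul_smul, mul_smul] at h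
      exact (hI.far_pow hw (i := i + 1) (n := j + 1) (by omega) (by omega)).ne.2.1
        (MulAction.injective s h).symm
    intro i _ j _ hij
    by_contra hne
    rcases Nat.lt_or_gt_of_ne hne with h | h
    · exact aux i j h hij
    · exact aux j i h hij.symm
  rw [← Finset.card_range k, ← Finset.card_image_of_injOn hinj]
  apply Finset.card_le_card
  intro a ha
  obtain ⟨i, hi, rfl⟩ := Finset.mem_image.1 ha
  rw [Finset.mem_range] at hi
  have h1 := hI.far s (hI.far_pow hw (i := i + 1) (n := n) (by omega) (by omega))
  have h2 := hI.far s (hI.far_pow hw (i := i + 1) (n := m) (by omega) (by omega))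
  rw [hs, ← mul_smul, ← mul_smul] at h1 h2
  exact Finset.mem_inter.2 ⟨mem_H.2 h1, mem_H.2 h2⟩

theorem cc_eq_zero {X U V : Ω} (h : P.Far X U V) : P.cc X U V = 0 := by
  classical
  unfold cc
  rw [Finset.card_eq_zero, Finset.eq_empty_iff_forall_notMem]
  intro a ha
  rw [Finset.mem_inter, mem_H, mem_H] at ha
  exact not_far_both h ha.1.symm ha.2

theorem Inv.cc_zero (hI : P.Inv G) (hw : 22 * P.θ + 20 < P.d X₀ (w⁻¹ • X₀) (w • X₀))
    {s s' : G} (hs : s • X₀ = X₀) (hs' : s' • X₀ = X₀)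
    (hss : 22 * P.θ + 20 < P.d X₀ ((s * w) • X₀) ((s' * w) • X₀)) (n : ℕ) :
    P.cc X₀ ((s * w ^ (n + 1)) • X₀) ((s' * w ^ (n + 1)) • X₀) = 0 := by
  apply cc_eq_zero
  apply far_of_lt
  have aux : ∀ s : G, s • X₀ = X₀ → P.d X₀ ((s * w) • X₀) ((s * w ^ (n + 1)) • X₀) ≤ P.θ ∧
      (s * w ^ (n + 1)) • X₀ ≠ X₀ := by
    intro s hs
    have f := hI.forward hw n
    have := hI s X₀ (w • X₀) (w ^ (n + 1) • X₀)
    rw [hs, ← mul_smul, ← mul_smul] at this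
    refine ⟨by omega, fun h => f.1 (MulAction.injective s ?_)⟩
    simp only
    rw [← mul_smul, h, hs]
  have a1 := aux s hs
  have a2 := aux s' hs'
  have t1 := P.tri X₀ ((s * w) • X₀) ((s * w ^ (n + 1)) • X₀) ((s' * w) • X₀) a1.2
  have t2 := P.tri X₀ ((s * w ^ (n + 1)) • X₀) ((s' * w ^ (n + 1)) • X₀) ((s' * w) • X₀) a2.2
  rw [P.symm X₀ ((s' * w ^ (n + 1)) • X₀)] at t2
  omega

theorem Inv.nonelem (hI : P.Inv G) (hw : 22 * P.θ + 20 < P.d X₀ (w⁻¹ • X₀) (w • X₀))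
    {s₁ s₂ s₃ : G} (h₁ : s₁ • X₀ = X₀) (h₂ : s₂ • X₀ = X₀) (h₃ : s₃ • X₀ = X₀)
    (h₁₂ : 22 * P.θ + 20 < P.d X₀ ((s₁ * w) • X₀) ((s₂ * w) • X₀))
    (h₂₃ : 22 * P.θ + 20 < P.d X₀ ((s₂ * w) • X₀) ((s₃ * w) • X₀))
    (h₁₃ : 22 * P.θ + 20 < P.d X₀ ((s₁ * w) • X₀) ((s₃ * w) • X₀)) :
    NonelemAction (S := Space P) (P.sact G) X₀ := by
  have conv : ∀ s : G, s • X₀ = X₀ →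
      ConvToInfty (S := Space P) X₀ fun n => P.sact G (s * w ^ n) X₀ := by
    intro s hs
    refine (convToInfty_iff _ _).2 fun C => ?_
    refine ⟨⌈C + 8⌉₊ + 1, fun m n hm hn => ?_⟩
    have c := hI.cc_pow hw hs m n ⌈C + 8⌉₊ (by omega) (by omega)
    have c' : ((⌈C + 8⌉₊ : ℕ) : ℝ) ≤ P.cc X₀ ((s * w ^ m) • X₀) ((s * w ^ n) • X₀) := by
      exact_mod_cast c
    have g := (abs_le.1 (gprod_cc (P := P) (X₀ : Ω) (P.sact G (s * w ^ m) X₀)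
      (P.sact G (s * w ^ n) X₀))).1
    have hc := Nat.le_ceil (C + 8)
    change -8 ≤ gprod _ _ _ - (P.cc X₀ ((s * w ^ m) • X₀) ((s * w ^ n) • X₀) : ℝ) at g
    linarith
  have neq : ∀ (s s' : G) (hs : s • X₀ = X₀) (hs' : s' • X₀ = X₀),
      22 * P.θ + 20 < P.d X₀ ((s * w) • X₀) ((s' * w) • X₀) →
      (Quot.mk _ ⟨_, conv s hs⟩ : GBoundary (Space P) X₀) ≠ Quot.mk _ ⟨_, conv s' hs'⟩ := by
    intro s s' hs hs' hss hcon
    replace hcon := (bequiv_iff _ _).1 ((mk_eq_iff space_fourPt _ _).1 hcon)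
    obtain ⟨N, hN⟩ := hcon 9
    have h1 := hN (N + 1) (by omega)
    have h2 := hI.cc_zero hw hs hs' hss N
    have g := (abs_le.1 (gprod_cc (P := P) (X₀ : Ω) (P.sact G (s * w ^ (N + 1)) X₀)
      (P.sact G (s' * w ^ (N + 1)) X₀))).2
    change gprod _ _ _ - (P.cc X₀ ((s * w ^ (N + 1)) • X₀) ((s' * w ^ (N + 1)) • X₀) : ℝ) ≤ 8 at g
    rw [h2] at g
    change 9 ≤ gprod _ (P.sact G (s * w ^ (N + 1)) X₀) (P.sact G (s' * w ^ (N + 1)) X₀) at h1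
    push_cast at g
    linarith
  have mem : ∀ (s : G) (hs : s • X₀ = X₀),
      (Quot.mk _ ⟨_, conv s hs⟩ : GBoundary (Space P) X₀) ∈ limitSet (S := Space P) (P.sact G) X₀ :=
    fun s hs => ⟨X₀, fun n => s * w ^ n, conv s hs, rfl⟩
  exact ⟨Quot.mk _ ⟨_, conv s₁ h₁⟩, Quot.mk _ ⟨_, conv s₂ h₂⟩, Quot.mk _ ⟨_, conv s₃ h₃⟩,
    mem s₁ h₁, mem s₂ h₂, mem s₃ h₃, neq _ _ h₁ h₂ h₁₂, neq _ _ h₂ h₃ h₂₃,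
    neq _ _ h₁ h₃ h₁₃⟩

end Nonelem

end Action

/-- A group acting on projection data with uniformly finite pair stabilisers and a ping-pong
configuration is acylindrically hyperbolic. -/
theorem Inv.ah {Ω : Type} {P : ProjData Ω} {G : Type*} [Group G] [MulAction G Ω]
    (hI : P.Inv G) {N₀ : ℕ}
    (hN : ∀ a b a' b' : Ω, a ≠ b → {g : G | g • a = a' ∧ g • b = b'}.Finite ∧
      {g : G | g • a = a' ∧ g • b = b'}.ncard ≤ N₀)
    {X₀ : Ω} {w : G} (hw : 22 * P.θ + 20 < P.d X₀ (w⁻¹ • X₀) (w • X₀))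
    {s₁ s₂ s₃ : G} (h₁ : s₁ • X₀ = X₀) (h₂ : s₂ • X₀ = X₀) (h₃ : s₃ • X₀ = X₀)
    (h₁₂ : 22 * P.θ + 20 < P.d X₀ ((s₁ * w) • X₀) ((s₂ * w) • X₀))
    (h₂₃ : 22 * P.θ + 20 < P.d X₀ ((s₂ * w) • X₀) ((s₃ * w) • X₀))
    (h₁₃ : 22 * P.θ + 20 < P.d X₀ ((s₁ * w) • X₀) ((s₃ * w) • X₀)) :
    AcylindricallyHyperbolic G :=
  ah_of_rough (X := Space P) hI.isometric space_fourPt space_rough (by norm_num) (hI.acyl hN)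
    X₀ (hI.nonelem hw h₁ h₂ h₃ h₁₂ h₂₃ h₁₃)

end ProjData
end AcylDyn

/-! ### Frames: level sets of a north–south element -/

namespace AcylDyn

/-- A height filtration of `M` adapted to a north–south element `g`: `V c` is the set of points of
height at least `c`, the element `g` raises heights by one, the repelling point `x` has height
`-∞`, the attracting point `y` has height `+∞`, and `p` is a point of height `0`. -/
structure Frame (G M : Type*) [Group G] [MulAction G M] [TopologicalSpace M] where
  g : G
  x : M
  y : M
  p : M
  V : ℤ → Set M
  anti : ∀ c d, c ≤ d → V d ⊆ V c
  shift : ∀ (n c : ℤ) (z : M), g ^ n • z ∈ V (c + n) ↔ z ∈ V c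
  x_mem : ∀ c, x ∉ V c
  y_mem : ∀ c, y ∈ V c
  isOpen : ∀ c, IsOpen (V c)
  isClosed : ∀ c, IsClosed (V c)
  basis_x : ∀ O : Set M, IsOpen O → x ∈ O → ∃ c, (V c)ᶜ ⊆ O
  basis_y : ∀ O : Set M, IsOpen O → y ∈ O → ∃ c, V c ⊆ O
  gx : g • x = x
  gy : g • y = y
  p_mem : p ∈ V 0
  p_notMem : p ∉ V 1

namespace Frame
variable {G M : Type*} [Group G] [MulAction G M] [TopologicalSpace M]

/-- Points of height less than `c`. -/
def L (A : Frame G M) (c : ℤ) : Set M := (A.V c)ᶜ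

/-- Points of height greater than `c`. -/
def R (A : Frame G M) (c : ℤ) : Set M := A.V (c + 1)

/-- The frame of the inverse element, with reversed heights. -/
def rev (A : Frame G M) : Frame G M where
  g := A.g⁻¹
  x := A.y
  y := A.x
  p := A.p
  V c := (A.V (1 - c))ᶜ
  anti c d h := Set.compl_subset_compl.2 (A.anti _ _ (by omega))
  shift n c z := by
    have := A.shift (-n) (1 - c) z
    rw [Set.mem_compl_iff, Set.mem_compl_iff, ← this, inv_zpow', sub_add_eq_sub_sub,
      sub_eq_add_neg (1 - c)]
  x_mem c := by simpa using A.y_mem _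
  y_mem c := A.x_mem _
  isOpen c := (A.isClosed _).isOpen_compl
  isClosed c := (A.isOpen _).isClosed_compl
  basis_x O hO h := by
    obtain ⟨c, hc⟩ := A.basis_y O hO h
    exact ⟨1 - c, by simpa using hc⟩
  basis_y O hO h := by
    obtain ⟨c, hc⟩ := A.basis_x O hO h
    exact ⟨1 - c, by simpa using hc⟩
  gx := inv_smul_eq_iff.2 A.gy.symm
  gy := inv_smul_eq_iff.2 A.gx.symm
  p_mem := by simpa using A.p_notMem
  p_notMem := by simpa using A.p_mem

variable (A B : Frame G M)

theorem rev_L (c : ℤ) : A.rev.L c = A.R (-c) := by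
  unfold L R rev; rw [compl_compl]; congr 1; ring

theorem rev_R (c : ℤ) : A.rev.R c = A.L (-c) := by
  unfold L R rev; simp

variable {A}

theorem mem_L {c : ℤ} {z : M} : z ∈ A.L c ↔ z ∉ A.V c := Iff.rfl

theorem mem_R {c : ℤ} {z : M} : z ∈ A.R c ↔ z ∈ A.V (c + 1) := Iff.rfl

theorem x_mem_L (c : ℤ) : A.x ∈ A.L c := A.x_mem c

theorem y_mem_R (c : ℤ) : A.y ∈ A.R c := A.y_mem _

theorem L_mono {c d : ℤ} (h : c ≤ d) : A.L c ⊆ A.L d := Set.compl_subset_compl.2 (A.anti _ _ h)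

theorem R_anti {c d : ℤ} (h : c ≤ d) : A.R d ⊆ A.R c := A.anti _ _ (by omega)

theorem not_mem_L {c : ℤ} {z : M} : z ∉ A.L c ↔ z ∈ A.R (c - 1) := by
  rw [mem_L, not_not, mem_R, sub_add_cancel]

theorem not_mem_R {c : ℤ} {z : M} : z ∉ A.R c ↔ z ∈ A.L (c + 1) := Iff.rfl

theorem isOpen_L (c : ℤ) : IsOpen (A.L c) := (A.isClosed _).isOpen_compl

theorem isOpen_R (c : ℤ) : IsOpen (A.R c) := A.isOpen _

theorem zpow_mem_L (n c : ℤ) (z : M) : A.g ^ n • z ∈ A.L c ↔ z ∈ A.L (c - n) := by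
  have := A.shift n (c - n) z
  rw [sub_add_cancel] at this
  rw [mem_L, mem_L, this]

theorem zpow_mem_R (n c : ℤ) (z : M) : A.g ^ n • z ∈ A.R c ↔ z ∈ A.R (c - n) := by
  have := A.shift n (c - n + 1) z
  rw [mem_R, mem_R, ← this]
  rw [show c - n + 1 + n = c + 1 by ring]

theorem zpow_x (n : ℤ) : A.g ^ n • A.x = A.x := by
  have h : A.g ∈ MulAction.stabilizer G A.x := A.gx
  exact (MulAction.stabilizer G A.x).zpow_mem h n

theorem zpow_y (n : ℤ) : A.g ^ n • A.y = A.y := by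
  have h : A.g ∈ MulAction.stabilizer G A.y := A.gy
  exact (MulAction.stabilizer G A.y).zpow_mem h n

theorem zpow_p_ne_x (n : ℤ) : A.g ^ n • A.p ≠ A.x := by
  intro h
  have := A.shift n 0 A.p
  rw [h] at this
  exact A.x_mem _ (this.2 A.p_mem)

theorem zpow_p_ne_y (n : ℤ) : A.g ^ n • A.p ≠ A.y := by
  intro h
  have := A.shift n 1 A.p
  rw [h] at this
  exact A.p_notMem (this.1 (A.y_mem _))

theorem zpow_p_L {n c : ℤ} (h : n < c) : A.g ^ n • A.p ∈ A.L c := by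
  rw [zpow_mem_L]
  exact L_mono (by omega) A.p_notMem

theorem zpow_p_R {n c : ℤ} (h : c < n) : A.g ^ n • A.p ∈ A.R c := by
  rw [zpow_mem_R]
  exact A.anti _ _ (by omega) A.p_mem

theorem zpow_inj {m n : ℤ} (h : A.g ^ m = A.g ^ n) : m = n := by
  by_contra hne
  rcases lt_or_gt_of_ne hne with hlt | hlt
  · have h1 : A.g ^ m • A.p ∈ A.L n := zpow_p_L hlt
    rw [h] at h1
    have h2 : A.g ^ n • A.p ∈ A.R (n - 1) := zpow_p_R (by omega)
    exact not_mem_L.2 h2 h1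
  · have h1 : A.g ^ n • A.p ∈ A.L m := zpow_p_L hlt
    rw [← h] at h1
    have h2 : A.g ^ m • A.p ∈ A.R (m - 1) := zpow_p_R (by omega)
    exact not_mem_L.2 h2 h1

theorem zpow_ne_x {z : M} (hx : z ≠ A.x) (n : ℤ) : A.g ^ n • z ≠ A.x := by
  intro h
  rw [← zpow_x (A := A) n] at h
  exact hx (MulAction.injective _ h)

theorem zpow_ne_y {z : M} (hy : z ≠ A.y) (n : ℤ) : A.g ^ n • z ≠ A.y := by
  intro h
  rw [← zpow_y (A := A) n] at h
  exact hy (MulAction.injective _ h)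

section Phi
variable [T1Space M]

theorem exists_mem {z : M} (h : z ≠ A.x) : ∃ c, z ∈ A.V c := by
  obtain ⟨c, hc⟩ := A.basis_x {z}ᶜ isOpen_compl_singleton (fun h' => h h'.symm)
  exact ⟨c, by_contra fun hn => hc hn rfl⟩

theorem exists_notMem {z : M} (h : z ≠ A.y) : ∃ c, z ∉ A.V c := by
  obtain ⟨c, hc⟩ := A.basis_y {z}ᶜ isOpen_compl_singleton (fun h' => h h'.symm)
  exact ⟨c, fun hn => hc hn rfl⟩

theorem exists_level {z : M} (hx : z ≠ A.x) (hy : z ≠ A.y) :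
    ∃ k : ℤ, ∀ c, z ∈ A.V c ↔ c ≤ k := by
  obtain ⟨a, ha⟩ := exists_mem (A := A) hx
  obtain ⟨b, hb⟩ := exists_notMem (A := A) hy
  obtain ⟨k, hk, hk'⟩ := Int.exists_greatest_of_bdd (P := fun c => z ∈ A.V c)
    ⟨b, fun c hc => by
      by_contra hcb
      exact hb (A.anti _ _ (by omega) hc)⟩ ⟨a, ha⟩
  exact ⟨k, fun c => ⟨hk' c, fun h => A.anti _ _ h hk⟩⟩

variable (A) in
open Classical in
/-- The height of a point, with junk value `0` at the two fixed points. -/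
noncomputable def φ (z : M) : ℤ := if h : ∃ k : ℤ, ∀ c, z ∈ A.V c ↔ c ≤ k then h.choose else 0

theorem mem_V_iff {z : M} (hx : z ≠ A.x) (hy : z ≠ A.y) (c : ℤ) : z ∈ A.V c ↔ c ≤ A.φ z := by
  have h := exists_level hx hy
  unfold φ
  rw [dif_pos h]
  exact h.choose_spec c

theorem mem_L_iff {z : M} (hx : z ≠ A.x) (hy : z ≠ A.y) (c : ℤ) : z ∈ A.L c ↔ A.φ z < c := by
  rw [mem_L, mem_V_iff hx hy, not_le]

theorem mem_R_iff {z : M} (hx : z ≠ A.x) (hy : z ≠ A.y) (c : ℤ) : z ∈ A.R c ↔ c < A.φ z := by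
  rw [mem_R, mem_V_iff hx hy, Int.add_one_le_iff]

theorem φ_zpow {z : M} (hx : z ≠ A.x) (hy : z ≠ A.y) (n : ℤ) :
    A.φ (A.g ^ n • z) = A.φ z + n := by
  have key : ∀ c, c + n ≤ A.φ (A.g ^ n • z) ↔ c ≤ A.φ z := by
    intro c
    rw [← mem_V_iff (zpow_ne_x hx n) (zpow_ne_y hy n), A.shift, mem_V_iff hx hy]
  have h1 := (key (A.φ z)).2 le_rfl
  have h2 := (key (A.φ (A.g ^ n • z) - n)).1 (by omega)
  omega

theorem fixed_of_zpow {z : M} {n : ℤ} (hn : n ≠ 0) (h : A.g ^ n • z = z) : z = A.x ∨ z = A.y := by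
  by_contra hc
  push Not at hc
  have := φ_zpow hc.1 hc.2 n
  rw [h] at this
  omega

end Phi

/-! ### Crossing elements -/

/-- Condition (F): only finitely many elements move two given pairs far to the two sides. -/
def FinCross (A : Frame G M) (m : ℤ) : Prop :=
  ∀ a₁ a₂ b₁ b₂ : M, a₁ ≠ a₂ → b₁ ≠ b₂ →
    {f : G | f • a₁ ∈ A.L 0 ∧ f • a₂ ∈ A.L 0 ∧ f • b₁ ∈ A.R m ∧ f • b₂ ∈ A.R m}.Finite

/-- Condition (N), nesting: in the coordinates given by the heights of `z` and `f • z`, the four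
quadrants cut out by two strips of width `m` are never all occupied. -/
def Nested (A B : Frame G M) (m : ℤ) : Prop :=
  ∀ (f : G) (c₁ c₂ : ℤ) (z₁ z₂ z₃ z₄ : M),
    z₁ ∈ A.L c₂ → f • z₁ ∈ B.L c₁ → z₂ ∈ A.R (c₂ + m) → f • z₂ ∈ B.L c₁ →
    z₃ ∈ A.L c₂ → f • z₃ ∈ B.R (c₁ + m) → z₄ ∈ A.R (c₂ + m) → f • z₄ ∈ B.R (c₁ + m) → False

theorem FinCross.rev {A : Frame G M} {m : ℤ} (h : A.FinCross m) : A.rev.FinCross m := by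
  intro a₁ a₂ b₁ b₂ ha hb
  have hf := (h b₁ b₂ a₁ a₂ hb ha).preimage
    (f := fun f : G => A.g ^ m * f) (mul_right_injective _).injOn
  refine hf.subset ?_
  rintro f ⟨h1, h2, h3, h4⟩
  rw [rev_L, neg_zero] at h1 h2
  rw [rev_R] at h3 h4
  refine ⟨?_, ?_, ?_, ?_⟩ <;> rw [mul_smul]
  · rw [zpow_mem_L]; simpa using h3
  · rw [zpow_mem_L]; simpa using h4
  · rw [zpow_mem_R]; simpa using h1
  · rw [zpow_mem_R]; simpa using h2

theorem Nested.rev {A B : Frame G M} {m : ℤ} (h : Nested A B m) : Nested A.rev B m := by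
  intro f c₁ c₂ z₁ z₂ z₃ z₄ h1 h1' h2 h2' h3 h3' h4 h4'
  rw [rev_L] at h1 h3
  rw [rev_R] at h2 h4
  have e : -c₂ = -(c₂ + m) + m := by ring
  rw [e] at h1 h3
  exact h f c₁ (-(c₂ + m)) z₂ z₁ z₄ z₃ h2 h2' h1 h1' h4 h4' h3 h3'

/-- An element carrying the axis of `A` across a long strip of `B` lies, up to a power of `A.g`,
in a finite set. Either the image of the orbit of `A.p` jumps across the strip `[0, m]` in at most
`J` steps, or it stalls there; in the latter case nesting forces the inverse element, multiplied by
many different powers of `A.g`, to cross a strip, which happens finitely often. -/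
theorem star [ContinuousConstSMul G M] {A B : Frame G M} {m : ℤ} (hm : 0 ≤ m) (hA : A.FinCross m)
    (hB : B.FinCross m) (hAB : Nested A B m) :
    ∃ Ψ : Set G, Ψ.Finite ∧ ∀ f : G, f • A.x ∈ B.L (-(m + 1)) → f • A.y ∈ B.R (2 * m + 1) →
      ∃ j : ℤ, f * A.g ^ j ∈ Ψ := by
  classical
  set Φ : Set G := {k : G | k • B.x ∈ A.L 0 ∧ k • B.g ^ (-(m + 2)) • B.p ∈ A.L 0 ∧
    k • B.g ^ (2 * m + 2) • B.p ∈ A.R m ∧ k • B.y ∈ A.R m} with hΦ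
  have hΦfin : Φ.Finite := hA _ _ _ _ (zpow_p_ne_x _).symm (zpow_p_ne_y _)
  set J : ℤ := Φ.ncard + 3 * m + 5 with hJ
  let Ψ : ℤ → Set G := fun j => {k : G | k • A.x ∈ B.L 0 ∧ k • A.p ∈ B.L 0 ∧
    k • A.g ^ j • A.p ∈ B.R m ∧ k • A.y ∈ B.R m}
  have hpx : A.p ≠ A.x := by simpa using zpow_p_ne_x (A := A) 0
  have hΨ : ∀ j, (Ψ j).Finite := fun j => hB _ _ _ _ hpx.symm (zpow_p_ne_y _)
  refine ⟨⋃ j ∈ Set.Icc 1 J, Ψ j, (Set.finite_Icc 1 J).biUnion fun j _ => hΨ j, ?_⟩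
  intro f₀ hfx hfy
  -- the last point of the orbit whose image lies below the strip
  obtain ⟨j₀, hj₀, hmax⟩ : ∃ j₀ : ℤ, f₀ • A.g ^ j₀ • A.p ∈ B.L 0 ∧
      ∀ j, f₀ • A.g ^ j • A.p ∈ B.L 0 → j ≤ j₀ := by
    apply Int.exists_greatest_of_bdd
    · obtain ⟨c, hc⟩ := A.basis_y ((fun z => f₀ • z) ⁻¹' B.R (2 * m + 1))
        ((isOpen_R _).preimage (continuous_const_smul f₀)) hfy
      refine ⟨c, fun j hj => ?_⟩
      by_contra hcj
      have h1 : f₀ • A.g ^ j • A.p ∈ B.R (2 * m + 1) := hc (by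
        have := zpow_p_R (A := A) (n := j) (c := c - 1) (by omega)
        rwa [mem_R, sub_add_cancel] at this)
      exact not_mem_L.2 (R_anti (by omega) h1) hj
    · obtain ⟨c, hc⟩ := A.basis_x ((fun z => f₀ • z) ⁻¹' B.L (-(m + 1)))
        ((isOpen_L _).preimage (continuous_const_smul f₀)) hfx
      exact ⟨c - 1, L_mono (by omega) (hc (zpow_p_L (A := A) (n := c - 1) (c := c) (by omega)))⟩
  refine ⟨j₀, ?_⟩
  -- normalise so that `j₀ = 0`
  obtain ⟨f, hf⟩ : ∃ f, f = f₀ * A.g ^ j₀ := ⟨_, rfl⟩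
  rw [← hf]
  have hx : f • A.x ∈ B.L (-(m + 1)) := by rw [hf, mul_smul, zpow_x]; exact hfx
  have hy : f • A.y ∈ B.R (2 * m + 1) := by rw [hf, mul_smul, zpow_y]; exact hfy
  have hp : f • A.p ∈ B.L 0 := by rw [hf, mul_smul]; exact hj₀
  have hpos : ∀ j : ℤ, 0 < j → f • A.g ^ j • A.p ∉ B.L 0 := by
    intro j hj hc
    rw [hf, mul_smul, ← mul_smul (A.g ^ j₀), ← zpow_add] at hc
    have := hmax _ hc
    omega
  clear_value J
  clear hmax hj₀ hfx hfy hf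
  by_contra hno
  have stall : ∀ j : ℤ, 1 ≤ j → j ≤ J → f • A.g ^ j • A.p ∉ B.R m := by
    intro j h1 h2 hc
    exact hno (Set.mem_biUnion (Set.mem_Icc.2 ⟨h1, h2⟩)
      ⟨L_mono (by omega) hx, hp, hc, R_anti (by omega) hy⟩)
  have low : ∀ z : M, f • z ∈ B.L (-(m + 1)) → z ∉ A.R (2 + m) := by
    intro z hz hz'
    have q := hpos 1 (by omega)
    rw [not_mem_L] at q
    exact hAB f (-(m + 1)) 2 A.x z (A.g ^ (1 : ℤ) • A.p) A.y (x_mem_L _) hx hz' hz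
      (zpow_p_L (by omega)) (R_anti (by omega) q) (y_mem_R _) (R_anti (by omega) hy)
  have high : ∀ z : M, f • z ∈ B.R (2 * m + 1) → z ∉ A.L (J - m - 1) := by
    intro z hz hz'
    have q := stall J (by omega) le_rfl
    rw [not_mem_R] at q
    exact hAB f (m + 1) (J - m - 1) A.x (A.g ^ J • A.p) z A.y (x_mem_L _) (L_mono (by omega) hx)
      (zpow_p_R (by omega)) (L_mono (by omega) q) hz' (R_anti (by omega) hz) (y_mem_R _)
      (R_anti (by omega) hy)
  have lowB : ∀ z : M, z ∈ B.L (-(m + 1)) → f⁻¹ • z ∈ A.L (3 + m) := by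
    intro z hz
    have := low (f⁻¹ • z) (by rwa [smul_inv_smul])
    rw [not_mem_R] at this
    exact L_mono (by omega) this
  have highB : ∀ z : M, z ∈ B.R (2 * m + 1) → f⁻¹ • z ∈ A.R (J - m - 2) := by
    intro z hz
    have := high (f⁻¹ • z) (by rwa [smul_inv_smul])
    rw [not_mem_L] at this
    exact R_anti (by omega) this
  have hsub : (fun j : ℤ => A.g ^ (-j) * f⁻¹) '' (Set.Icc (m + 3) (J - 2 * m - 2)) ⊆ Φ := by
    rintro _ ⟨j, hj, rfl⟩
    rw [Set.mem_Icc] at hj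
    refine ⟨?_, ?_, ?_, ?_⟩ <;> simp only [mul_smul (A.g ^ (-j))]
    · rw [zpow_mem_L]; exact L_mono (by omega) (lowB _ (x_mem_L _))
    · rw [zpow_mem_L]; exact L_mono (by omega) (lowB _ (zpow_p_L (by omega)))
    · rw [zpow_mem_R]; exact R_anti (by omega) (highB _ (zpow_p_R (by omega)))
    · rw [zpow_mem_R]; exact R_anti (by omega) (highB _ (y_mem_R _))
  have hcard := Set.ncard_le_ncard hsub hΦfin
  rw [Set.ncard_image_of_injective] at hcard
  · rw [← Finset.coe_Icc, Set.ncard_coe_finset, Int.card_Icc] at hcard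
    omega
  · intro i j hij
    have := zpow_inj (mul_right_cancel hij)
    omega

/-- Conjugating some nonzero power of `A.g` to a power of `B.g` forces `f` to match the axes. -/
theorem axes_of_conj [T1Space M] {A B : Frame G M} {f : G} {a b : ℤ} (hb : b ≠ 0)
    (h : f * A.g ^ a = B.g ^ b * f) :
    (∀ z, z = A.x ∨ z = A.y → f • z = B.x ∨ f • z = B.y) := by
  intro z hz
  apply fixed_of_zpow hb
  rw [← mul_smul, ← h, mul_smul]
  rcases hz with rfl | rfl
  · rw [zpow_x]
  · rw [zpow_y]

/-- An element whose image of the axis of `A` crosses a sufficiently long strip of `B` matches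
powers of the two north–south elements. -/
theorem cross [ContinuousConstSMul G M] {A B : Frame G M} {m : ℤ} (hm : 0 ≤ m)
    (hA : A.FinCross m) (hB : B.FinCross m) (hAB : Nested A B m) :
    ∃ N : ℤ, 0 ≤ N ∧ ∀ (f : G) (i : ℤ), f • A.x ∈ B.L i → f • A.y ∈ B.R (i + N) →
      ∃ a b : ℤ, a ≠ 0 ∧ b ≠ 0 ∧ f * A.g ^ a = B.g ^ b * f := by
  classical
  obtain ⟨Ψ, hΨ, hstar⟩ := star hm hA hB hAB
  refine ⟨Ψ.ncard + 3 * m + 2, by omega, fun f i hx hy => ?_⟩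
  have H : ∀ k ∈ Finset.Icc (0 : ℤ) Ψ.ncard, ∃ j : ℤ,
      B.g ^ (-(i + m + 1 + k)) * f * A.g ^ j ∈ hΨ.toFinset := by
    intro k hk
    rw [Finset.mem_Icc] at hk
    simp only [Set.Finite.mem_toFinset]
    apply hstar
    · rw [mul_smul, zpow_mem_L]; exact L_mono (by omega) hx
    · rw [mul_smul, zpow_mem_R]; exact R_anti (by omega) hy
  choose! j hj using H
  obtain ⟨k, hk, l, hl, hkl, he⟩ := Finset.exists_ne_map_eq_of_card_lt_of_maps_to
    (s := Finset.Icc (0 : ℤ) Ψ.ncard) (t := hΨ.toFinset)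
    (f := fun k => B.g ^ (-(i + m + 1 + k)) * f * A.g ^ j k)
    (by rw [Int.card_Icc, ← Set.ncard_eq_toFinset_card _ hΨ]; omega) hj
  have e : f * A.g ^ (j k - j l) = B.g ^ (k - l) * f := by
    have h1 : B.g ^ (i + m + 1 + k) * (B.g ^ (-(i + m + 1 + k)) * f * A.g ^ j k) * A.g ^ (-j l) =
        B.g ^ (i + m + 1 + k) * (B.g ^ (-(i + m + 1 + l)) * f * A.g ^ j l) * A.g ^ (-j l) := by
      rw [show _ = _ from he]
    have h2 : B.g ^ (k - l) = B.g ^ (i + m + 1 + k) * B.g ^ (-(i + m + 1 + l)) := by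
      rw [← zpow_add]; congr 1; ring
    rw [h2, sub_eq_add_neg, zpow_add]
    generalize i + m + 1 + k = u at h1 ⊢
    generalize i + m + 1 + l = v at h1 ⊢
    simp only [zpow_neg, mul_assoc, mul_inv_cancel_left, mul_inv_cancel, mul_one] at h1 ⊢
    exact h1
  refine ⟨j k - j l, k - l, fun h0 => ?_, by omega, e⟩
  rw [h0, zpow_zero, mul_one] at e
  have h3 : B.g ^ (k - l) = B.g ^ (0 : ℤ) := by
    rw [zpow_zero]
    exact (mul_eq_right.1 e.symm)
  have := zpow_inj h3
  omega

end Frame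
end AcylDyn

/-! ### Translates of the axis -/

namespace AcylDyn
namespace Frame
open scoped Pointwise
variable {G M : Type*} [Group G] [MulAction G M] [TopologicalSpace M]

/-- The pair of fixed points of the north–south element. -/
def axis (A : Frame G M) : Set M := {A.x, A.y}

variable {A : Frame G M}

theorem mem_axis {z : M} : z ∈ A.axis ↔ z = A.x ∨ z = A.y := Iff.rfl

theorem x_axis : A.x ∈ A.axis := Or.inl rfl

theorem y_axis : A.y ∈ A.axis := Or.inr rfl

theorem x_ne_y : A.x ≠ A.y := fun h => A.x_mem 0 (h ▸ A.y_mem 0)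

theorem smul_axis (f : G) : f • A.axis = {f • A.x, f • A.y} := by
  unfold axis
  rw [Set.smul_set_insert, Set.smul_set_singleton]

theorem smul_axis_eq {f : G} (hx : f • A.x ∈ A.axis) (hy : f • A.y ∈ A.axis) :
    f • A.axis = A.axis := by
  have hne : f • A.x ≠ f • A.y := fun h => x_ne_y (MulAction.injective f h)
  rw [smul_axis]
  rcases hx with hx | hx <;> rcases hy with hy | hy <;> rw [hx, hy] at hne ⊢
  · exact absurd rfl hne
  · rfl
  · exact Set.pair_comm _ _
  · exact absurd rfl hne

theorem zpow_axis (n : ℤ) : A.g ^ n • A.axis = A.axis := by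
  rw [smul_axis, zpow_x, zpow_y]; rfl

theorem exists_bound [T1Space M] [ContinuousConstSMul G M] {m : ℤ} (hm : 0 ≤ m)
    (hF : A.FinCross m) (hN : Nested A A m) :
    ∃ K : ℤ, 0 ≤ K ∧ ∀ f : G, f • A.axis ≠ A.axis →
      (∀ z ∈ A.axis, f • z ≠ A.x ∧ f • z ≠ A.y) ∧
      |A.φ (f • A.x) - A.φ (f • A.y)| ≤ K := by
  obtain ⟨N₁, h₁, c₁⟩ := cross hm hF hF hN
  obtain ⟨N₂, h₂, c₂⟩ := cross hm hF.rev hF hN.rev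
  have d₁ : ∀ f : G, f • A.axis ≠ A.axis → ∀ i, f • A.x ∈ A.L i → f • A.y ∈ A.R (i + N₁) →
      False := by
    intro f hf i hx hy
    obtain ⟨a, b, _, hb, e⟩ := c₁ f i hx hy
    exact hf (smul_axis_eq (axes_of_conj hb e _ (Or.inl rfl)) (axes_of_conj hb e _ (Or.inr rfl)))
  have d₂ : ∀ f : G, f • A.axis ≠ A.axis → ∀ i, f • A.y ∈ A.L i → f • A.x ∈ A.R (i + N₂) →
      False := by
    intro f hf i hx hy
    obtain ⟨a, b, _, hb, e⟩ := c₂ f i hx hy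
    exact hf (smul_axis_eq (axes_of_conj hb e _ (Or.inr rfl)) (axes_of_conj hb e _ (Or.inl rfl)))
  refine ⟨N₁ + N₂ + 1, by omega, fun f hf => ?_⟩
  have hne : f • A.x ≠ f • A.y := fun h => x_ne_y (MulAction.injective f h)
  have hx : f • A.x ≠ A.x := by
    intro h
    have hyx : f • A.y ≠ A.x := fun h' => hne (h.trans h'.symm)
    have hyy : f • A.y ≠ A.y := fun h' => hf (smul_axis_eq (Or.inl h) (Or.inr h'))
    apply d₁ f hf (A.φ (f • A.y) - N₁ - 1) (by rw [h]; exact x_mem_L _)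
    rw [mem_R_iff hyx hyy]; omega
  have hxy : f • A.x ≠ A.y := by
    intro h
    have hyy : f • A.y ≠ A.y := fun h' => hne (h.trans h'.symm)
    have hyx : f • A.y ≠ A.x := fun h' => hf (smul_axis_eq (Or.inr h) (Or.inl h'))
    apply d₂ f hf (A.φ (f • A.y) + 1) _ (by rw [h]; exact y_mem_R _)
    rw [mem_L_iff hyx hyy]; omega
  have hyx : f • A.y ≠ A.x := by
    intro h
    apply d₂ f hf (A.φ (f • A.x) - N₂ - 1) (by rw [h]; exact x_mem_L _)
    rw [mem_R_iff hx hxy]; omega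
  have hyy : f • A.y ≠ A.y := by
    intro h
    apply d₁ f hf (A.φ (f • A.x) + 1) _ (by rw [h]; exact y_mem_R _)
    rw [mem_L_iff hx hxy]; omega
  refine ⟨?_, ?_⟩
  · rintro z (rfl | rfl)
    exacts [⟨hx, hxy⟩, ⟨hyx, hyy⟩]
  · by_contra hc
    rw [abs_le] at hc
    rcases lt_or_ge (A.φ (f • A.x)) (A.φ (f • A.y)) with h | h
    · apply d₁ f hf (A.φ (f • A.x) + 1)
      · rw [mem_L_iff hx hxy]; omega
      · rw [mem_R_iff hyx hyy]; omega
    · apply d₂ f hf (A.φ (f • A.y) + 1)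
      · rw [mem_L_iff hyx hyy]; omega
      · rw [mem_R_iff hx hxy]; omega

/-- Elements matching the end points of two frames form finitely many cosets of `⟨B.g⟩`. -/
theorem finite_cosets_aux [ContinuousConstSMul G M] {A B : Frame G M} {m : ℤ} (hm : 0 ≤ m)
    (hA : A.FinCross m) (hB : B.FinCross m) (hAB : Nested A B m) :
    ∃ S : Set G, S.Finite ∧ ∀ f : G, f • A.x = B.x → f • A.y = B.y →
      ∃ i : ℤ, ∃ s ∈ S, f = B.g ^ i * s := by
  classical
  obtain ⟨Ψ, hΨ, hstar⟩ := star hm hA hB hAB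
  obtain ⟨N, _, hcross⟩ := cross hm hA hB hAB
  have H : ∀ ψ : G, ψ • A.x = B.x ∧ ψ • A.y = B.y →
      ∃ a b : ℤ, a ≠ 0 ∧ ψ * A.g ^ a = B.g ^ b * ψ := by
    rintro ψ ⟨hx, hy⟩
    obtain ⟨a, b, ha, _, e⟩ := hcross ψ 0 (by rw [hx]; exact x_mem_L _)
      (by rw [hy]; exact y_mem_R _)
    exact ⟨a, b, ha, e⟩
  choose! a b ha e using H
  refine ⟨⋃ ψ ∈ Ψ, (fun r : ℤ => ψ * A.g ^ (-r)) '' Set.Icc 0 |a ψ|,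
    hΨ.biUnion fun ψ _ => (Set.finite_Icc _ _).image _, ?_⟩
  intro f hx hy
  obtain ⟨j, hj⟩ := hstar f (by rw [hx]; exact x_mem_L _) (by rw [hy]; exact y_mem_R _)
  obtain ⟨ψ, hψ⟩ : ∃ ψ, ψ = f * A.g ^ j := ⟨_, rfl⟩
  have hf : f = ψ * A.g ^ (-j) := by rw [hψ, mul_assoc, ← zpow_add]; simp
  rw [← hψ] at hj
  have hψE : ψ • A.x = B.x ∧ ψ • A.y = B.y := by
    rw [hψ, mul_smul, mul_smul, zpow_x, zpow_y]; exact ⟨hx, hy⟩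
  have h0 := ha ψ hψE
  have hs : SemiconjBy ψ (A.g ^ a ψ) (B.g ^ b ψ) := e ψ hψE
  have hs' := hs.zpow_right (-(j / a ψ))
  refine ⟨b ψ * (-(j / a ψ)), ψ * A.g ^ (-(j % a ψ)), ?_, ?_⟩
  · refine Set.mem_biUnion hj ⟨j % a ψ, ?_, rfl⟩
    exact ⟨Int.emod_nonneg _ h0, (Int.emod_lt_abs _ h0).le⟩
  · rw [zpow_mul, ← mul_assoc, ← hs'.eq, mul_assoc, ← zpow_mul, ← zpow_add, hf]
    congr 2
    have := Int.mul_ediv_add_emod j (a ψ)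
    rw [mul_neg]; omega

theorem finite_cosets [ContinuousConstSMul G M] {m : ℤ} (hm : 0 ≤ m)
    (hF : A.FinCross m) (hN : Nested A A m) :
    ∃ S : Set G, S.Finite ∧ ∀ f : G, f • A.axis = A.axis → ∃ i : ℤ, ∃ s ∈ S, f = A.g ^ i * s := by
  obtain ⟨S₁, h₁, c₁⟩ := finite_cosets_aux hm hF hF hN
  obtain ⟨S₂, h₂, c₂⟩ := finite_cosets_aux hm hF.rev hF hN.rev
  refine ⟨S₁ ∪ S₂, h₁.union h₂, fun f hf => ?_⟩
  have hne : f • A.x ≠ f • A.y := fun h => x_ne_y (MulAction.injective f h)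
  have hx : f • A.x ∈ A.axis := by rw [← hf]; exact Set.smul_mem_smul_set x_axis
  have hy : f • A.y ∈ A.axis := by rw [← hf]; exact Set.smul_mem_smul_set y_axis
  rcases hx with hx | hx <;> rcases hy with hy | hy
  · exact absurd (hx.trans hy.symm) hne
  · obtain ⟨i, s, hs, e⟩ := c₁ f hx hy
    exact ⟨i, s, Or.inl hs, e⟩
  · obtain ⟨i, s, hs, e⟩ := c₂ f hy hx
    exact ⟨i, s, Or.inr hs, e⟩
  · exact absurd (hx.trans hy.symm) hne

/-- Behrstock's inequality: a point is close to the projection of one of two distinct axes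
seen from the other. -/
theorem behrstock [T1Space M] {m K : ℤ} (hN : Nested A A m)
    (hK : ∀ f : G, f • A.axis ≠ A.axis →
      (∀ z ∈ A.axis, f • z ≠ A.x ∧ f • z ≠ A.y) ∧ |A.φ (f • A.x) - A.φ (f • A.y)| ≤ K)
    {f : G} (hf : f • A.axis ≠ A.axis) {w : M} (hwx : w ≠ A.x) (hwy : w ≠ A.y)
    (hfx : f • w ≠ A.x) (hfy : f • w ≠ A.y) :
    (∀ z ∈ A.axis, |A.φ (f • w) - A.φ (f • z)| ≤ 2 * K + m + 2) ∨
      ∀ z ∈ A.axis, |A.φ w - A.φ (f⁻¹ • z)| ≤ 2 * K + m + 2 := by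
  have hf' : f⁻¹ • A.axis ≠ A.axis := fun h => hf (by rw [← h, smul_inv_smul, h])
  obtain ⟨e, hp⟩ := hK f hf
  obtain ⟨e', hp'⟩ := hK f⁻¹ hf'
  have ex := e _ x_axis
  have ey := e _ y_axis
  have ex' := e' _ x_axis
  have ey' := e' _ y_axis
  by_contra hc
  push Not at hc
  obtain ⟨⟨z, hz, h1⟩, z', hz', h2⟩ := hc
  have key : ∀ a b c : ℤ, |a - b| ≤ K → (2 * K + m + 2 < |c - a| ∨ 2 * K + m + 2 < |c - b|) →
      (a + m + 1 < c ∧ b + m + 1 < c) ∨ (c < a - m - 1 ∧ c < b - m - 1) := by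
    intro a b c h h'
    rw [abs_le] at h
    rw [lt_abs, lt_abs] at h'
    omega
  have u := key _ _ (A.φ (f • w)) hp (by rcases hz with rfl | rfl; exacts [Or.inl h1, Or.inr h1])
  have v := key _ _ (A.φ w) hp' (by rcases hz' with rfl | rfl; exacts [Or.inl h2, Or.inr h2])
  generalize hpe : A.φ (f • A.x) = p at *
  generalize hqe : A.φ (f • A.y) = q at *
  generalize hpe' : A.φ (f⁻¹ • A.x) = p' at *
  generalize hqe' : A.φ (f⁻¹ • A.y) = q' at *
  have Lx : ∀ c, p < c → f • A.x ∈ A.L c := fun c h => by rw [mem_L_iff ex.1 ex.2]; omega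
  have Rx : ∀ c, c < p → f • A.x ∈ A.R c := fun c h => by rw [mem_R_iff ex.1 ex.2]; omega
  have Ly : ∀ c, q < c → f • A.y ∈ A.L c := fun c h => by rw [mem_L_iff ey.1 ey.2]; omega
  have Ry : ∀ c, c < q → f • A.y ∈ A.R c := fun c h => by rw [mem_R_iff ey.1 ey.2]; omega
  have Lx' : ∀ c, p' < c → f⁻¹ • A.x ∈ A.L c := fun c h => by rw [mem_L_iff ex'.1 ex'.2]; omega
  have Rx' : ∀ c, c < p' → f⁻¹ • A.x ∈ A.R c := fun c h => by rw [mem_R_iff ex'.1 ex'.2]; omega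
  have Ly' : ∀ c, q' < c → f⁻¹ • A.y ∈ A.L c := fun c h => by rw [mem_L_iff ey'.1 ey'.2]; omega
  have Ry' : ∀ c, c < q' → f⁻¹ • A.y ∈ A.R c := fun c h => by rw [mem_R_iff ey'.1 ey'.2]; omega
  have fx' : ∀ c, f • f⁻¹ • A.x ∈ A.L c := fun c => by rw [smul_inv_smul]; exact x_mem_L _
  have fy' : ∀ c, f • f⁻¹ • A.y ∈ A.R c := fun c => by rw [smul_inv_smul]; exact y_mem_R _
  rcases u with u | u <;> rcases v with v | v
  · exact hN f (max p q + 1) (max p' q' + 1) A.x A.y (f⁻¹ • A.y) w (x_mem_L _) (Lx _ (by omega))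
      (y_mem_R _) (Ly _ (by omega)) (Ly' _ (by omega)) (fy' _)
      ((mem_R_iff hwx hwy _).2 (by omega)) ((mem_R_iff hfx hfy _).2 (by omega))
  · exact hN f (max p q + 1) (min p' q' - 1 - m) A.x A.y w (f⁻¹ • A.y) (x_mem_L _)
      (Lx _ (by omega)) (y_mem_R _) (Ly _ (by omega)) ((mem_L_iff hwx hwy _).2 (by omega))
      ((mem_R_iff hfx hfy _).2 (by omega)) (Ry' _ (by omega)) (fy' _)
  · exact hN f (min p q - 1 - m) (max p' q' + 1) (f⁻¹ • A.x) w A.x A.y (Lx' _ (by omega)) (fx' _)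
      ((mem_R_iff hwx hwy _).2 (by omega)) ((mem_L_iff hfx hfy _).2 (by omega)) (x_mem_L _)
      (Rx _ (by omega)) (y_mem_R _) (Ry _ (by omega))
  · exact hN f (min p q - 1 - m) (min p' q' - 1 - m) w (f⁻¹ • A.x) A.x A.y
      ((mem_L_iff hwx hwy _).2 (by omega)) ((mem_L_iff hfx hfy _).2 (by omega)) (Rx' _ (by omega))
      (fx' _) (x_mem_L _) (Rx _ (by omega)) (y_mem_R _) (Ry _ (by omega))

end Frame
end AcylDyn

/-! ### Projection data on the orbit of the axis -/

namespace AcylDyn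
namespace Frame
open scoped Pointwise
variable {G M : Type*} [Group G] [MulAction G M] [TopologicalSpace M]

/-- The properties of a frame extracted from the dynamics: `m` is the strip width, `K` bounds
the projections of other axes, and `S` represents the cosets of `⟨g⟩` in the axis stabiliser. -/
structure Axial [T1Space M] (A : Frame G M) (m K : ℤ) (S : Set G) : Prop where
  hm : 0 ≤ m
  hK : 0 ≤ K
  cross : A.FinCross m
  nest : Nested A A m
  bd : ∀ f : G, f • A.axis ≠ A.axis →
      (∀ z ∈ A.axis, f • z ≠ A.x ∧ f • z ≠ A.y) ∧ |A.φ (f • A.x) - A.φ (f • A.y)| ≤ K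
  finS : S.Finite
  cos : ∀ f : G, f • A.axis = A.axis → ∃ i : ℤ, ∃ s ∈ S, f = A.g ^ i * s

/-- The orbit of the axis. -/
abbrev Orb (A : Frame G M) : Type _ := MulAction.orbit G A.axis

/-- The height differences of points of `X` and `Z` measured along all parametrisations of `Y`. -/
def dset (A : Frame G M) (Y X Z : Set M) : Set ℕ :=
  {n | ∃ h : G, h • A.axis = Y ∧ ∃ a ∈ X, ∃ b ∈ Z, n = (A.φ (h⁻¹ • a) - A.φ (h⁻¹ • b)).natAbs}

open Classical in
/-- The projection distance of `X` and `Z` seen from `Y`. -/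
noncomputable def pd (A : Frame G M) (Y X Z : A.Orb) : ℕ :=
  if X = Y ∨ Z = Y then 0 else sSup (A.dset Y.1 X.1 Z.1)

variable {A : Frame G M} {m K : ℤ} {S : Set G}

theorem dset_nonempty (Y X Z : A.Orb) : (A.dset Y.1 X.1 Z.1).Nonempty := by
  obtain ⟨k, hk⟩ := Y.2
  obtain ⟨X, l, rfl⟩ := X
  obtain ⟨Z, l', rfl⟩ := Z
  exact ⟨_, k, hk, _, Set.smul_mem_smul_set x_axis, _, Set.smul_mem_smul_set x_axis, rfl⟩

theorem pd_le {Y X Z : A.Orb} {n : ℕ}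
    (H : X ≠ Y → Z ≠ Y → ∀ h : G, h • A.axis = Y.1 → ∀ a ∈ X.1, ∀ b ∈ Z.1,
      |A.φ (h⁻¹ • a) - A.φ (h⁻¹ • b)| ≤ n) : A.pd Y X Z ≤ n := by
  unfold pd
  split_ifs with hc
  · exact Nat.zero_le _
  · push Not at hc
    apply csSup_le (dset_nonempty Y X Z)
    rintro _ ⟨h, hh, a, ha, b, hb, rfl⟩
    have := H hc.1 hc.2 h hh a ha b hb
    rw [Int.abs_eq_natAbs] at this
    exact_mod_cast this

theorem exists_of_lt {Y X Z : A.Orb} {n : ℕ} (hn : n < A.pd Y X Z) :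
    X ≠ Y ∧ Z ≠ Y ∧ ∃ h : G, h • A.axis = Y.1 ∧ ∃ a ∈ X.1, ∃ b ∈ Z.1,
      n < |A.φ (h⁻¹ • a) - A.φ (h⁻¹ • b)| := by
  by_contra hc
  apply absurd hn
  rw [not_lt]
  apply pd_le
  intro hX hZ h hh a ha b hb
  by_contra hlt
  exact hc ⟨hX, hZ, h, hh, a, ha, b, hb, not_le.1 hlt⟩

namespace Axial
variable [T1Space M]

theorem bd' (hA : A.Axial m K S)
    {f : G} (hf : f • A.axis ≠ A.axis) {z z' : M} (hz : z ∈ A.axis) (hz' : z' ∈ A.axis) :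
    |A.φ (f • z) - A.φ (f • z')| ≤ K := by
  have h := (hA.bd f hf).2
  have := hA.hK
  rcases hz with rfl | rfl <;> rcases hz' with rfl | rfl
  · simpa
  · exact h
  · rwa [abs_sub_comm]
  · simpa

theorem proj_ne (hA : A.Axial m K S)
    {h : G} {X Y : A.Orb} (hXY : X ≠ Y) (hh : h • A.axis = Y.1) {a : M}
    (ha : a ∈ X.1) : h⁻¹ • a ≠ A.x ∧ h⁻¹ • a ≠ A.y := by
  obtain ⟨X, k, rfl⟩ := X
  obtain ⟨z, hz, rfl⟩ := ha
  have hf : (h⁻¹ * k) • A.axis ≠ A.axis := by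
    intro hc
    apply hXY
    apply Subtype.ext
    change k • A.axis = Y.1
    rw [← hh, ← inv_smul_eq_iff, ← mul_smul, hc]
  have := (hA.bd _ hf).1 z hz
  simpa [mul_smul] using this

theorem proj_close (hA : A.Axial m K S)
    {h : G} {X Y : A.Orb} (hXY : X ≠ Y) (hh : h • A.axis = Y.1) {a a' : M}
    (ha : a ∈ X.1) (ha' : a' ∈ X.1) : |A.φ (h⁻¹ • a) - A.φ (h⁻¹ • a')| ≤ K := by
  obtain ⟨X, k, rfl⟩ := X
  obtain ⟨z, hz, rfl⟩ := ha
  obtain ⟨z', hz', rfl⟩ := ha'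
  have hf : (h⁻¹ * k) • A.axis ≠ A.axis := by
    intro hc
    apply hXY
    apply Subtype.ext
    change k • A.axis = Y.1
    rw [← hh, ← inv_smul_eq_iff, ← mul_smul, hc]
  have := hA.bd' hf hz hz'
  simpa [mul_smul] using this

/-- Changing the parametrisation by a power of `g` does not change height differences, so only
finitely many values occur. -/
theorem bdd (hA : A.Axial m K S)
    {Y X Z : A.Orb} (hX : X ≠ Y) (hZ : Z ≠ Y) : BddAbove (A.dset Y.1 X.1 Z.1) := by
  obtain ⟨k, hk⟩ := Y.2
  have hfin : ∀ X : A.Orb, X.1.Finite := by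
    rintro ⟨X, l, rfl⟩
    change (l • A.axis).Finite
    rw [smul_axis]
    exact Set.toFinite _
  have hval : (((S ×ˢ X.1) ×ˢ Z.1).image fun p : (G × M) × M =>
      (A.φ (p.1.1 • k⁻¹ • p.1.2) - A.φ (p.1.1 • k⁻¹ • p.2)).natAbs).Finite :=
    ((hA.finS.prod (hfin X)).prod (hfin Z)).image _
  apply hval.bddAbove.mono
  rintro n ⟨h, hh, a, ha, b, hb, rfl⟩
  have he : (h⁻¹ * k) • A.axis = A.axis := by
    rw [mul_smul, show k • A.axis = Y.1 from hk, ← hh, inv_smul_smul]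
  obtain ⟨i, s, hs, e⟩ := hA.cos _ he
  have e1 : ∀ z : M, h⁻¹ • z = A.g ^ i • s • k⁻¹ • z := by
    intro z
    rw [← mul_smul (A.g ^ i), ← e, mul_smul, smul_inv_smul]
  refine ⟨((s, a), b), ⟨⟨hs, ha⟩, hb⟩, ?_⟩
  have na := hA.proj_ne hX hh ha
  have nb := hA.proj_ne hZ hh hb
  have aux : ∀ z : M, h⁻¹ • z ≠ A.x ∧ h⁻¹ • z ≠ A.y →
      A.φ (h⁻¹ • z) = A.φ (s • k⁻¹ • z) + i := by
    intro z hz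
    rw [e1] at hz ⊢
    refine φ_zpow (fun hc => hz.1 ?_) (fun hc => hz.2 ?_) i
    · rw [hc, zpow_x]
    · rw [hc, zpow_y]
  simp only
  rw [aux a na, aux b nb]
  congr 1
  ring

theorem le_pd (hA : A.Axial m K S)
    {Y X Z : A.Orb} (hX : X ≠ Y) (hZ : Z ≠ Y) {h : G} (hh : h • A.axis = Y.1) {a b : M}
    (ha : a ∈ X.1) (hb : b ∈ Z.1) : |A.φ (h⁻¹ • a) - A.φ (h⁻¹ • b)| ≤ A.pd Y X Z := by
  unfold pd
  rw [if_neg (by tauto)]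
  have := le_csSup (hA.bdd hX hZ) ⟨h, hh, a, ha, b, hb, rfl⟩
  rw [Int.abs_eq_natAbs]
  exact_mod_cast this

theorem pd_symm (hA : A.Axial m K S) (Y X Z : A.Orb) : A.pd Y X Z = A.pd Y Z X := by
  have key : ∀ X Z : A.Orb, A.pd Y X Z ≤ A.pd Y Z X := by
    intro X Z
    apply pd_le
    intro hX hZ h hh a ha b hb
    rw [abs_sub_comm]
    exact hA.le_pd hZ hX hh hb ha
  exact le_antisymm (key X Z) (key Z X)

theorem pd_smul (hA : A.Axial m K S)
    (g : G) (Y X Z : A.Orb) : A.pd (g • Y) (g • X) (g • Z) = A.pd Y X Z := by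
  have key : ∀ (g : G) (Y X Z : A.Orb), A.pd (g • Y) (g • X) (g • Z) ≤ A.pd Y X Z := by
    intro g Y X Z
    apply pd_le
    rintro hX hZ h hh _ ⟨a, ha, rfl⟩ _ ⟨b, hb, rfl⟩
    have hX' : X ≠ Y := fun hc => hX (by rw [hc])
    have hZ' : Z ≠ Y := fun hc => hZ (by rw [hc])
    have := hA.le_pd hX' hZ' (h := g⁻¹ * h)
      (by rw [mul_smul, hh, MulAction.orbit.coe_smul, inv_smul_smul]) ha hb
    simpa [mul_smul] using this
  apply le_antisymm (key g Y X Z)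
  have := key g⁻¹ (g • Y) (g • X) (g • Z)
  simpa only [inv_smul_smul] using this

theorem fin_pd (hA : A.Axial m K S)
    {θ : ℕ} (hθ : 2 * K + m + 2 ≤ θ) (X Z : A.Orb) : {Y | θ < A.pd Y X Z}.Finite := by
  have hK := hA.hK
  -- the two ways to cross
  let W : A.Orb → A.Orb → Set G := fun X Z =>
    {f : G | (∀ a ∈ X.1, f • a ∈ A.L 0) ∧ ∀ b ∈ Z.1, f • b ∈ A.R m}
  have hW : ∀ X Z, (W X Z).Finite := by
    rintro ⟨X, k, rfl⟩ ⟨Z, l, rfl⟩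
    have hne : ∀ k : G, k • A.x ≠ k • A.y := fun k h => x_ne_y (MulAction.injective k h)
    refine (hA.cross _ _ _ _ (hne k) (hne l)).subset ?_
    rintro f ⟨h1, h2⟩
    exact ⟨h1 _ (Set.smul_mem_smul_set x_axis), h1 _ (Set.smul_mem_smul_set y_axis),
      h2 _ (Set.smul_mem_smul_set x_axis), h2 _ (Set.smul_mem_smul_set y_axis)⟩
  have hone : ∀ (X Z Y : A.Orb) (h : G), X ≠ Y → Z ≠ Y → h • A.axis = Y.1 → ∀ a ∈ X.1, ∀ b ∈ Z.1,
      A.φ (h⁻¹ • a) + θ < A.φ (h⁻¹ • b) → ∃ f ∈ W X Z, f⁻¹ • A.axis = Y.1 := by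
    intro X Z Y h hX hZ hh a ha b hb hlt
    refine ⟨A.g ^ (-(A.φ (h⁻¹ • a) + K + 1)) * h⁻¹, ⟨fun a' ha' => ?_, fun b' hb' => ?_⟩, ?_⟩
    · have n := hA.proj_ne hX hh ha'
      have c := abs_le.1 (hA.proj_close hX hh ha ha')
      rw [mul_smul, zpow_mem_L, mem_L_iff n.1 n.2]; omega
    · have n := hA.proj_ne hZ hh hb'
      have c := abs_le.1 (hA.proj_close hZ hh hb hb')
      rw [mul_smul, zpow_mem_R, mem_R_iff n.1 n.2]; omega
    · rw [mul_inv_rev, inv_inv, ← zpow_neg, neg_neg, mul_smul, zpow_axis, hh]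
  have hfin : ∀ X Z, {Y : A.Orb | ∃ f ∈ W X Z, f⁻¹ • A.axis = Y.1}.Finite := by
    intro X Z
    refine Set.Finite.of_finite_image (f := Subtype.val) ?_ Subtype.val_injective.injOn
    refine ((hW X Z).image fun f => f⁻¹ • A.axis).subset ?_
    rintro _ ⟨Y, ⟨f, hf, e⟩, rfl⟩
    exact ⟨f, hf, e⟩
  refine ((hfin X Z).union (hfin Z X)).subset ?_
  intro Y hY
  obtain ⟨hX, hZ, h, hh, a, ha, b, hb, hlt⟩ := exists_of_lt hY
  rcases lt_abs.1 hlt with hlt | hlt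
  · exact Or.inr (hone Z X Y h hZ hX hh b hb a ha (by omega))
  · exact Or.inl (hone X Z Y h hX hZ hh a ha b hb (by omega))

/-- The projection data on the orbit of the axis. -/
noncomputable def projData (hA : A.Axial m K S) : ProjData A.Orb where
  d := A.pd
  θ := (3 * K + m + 2).toNat
  symm := hA.pd_symm
  tri Y X W Z hW := by
    apply pd_le
    intro hX hZ h hh a ha b hb
    obtain ⟨w, hw⟩ : W.1.Nonempty := by
      obtain ⟨W, l, rfl⟩ := W
      exact ⟨_, Set.smul_mem_smul_set x_axis⟩
    have h1 := hA.le_pd hX hW hh ha hw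
    have h2 := hA.le_pd hW hZ hh hw hb
    have h3 := abs_sub_le (A.φ (h⁻¹ • a)) (A.φ (h⁻¹ • w)) (A.φ (h⁻¹ • b))
    push_cast
    linarith
  junk Y Z := by unfold pd; rw [if_pos (Or.inl rfl)]
  diag Y X := by
    apply pd_le
    intro hX _ h hh a ha b hb
    have := hA.proj_close hX hh ha hb
    have := hA.hK
    have := hA.hm
    omega
  beh P Q R hlt := by
    have hK := hA.hK
    have hm := hA.hm
    obtain ⟨hPQ, hRQ, k, hk, a, ha, c, hc, hac⟩ := exists_of_lt hlt
    apply pd_le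
    intro hQP hRP h hh b hb c' hc'
    have hf : (h⁻¹ * k) • A.axis ≠ A.axis := by
      intro he
      apply hQP
      apply Subtype.ext
      rw [← hk, ← hh, ← inv_smul_eq_iff, ← mul_smul, he]
    have n1 := hA.proj_ne hRQ hk hc
    have n2 := hA.proj_ne hRP hh hc
    rw [← hk] at hb
    rw [← hh] at ha
    obtain ⟨zb, hzb, rfl⟩ := hb
    obtain ⟨za, hza, rfl⟩ := ha
    beta_reduce at hac ⊢
    have e1 : (h⁻¹ * k) • k⁻¹ • c = h⁻¹ • c := by rw [mul_smul, smul_inv_smul]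
    rcases behrstock hA.nest hA.bd hf (w := k⁻¹ • c) n1.1 n1.2 (by rw [e1]; exact n2.1)
      (by rw [e1]; exact n2.2) with H | H
    · have h1 := H zb hzb
      rw [e1, mul_smul] at h1
      have h2 := hA.proj_close hRP hh hc hc'
      rw [abs_le] at h1 h2 ⊢
      omega
    · have h1 := H za hza
      rw [mul_inv_rev, inv_inv, mul_smul] at h1
      rw [abs_sub_comm] at hac
      omega
  fin X Z := hA.fin_pd (by have := hA.hK; omega) X Z

theorem projData_inv (hA : A.Axial m K S) : (hA.projData).Inv G := hA.pd_smul

/-- Uniform bound on the elements fixing one orbit point `a` and moving another to a given one. -/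
theorem card_stab (hA : A.Axial m K S) (a b a' b' : A.Orb) (hab : a ≠ b) :
    {g : G | g • a = a' ∧ g • b = b'}.Finite ∧
      {g : G | g • a = a' ∧ g • b = b'}.ncard ≤ S.ncard * (2 * K + 1).toNat := by
  classical
  set T := {g : G | g • a = a' ∧ g • b = b'} with hT
  rcases T.eq_empty_or_nonempty with h0 | ⟨g₀, hg₀⟩
  · rw [h0]; simp
  obtain ⟨a, k, rfl⟩ := a
  obtain ⟨b, l, rfl⟩ := b
  have hne : (k⁻¹ * l) • A.axis ≠ A.axis := by
    intro hc
    apply hab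
    apply Subtype.ext
    change k • A.axis = l • A.axis
    rw [← inv_smul_eq_iff.1 ((mul_smul k⁻¹ l A.axis).symm.trans hc)]
  -- the offset of the power of `g` in the coset decomposition
  let c : G → ℤ := fun s => A.φ ((k⁻¹ * l) • A.x) - A.φ (s • (k⁻¹ * l) • A.x)
  let D : Finset G := (hA.finS.toFinset ×ˢ Finset.Icc (-K) K).image
    fun p : G × ℤ => g₀ * (k * (A.g ^ (c p.1 + p.2) * p.1) * k⁻¹)
  have hsub : T ⊆ D := by
    intro g hg
    have hs : ∀ Z : A.Orb, g • Z = g₀ • Z → (g₀⁻¹ * g) • Z.1 = Z.1 := by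
      intro Z hZ
      have := congrArg Subtype.val hZ
      rw [MulAction.orbit.coe_smul, MulAction.orbit.coe_smul] at this
      rw [mul_smul, this, inv_smul_smul]
    have ha := hs _ (hg.1.trans hg₀.1.symm)
    have hb := hs _ (hg.2.trans hg₀.2.symm)
    change (g₀⁻¹ * g) • k • A.axis = k • A.axis at ha
    change (g₀⁻¹ * g) • l • A.axis = l • A.axis at hb
    have he : (k⁻¹ * (g₀⁻¹ * g) * k) • A.axis = A.axis := by
      rw [mul_smul, mul_smul, ha, inv_smul_smul]
    obtain ⟨i, s, hsS, e⟩ := hA.cos _ he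
    have hx : (g₀⁻¹ * g) • l • A.x ∈ l • A.axis := by
      rw [← hb]; exact Set.smul_mem_smul_set (Set.smul_mem_smul_set x_axis)
    obtain ⟨z, hz, hzx⟩ := hx
    have e2 : (A.g ^ i * s) • (k⁻¹ * l) • A.x = (k⁻¹ * l) • z := by
      rw [← e, mul_smul k⁻¹ l z, show l • z = _ from hzx]
      simp only [mul_smul, smul_inv_smul]
    have n1 := (hA.bd _ hne).1 z hz
    rw [mul_smul] at e2
    have n2 : s • (k⁻¹ * l) • A.x ≠ A.x ∧ s • (k⁻¹ * l) • A.x ≠ A.y := by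
      constructor
      · intro h; rw [h, zpow_x] at e2; exact n1.1 e2.symm
      · intro h; rw [h, zpow_y] at e2; exact n1.2 e2.symm
    have e3 := φ_zpow n2.1 n2.2 i
    rw [e2] at e3
    have e4 := abs_le.1 (hA.bd' hne hz x_axis)
    refine Finset.mem_coe.2 (Finset.mem_image.2 ⟨(s, i - c s), ?_, ?_⟩)
    · rw [Finset.mem_product, Set.Finite.mem_toFinset, Finset.mem_Icc]
      exact ⟨hsS, by simp only [c]; omega, by simp only [c]; omega⟩
    · simp only [add_sub_cancel]
      rw [← e]; group
  refine ⟨D.finite_toSet.subset hsub, (Set.ncard_le_ncard hsub D.finite_toSet).trans ?_⟩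
  rw [Set.ncard_coe_finset]
  refine Finset.card_image_le.trans ?_
  rw [Finset.card_product, ← Set.ncard_eq_toFinset_card _ hA.finS, Int.card_Icc]
  apply Nat.mul_le_mul_left
  omega

end Axial
end Frame
end AcylDyn

/-! ### From the dynamics to acylindrical hyperbolicity -/

namespace AcylDyn
namespace Frame
open scoped Pointwise
variable {G M : Type*} [Group G] [MulAction G M] [TopologicalSpace M]

/-- A north–south element has a power admitting a frame: the filtration consists of the translates
of a clopen neighbourhood `V₀` of the attracting point. -/
theorem exists_frame [T1Space M] [ContinuousConstSMul G M] {g : G} {x y : M}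
    (h : NorthSouthAt (fun (g : G) (z : M) => g • z) g x y) {V₀ : Set M} (hV : IsClopen V₀)
    (hy : y ∈ V₀) (hx : x ∉ V₀) {z : M} (hzx : z ≠ x) (hzy : z ≠ y) :
    ∃ A : Frame G M, A.x = x ∧ A.y = y := by
  obtain ⟨-, hfix, hns⟩ := h
  have hgx : g • x = x := (hfix x).2 (Or.inl rfl)
  have hgy : g • y = y := (hfix y).2 (Or.inr rfl)
  obtain ⟨N, hN⟩ := hns V₀ᶜ V₀ hV.compl.isOpen hV.isOpen hx hy
  obtain ⟨f, hf⟩ : ∃ f, f = g ^ (N + 1) := ⟨_, rfl⟩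
  have hmem : ∀ g : G, g ∈ MulAction.stabilizer G x ↔ g • x = x := fun g => Iff.rfl
  have hmem' : ∀ g : G, g ∈ MulAction.stabilizer G y ↔ g • y = y := fun g => Iff.rfl
  have hfx : ∀ n : ℤ, f ^ n • x = x := by
    intro n
    rw [← hmem, hf]
    exact zpow_mem (pow_mem ((hmem _).2 hgx) _) _
  have hfy : ∀ n : ℤ, f ^ n • y = y := by
    intro n
    rw [← hmem', hf]
    exact zpow_mem (pow_mem ((hmem' _).2 hgy) _) _
  have hpow : ∀ n : ℕ, ∀ z ∈ V₀, f ^ n • z ∈ V₀ := by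
    intro n z hz
    rcases Nat.eq_zero_or_pos n with rfl | hn
    · simpa using hz
    · rw [hf, ← pow_mul]
      refine hN _ ?_ ⟨z, by simpa using hz, rfl⟩
      calc N < N + 1 := Nat.lt_succ_self N
        _ ≤ (N + 1) * n := Nat.le_mul_of_pos_right _ hn
  let V : ℤ → Set M := fun c => {z | f ^ (-c) • z ∈ V₀}
  have anti : ∀ c d, c ≤ d → V d ⊆ V c := by
    intro c d hcd z hz
    have := hpow (d - c).toNat _ hz
    rw [← zpow_natCast, Int.toNat_of_nonneg (by omega), ← mul_smul, ← zpow_add] at this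
    change f ^ (-c) • z ∈ V₀
    convert this using 3
    ring
  have shift : ∀ (n c : ℤ) (z : M), f ^ n • z ∈ V (c + n) ↔ z ∈ V c := by
    intro n c z
    change f ^ (-(c + n)) • f ^ n • z ∈ V₀ ↔ f ^ (-c) • z ∈ V₀
    rw [← mul_smul, ← zpow_add]
    congr! 3
    ring
  have basis_x : ∀ O : Set M, IsOpen O → x ∈ O → ∃ c, (V c)ᶜ ⊆ O := by
    intro O hO hxO
    obtain ⟨n, hn⟩ := hns O V₀ hO hV.isOpen hxO hy
    refine ⟨-(n + 1 : ℕ), fun z hz => ?_⟩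
    by_contra hzO
    apply hz
    change f ^ (-(-((n + 1 : ℕ) : ℤ))) • z ∈ V₀
    rw [neg_neg, zpow_natCast, hf, ← pow_mul]
    exact hn _ (by nlinarith) ⟨z, hzO, rfl⟩
  have basis_y : ∀ O : Set M, IsOpen O → y ∈ O → ∃ c, V c ⊆ O := by
    intro O hO hyO
    obtain ⟨n, hn⟩ := hns V₀ᶜ O hV.compl.isOpen hO hx hyO
    refine ⟨(n + 1 : ℕ), fun z hz => ?_⟩
    have := hn ((N + 1) * (n + 1)) (by nlinarith) ⟨_, by rw [compl_compl]; exact hz, rfl⟩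
    beta_reduce at this
    rwa [pow_mul, ← hf, zpow_neg, zpow_natCast, smul_inv_smul] at this
  obtain ⟨a, ha⟩ := basis_x {z}ᶜ isOpen_compl_singleton (fun h' => hzx h'.symm)
  obtain ⟨b, hb⟩ := basis_y {z}ᶜ isOpen_compl_singleton (fun h' => hzy h'.symm)
  obtain ⟨k, hk, hk'⟩ := Int.exists_greatest_of_bdd (P := fun c => z ∈ V c)
    ⟨b, fun c hc => by
      by_contra hcb
      exact hb (anti _ _ (by omega) hc) rfl⟩ ⟨a, by_contra fun hn => ha hn rfl⟩
  have hcont : ∀ n : ℤ, Continuous fun z : M => f ^ n • z := fun n => continuous_const_smul _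
  exact ⟨{  g := f, x := x, y := y, p := f ^ (-k) • z, V := V, anti := anti, shift := shift
            x_mem := fun c => by change f ^ (-c) • x ∉ V₀; rwa [hfx]
            y_mem := fun c => by change f ^ (-c) • y ∈ V₀; rwa [hfy]
            isOpen := fun c => hV.isOpen.preimage (hcont _)
            isClosed := fun c => hV.isClosed.preimage (hcont _)
            basis_x := basis_x, basis_y := basis_y
            gx := by simpa using hfx 1
            gy := by simpa using hfy 1
            p_mem := by
              have := shift (-k) k z
              rw [add_neg_cancel] at this
              exact this.2 hk
            p_notMem := by
              have := shift (-k) (1 + k) z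
              rw [add_neg_cancel_right] at this
              intro h
              have := hk' _ (this.1 h)
              omega }, rfl, rfl⟩

/-- Condition (C) at the pair of fixed points yields the two finiteness properties of a frame. -/
theorem exists_strip [T1Space M] [ContinuousConstSMul G M] (A : Frame G M)
    (hC : ConditionC fun (g : G) (z : M) => g • z) :
    ∃ m, 0 ≤ m ∧ A.FinCross m ∧ Nested A A m := by
  have hne : (A.x, A.x) ≠ (A.y, A.y) := fun h => x_ne_y (congrArg Prod.fst h)
  obtain ⟨U, V, hU, hV, hxU, hyV, H⟩ := hC (A.x, A.x) (A.y, A.y) rfl rfl hne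
  have nx : ∀ O : Set M, IsOpen O → A.x ∈ O → ∃ k : ℤ, ∀ n, k ≤ n → A.L (-n) ⊆ O := by
    intro O hO hx
    obtain ⟨c, hc⟩ := A.basis_x O hO hx
    exact ⟨-c, fun n hn => (L_mono (by omega)).trans hc⟩
  have ny : ∀ O : Set M, IsOpen O → A.y ∈ O → ∃ k : ℤ, ∀ n, k ≤ n → A.R n ⊆ O := by
    intro O hO hy
    obtain ⟨c, hc⟩ := A.basis_y O hO hy
    exact ⟨c, fun n hn => (A.anti _ _ (by omega)).trans hc⟩
  obtain ⟨k, hk0, hkU, hkV⟩ : ∃ k : ℤ, 0 ≤ k ∧ (∀ n, k ≤ n → A.L (-n) ×ˢ A.L (-n) ⊆ U) ∧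
      ∀ n, k ≤ n → A.R n ×ˢ A.R n ⊆ V := by
    obtain ⟨u₁, u₂, h1, h2, h3, h4, h5⟩ := isOpen_prod_iff.1 hU _ _ hxU
    obtain ⟨v₁, v₂, i1, i2, i3, i4, i5⟩ := isOpen_prod_iff.1 hV _ _ hyV
    obtain ⟨a, ha⟩ := nx _ (h1.inter h2) ⟨h3, h4⟩
    obtain ⟨b, hb⟩ := ny _ (i1.inter i2) ⟨i3, i4⟩
    refine ⟨max 0 (max a b), le_max_left _ _, fun n hn => ?_, fun n hn => ?_⟩
    · refine subset_trans ?_ h5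
      have := ha n (by omega)
      exact Set.prod_mono (this.trans Set.inter_subset_left) (this.trans Set.inter_subset_right)
    · refine subset_trans ?_ i5
      have := hb n (by omega)
      exact Set.prod_mono (this.trans Set.inter_subset_left) (this.trans Set.inter_subset_right)
  have hF : ∀ n, k ≤ n → A.FinCross (2 * n) := by
    intro n hn a₁ a₂ b₁ b₂ ha hb
    by_cases hab : (a₁, a₂) = (b₁, b₂)
    · convert Set.finite_empty
      ext f
      simp only [Set.mem_ofPred_eq, Set.mem_empty_iff_false, iff_false]
      rintro ⟨h1, -, h3, -⟩
      rw [← show a₁ = b₁ from congrArg Prod.fst hab] at h3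
      exact not_mem_L.2 (R_anti (by omega) h3) h1
    · obtain ⟨P, Q, -, -, hP, hQ, hfin⟩ := H (a₁, a₂) (b₁, b₂) ha hb hab
      refine (hfin.preimage (f := fun f : G => A.g ^ (-n) * f)
        (mul_right_injective _).injOn).subset ?_
      rintro f ⟨h1, h2, h3, h4⟩
      refine ⟨⟨_, ⟨_, hP, rfl⟩, hkU n hn ⟨?_, ?_⟩⟩, ⟨_, ⟨_, hQ, rfl⟩, hkV n hn ⟨?_, ?_⟩⟩⟩ <;>
        simp only [pairMap, mul_smul]
      · rw [zpow_mem_L]; simpa using h1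
      · rw [zpow_mem_L]; simpa using h2
      · rw [zpow_mem_R]; convert h3 using 1; congr 1; ring
      · rw [zpow_mem_R]; convert h4 using 1; congr 1; ring
  let bad : ℤ → Set G := fun n => {f | ∃ z₁ z₂ z₃ z₄ : M,
    z₁ ∈ A.L (-n) ∧ f • z₁ ∈ A.L (-n) ∧ z₂ ∈ A.R n ∧ f • z₂ ∈ A.L (-n) ∧
    z₃ ∈ A.L (-n) ∧ f • z₃ ∈ A.R n ∧ z₄ ∈ A.R n ∧ f • z₄ ∈ A.R n}
  obtain ⟨k', hk', hbad⟩ : ∃ k', k ≤ k' ∧ (bad k').Finite := by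
    obtain ⟨P, Q, oP, oQ, hP, hQ, hfin⟩ := H (A.x, A.y) (A.y, A.x) x_ne_y x_ne_y.symm
      (fun h => x_ne_y (congrArg Prod.fst h))
    obtain ⟨u₁, u₂, h1, h2, h3, h4, h5⟩ := isOpen_prod_iff.1 oP _ _ hP
    obtain ⟨v₁, v₂, i1, i2, i3, i4, i5⟩ := isOpen_prod_iff.1 oQ _ _ hQ
    obtain ⟨a, ha⟩ := nx _ (h1.inter i2) ⟨h3, i4⟩
    obtain ⟨b, hb⟩ := ny _ (h2.inter i1) ⟨h4, i3⟩
    refine ⟨max k (max a b), le_max_left _ _, hfin.subset ?_⟩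
    have ha' := ha (max k (max a b)) (by omega)
    have hb' := hb (max k (max a b)) (by omega)
    rintro f ⟨z₁, z₂, z₃, z₄, j1, j1', j2, j2', j3, j3', j4, j4'⟩
    exact ⟨⟨(f • z₁, f • z₂), ⟨(z₁, z₂), h5 ⟨(ha' j1).1, (hb' j2).1⟩, rfl⟩,
        hkU _ (le_max_left _ _) ⟨j1', j2'⟩⟩,
      ⟨(f • z₄, f • z₃), ⟨(z₄, z₃), i5 ⟨(hb' j4).2, (ha' j3).2⟩, rfl⟩,
        hkV _ (le_max_left _ _) ⟨j4', j3'⟩⟩⟩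
  have bad_anti : ∀ n n', n ≤ n' → bad n' ⊆ bad n := by
    rintro n n' hn f ⟨z₁, z₂, z₃, z₄, j1, j1', j2, j2', j3, j3', j4, j4'⟩
    have hL := L_mono (A := A) (c := -n') (d := -n) (by omega)
    have hR := R_anti (A := A) hn
    exact ⟨z₁, z₂, z₃, z₄, hL j1, hL j1', hR j2, hL j2', hL j3, hR j3', hR j4, hR j4'⟩
  -- each single element is eventually harmless, since it cannot send both fixed points to `x`
  have hone : ∀ f : G, ∃ n, f ∉ bad n := by
    intro f
    have hcont : Continuous fun z : M => f • z := continuous_const_smul f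
    by_cases hx : f • A.x = A.x
    · have hy : f • A.y ≠ A.x := fun h => x_ne_y (MulAction.injective f (hx.trans h.symm))
      obtain ⟨c, hc⟩ := exists_mem hy
      obtain ⟨d, hd⟩ := ny _ ((A.isOpen c).preimage hcont) hc
      refine ⟨max d (-c), ?_⟩
      rintro ⟨z₁, z₂, z₃, z₄, j1, j1', j2, j2', j3, j3', j4, j4'⟩
      exact L_mono (d := c) (by omega) j2' (hd _ (le_max_left _ _) j2)
    · obtain ⟨c, hc⟩ := exists_mem hx
      obtain ⟨d, hd⟩ := nx _ ((A.isOpen c).preimage hcont) hc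
      refine ⟨max d (-c), ?_⟩
      rintro ⟨z₁, z₂, z₃, z₄, j1, j1', j2, j2', j3, j3', j4, j4'⟩
      exact L_mono (d := c) (by omega) j1' (hd _ (le_max_left _ _) j1)
  choose ν hν using hone
  obtain ⟨b, hb⟩ := (hbad.image ν).bddAbove
  set n₀ := max k' b with hn₀
  have hno : ∀ f, f ∉ bad n₀ := by
    intro f hf
    have h1 : f ∈ bad k' := bad_anti _ _ (le_max_left _ _) hf
    have h2 : ν f ≤ b := hb ⟨f, h1, rfl⟩
    exact hν f (bad_anti _ _ (h2.trans (le_max_right _ _)) hf)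
  refine ⟨2 * n₀, by omega, hF n₀ (by omega), ?_⟩
  intro f c₁ c₂ z₁ z₂ z₃ z₄ h1 h1' h2 h2' h3 h3' h4 h4'
  apply hno (A.g ^ (-(c₁ + n₀)) * f * A.g ^ (c₂ + n₀))
  have e : ∀ z : M, (A.g ^ (-(c₁ + n₀)) * f * A.g ^ (c₂ + n₀)) • A.g ^ (-(c₂ + n₀)) • z =
      A.g ^ (-(c₁ + n₀)) • f • z := by
    intro z
    rw [mul_smul, mul_smul, zpow_neg A.g (c₂ + n₀), smul_inv_smul]
  have e1 : ∀ c : ℤ, -n₀ - -(c + n₀) = c := by intro c; ring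
  have e2 : ∀ c : ℤ, n₀ - -(c + n₀) = c + 2 * n₀ := by intro c; ring
  refine ⟨A.g ^ (-(c₂ + n₀)) • z₁, A.g ^ (-(c₂ + n₀)) • z₂, A.g ^ (-(c₂ + n₀)) • z₃,
    A.g ^ (-(c₂ + n₀)) • z₄, ?_⟩
  simp only [e, zpow_mem_L, zpow_mem_R, e1, e2]
  exact ⟨h1, h1', h2, h2', h3, h3', h4, h4'⟩

/-- A group with an axial frame is acylindrically hyperbolic unless it stabilises the axis, in which
case the powers of `g` have finite index. -/
theorem Axial.ah {G : Type*} {M : Type} [Group G] [MulAction G M] [TopologicalSpace M] [T1Space M]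
    {A : Frame G M} {m K : ℤ} {S : Set G} (hA : A.Axial m K S) (hG : ¬ VirtuallyCyclic G) :
    AcylindricallyHyperbolic G := by
  obtain ⟨h, hh⟩ : ∃ h : G, h • A.axis ≠ A.axis := by
    by_contra hc
    push Not at hc
    apply hG
    refine ⟨Subgroup.zpowers A.g, inferInstance, ?_⟩
    have hfin : Finite (G ⧸ Subgroup.zpowers A.g) := by
      have : Finite S := hA.finS
      refine Finite.of_surjective (fun s : S => ((s.1⁻¹ : G) : G ⧸ Subgroup.zpowers A.g)) ?_
      intro q
      obtain ⟨f, rfl⟩ := QuotientGroup.mk_surjective q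
      obtain ⟨i, s, hs, e⟩ := hA.cos f⁻¹ (hc _)
      refine ⟨⟨s, hs⟩, ?_⟩
      rw [QuotientGroup.eq]
      have : f = s⁻¹ * A.g ^ (-i) := by
        rw [← inv_inv f, e, mul_inv_rev, zpow_neg]
      rw [this, inv_inv, mul_inv_cancel_left]
      exact Subgroup.zpow_mem_zpowers _ _
    exact Subgroup.index_ne_zero_of_finite
  have hh' : h⁻¹ • A.axis ≠ A.axis := by
    intro hc
    apply hh
    rw [inv_smul_eq_iff] at hc
    exact hc.symm
  let X₀ : A.Orb := ⟨A.axis, MulAction.mem_orbit_self _⟩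
  obtain ⟨θ, hθ⟩ : ∃ θ : ℕ, θ = 22 * hA.projData.θ + 20 := ⟨_, rfl⟩
  have hne : ∀ f : G, f • A.axis ≠ A.axis → f • X₀ ≠ X₀ := fun f hf hc =>
    hf (congrArg Subtype.val hc)
  have hmem : ∀ f : G, f • A.x ∈ (f • X₀).1 := fun f => Set.smul_mem_smul_set x_axis
  have lower : ∀ f f' : G, f • A.axis ≠ A.axis → f' • A.axis ≠ A.axis →
      |A.φ (f • A.x) - A.φ (f' • A.x)| ≤ A.pd X₀ (f • X₀) (f' • X₀) := by
    intro f f' hf hf'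
    have := hA.le_pd (h := 1) (Y := X₀) (hne f hf) (hne f' hf') (one_smul _ _) (hmem f) (hmem f')
    simpa using this
  have ht := (hA.bd _ hh).1 A.x x_axis
  set t := A.φ (h • A.x) with htd
  set t' := A.φ (h⁻¹ • A.x) with htd'
  obtain ⟨N, hN⟩ : ∃ N : ℤ, N = t' - t + θ + K + 1 := ⟨_, rfl⟩
  have hwax : ∀ n : ℤ, (A.g ^ n * h) • A.axis ≠ A.axis := by
    intro n hc
    apply hh
    rw [mul_smul, ← eq_inv_smul_iff, ← zpow_neg, zpow_axis] at hc
    exact hc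
  have hwinv : (A.g ^ N * h)⁻¹ • X₀ = h⁻¹ • X₀ := by
    apply Subtype.ext
    change (A.g ^ N * h)⁻¹ • A.axis = h⁻¹ • A.axis
    rw [mul_inv_rev, mul_smul, ← zpow_neg, zpow_axis]
  have hlev : ∀ n : ℤ, A.φ ((A.g ^ n * h) • A.x) = t + n := by
    intro n
    rw [mul_smul, φ_zpow ht.1 ht.2]
  have hstab : ∀ n : ℤ, A.g ^ n • X₀ = X₀ := fun n => Subtype.ext (zpow_axis n)
  have far : ∀ i j : ℤ, θ < |i - j| →
      22 * hA.projData.θ + 20 < hA.projData.d X₀ ((A.g ^ i * (A.g ^ N * h)) • X₀)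
        ((A.g ^ j * (A.g ^ N * h)) • X₀) := by
    intro i j hij
    change _ < A.pd _ _ _
    rw [← mul_assoc, ← zpow_add, ← mul_assoc, ← zpow_add, ← hθ]
    have := lower _ _ (hwax (i + N)) (hwax (j + N))
    rw [hlev, hlev, show t + (i + N) - (t + (j + N)) = i - j by ring] at this
    omega
  refine hA.projData_inv.ah (X₀ := X₀) (w := A.g ^ N * h) (fun a b a' b' hab =>
    hA.card_stab a b a' b' hab) ?_ (hstab 0) (hstab (θ + 1)) (hstab (2 * (θ + 1))) (far _ _ ?_)
    (far _ _ ?_) (far _ _ ?_)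
  · change _ < A.pd _ _ _
    rw [hwinv, ← hθ]
    have := lower _ _ hh' (hwax N)
    rw [hlev, ← htd', abs_le] at this
    have := hA.hK
    omega
  all_goals
    rw [lt_abs]
    omega

end Frame

/-- An action on the Baire space satisfying (C) with a north–south element forces acylindrical
hyperbolicity. -/
theorem ah_of_baire {G : Type*} [Group G] (hG : ¬ VirtuallyCyclic G)
    {act : G → (ℕ → ℕ) → (ℕ → ℕ)} (hact : IsActionByHomeos act) (hC : ConditionC act) {g : G}
    (hg : NorthSouth act g) : AcylindricallyHyperbolic G := by
  let _ : MulAction G (ℕ → ℕ) :=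
    { smul := act, one_smul := hact.1.1, mul_smul := hact.1.2 }
  let _ : ContinuousConstSMul G (ℕ → ℕ) := ⟨hact.2⟩
  obtain ⟨x, y, hxy⟩ := hg
  obtain ⟨i, hi⟩ := Function.ne_iff.1 hxy.1
  have hV : IsClopen {z : ℕ → ℕ | z i = y i} :=
    (isClopen_discrete {y i}).preimage (continuous_apply i)
  let z : ℕ → ℕ := fun _ => x i + y i + 1
  have hzx : z ≠ x := fun h => by have := congrFun h i; simp only [z] at this; omega
  have hzy : z ≠ y := fun h => by have := congrFun h i; simp only [z] at this; omega
  obtain ⟨A, -, -⟩ := Frame.exists_frame (G := G) (g := g) hxy hV rfl hi hzx hzy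
  obtain ⟨m, hm, hF, hN⟩ := A.exists_strip hC
  obtain ⟨K, hK, hbd⟩ := Frame.exists_bound hm hF hN
  obtain ⟨S, hS, hcos⟩ := Frame.finite_cosets hm hF hN
  exact Frame.Axial.ah (A := A) ⟨hm, hK, hF, hN, hbd, hS, hcos⟩ hG

end AcylDyn

/-! ### A characterisation of the Baire space -/

namespace AcylDyn
open Topology Set PiNat

section Baire
variable {M : Type*} [TopologicalSpace M]

/-- A noncompact clopen set splits into infinitely many nonempty clopen sets subordinate to any
given clopen basis property `small`. -/
theorem exists_clopen_partition [SecondCountableTopology M] {small : Set M → Prop}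
    (hanti : ∀ s t, s ⊆ t → small t → small s)
    (hbasis : ∀ (x : M) (O : Set M), IsOpen O → x ∈ O → ∃ C, IsClopen C ∧ x ∈ C ∧ C ⊆ O ∧ small C)
    {U : Set M} (hU : IsClopen U) (hnc : ¬ IsCompact U) :
    ∃ A : ℕ → Set M, (∀ n, IsClopen (A n) ∧ (A n).Nonempty ∧ small (A n)) ∧
      Pairwise (fun i j => Disjoint (A i) (A j)) ∧ ⋃ n, A n = U := by
  classical
  rw [isCompact_iff_finite_subcover] at hnc
  push Not at hnc
  obtain ⟨ι, O, hO, hUO, hfin⟩ := hnc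
  -- clopen small sets inside `U` refining the bad cover
  have hx : ∀ x : U, ∃ C, IsClopen C ∧ x.1 ∈ C ∧ C ⊆ U ∧ small C ∧ ∃ i, C ⊆ O i := by
    rintro ⟨x, hx⟩
    obtain ⟨i, hi⟩ := mem_iUnion.1 (hUO hx)
    obtain ⟨C, h1, h2, h3, h4⟩ := hbasis x (U ∩ O i) (hU.isOpen.inter (hO i)) ⟨hx, hi⟩
    exact ⟨C, h1, h2, h3.trans inter_subset_left, h4, i, h3.trans inter_subset_right⟩
  choose C hC hxC hCU hCs hCO using hx
  choose idx hidx using hCO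
  have hne : U.Nonempty := by
    by_contra h
    rw [not_nonempty_iff_eq_empty] at h
    exact hfin ∅ (by rw [h]; exact empty_subset _)
  obtain ⟨T, hT, hTU⟩ := TopologicalSpace.isOpen_iUnion_countable C (fun x => (hC x).isOpen)
  have hcover : ⋃ x, C x = U :=
    subset_antisymm (iUnion_subset hCU) fun x hx => mem_iUnion.2 ⟨⟨x, hx⟩, hxC ⟨x, hx⟩⟩
  rw [hcover] at hTU
  have hTne : T.Nonempty := by
    by_contra h
    rw [not_nonempty_iff_eq_empty] at h
    rw [h] at hTU
    simp only [mem_empty_iff_false, iUnion_of_empty, iUnion_empty] at hTU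
    exact hne.ne_empty hTU.symm
  obtain ⟨τ, hτ⟩ := hT.exists_eq_range hTne
  let D : ℕ → Set M := disjointed fun n => C (τ n)
  have hDU : ⋃ n, D n = U := by
    rw [iUnion_disjointed, ← hTU, hτ, biUnion_range]
  have hDsub : ∀ n, D n ⊆ C (τ n) := fun n => disjointed_subset _ _
  have hDcl : ∀ n, IsClopen (D n) := by
    intro n
    refine disjointedRec (p := IsClopen) ?_ (hC (τ n))
    intro t i ht
    exact ht.diff (hC (τ i))
  have hinf : {n | (D n).Nonempty}.Infinite := by
    intro hF
    apply hfin (hF.toFinset.image fun n => idx (τ n))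
    intro x hx
    rw [← hDU] at hx
    obtain ⟨n, hn⟩ := mem_iUnion.1 hx
    simp only [Finset.mem_image, mem_iUnion]
    exact ⟨_, ⟨n, hF.mem_toFinset.2 ⟨x, hn⟩, rfl⟩, hidx _ (hDsub n hn)⟩
  have hnth : ∀ k, (D (Nat.nth (fun n => (D n).Nonempty) k)).Nonempty := fun k =>
    Nat.nth_mem_of_infinite hinf k
  refine ⟨fun k => D (Nat.nth (fun n => (D n).Nonempty) k),
    fun k => ⟨hDcl _, hnth k, hanti _ _ (hDsub _) (hCs _)⟩, ?_, ?_⟩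
  · intro i j hij
    exact disjoint_disjointed _ fun h => hij (Nat.nth_injective hinf h)
  · apply subset_antisymm
    · exact iUnion_subset fun k => (subset_iUnion D _).trans hDU.subset
    · intro x hx
      rw [← hDU] at hx
      obtain ⟨n, hn⟩ := mem_iUnion.1 hx
      obtain ⟨k, hk⟩ : n ∈ range (Nat.nth fun n => (D n).Nonempty) := by
        rw [Nat.range_nth_of_infinite hinf]
        exact ⟨x, hn⟩
      exact mem_iUnion.2 ⟨k, by rwa [hk]⟩

/-- The Alexandrov–Urysohn characterisation: a nonempty zero-dimensional Polish space without
nonempty compact clopen subsets is homeomorphic to the Baire space. -/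
theorem homeo_baire [PolishSpace M] [Nonempty M]
    (hbasis : ∀ (x : M) (O : Set M), IsOpen O → x ∈ O → ∃ C, IsClopen C ∧ x ∈ C ∧ C ⊆ O)
    (hnc : ∀ U : Set M, IsClopen U → U.Nonempty → ¬ IsCompact U) :
    Nonempty (M ≃ₜ (ℕ → ℕ)) := by
  let _ := TopologicalSpace.upgradeIsCompletelyMetrizable M
  have hpart : ∀ (U : Set M) (n : ℕ), IsClopen U → U.Nonempty → ∃ A : ℕ → Set M,
      (∀ k, IsClopen (A k) ∧ (A k).Nonempty ∧ Metric.ediam (A k) ≤ ((n : ENNReal) + 1)⁻¹) ∧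
      Pairwise (fun i j => Disjoint (A i) (A j)) ∧ ⋃ k, A k = U := by
    intro U n hU hne
    refine exists_clopen_partition (small := fun s => Metric.ediam s ≤ ((n : ENNReal) + 1)⁻¹)
      (fun s t hst ht => (Metric.ediam_mono hst).trans ht) ?_ hU (hnc U hU hne)
    intro x O hO hx
    have hpos : (0 : ENNReal) < ((n : ENNReal) + 1)⁻¹ / 2 := by simp
    obtain ⟨C, h1, h2, h3⟩ := hbasis x (O ∩ Metric.eball x (((n : ENNReal) + 1)⁻¹ / 2))
      (hO.inter Metric.isOpen_eball) ⟨hx, Metric.mem_eball_self hpos⟩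
    refine ⟨C, h1, h2, h3.trans inter_subset_left, ?_⟩
    refine (Metric.ediam_mono (h3.trans inter_subset_right)).trans ?_
    refine Metric.ediam_eball_le.trans ?_
    rw [ENNReal.mul_div_cancel (by simp) (by simp)]
  choose! P hP hPd hPU using hpart
  let A : List ℕ → Set M := fun l => l.rec univ fun k l ih => P ih l.length k
  have hA0 : A [] = univ := rfl
  have hA1 : ∀ k l, A (k :: l) = P (A l) l.length k := fun k l => rfl
  have hA : ∀ l, IsClopen (A l) ∧ (A l).Nonempty := by
    intro l
    induction l with
    | nil => exact ⟨isClopen_univ, univ_nonempty⟩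
    | cons k l ih =>
      rw [hA1]
      exact ⟨(hP _ _ ih.1 ih.2 k).1, (hP _ _ ih.1 ih.2 k).2.1⟩
  have hAU : ∀ l, ⋃ k, A (k :: l) = A l := fun l => hPU _ _ (hA l).1 (hA l).2
  have hanti : CantorScheme.Antitone A := fun l k => by
    rw [← hAU l]; exact subset_iUnion (fun k => A (k :: l)) k
  have hdisj : CantorScheme.Disjoint A := fun l => hPd _ _ (hA l).1 (hA l).2
  have hdiam : CantorScheme.VanishingDiam A := by
    intro x
    rw [← Filter.tendsto_add_atTop_iff_nat 1]
    refine tendsto_of_tendsto_of_tendsto_of_le_of_le tendsto_const_nhds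
      (h := fun n : ℕ => ((n : ENNReal) + 1)⁻¹) ?_ (fun _ => zero_le) ?_
    · have := (Filter.tendsto_add_atTop_iff_nat 1).2 ENNReal.tendsto_inv_nat_nhds_zero
      simpa using this
    · intro n
      change Metric.ediam (A (res x (n + 1))) ≤ _
      rw [res_succ, hA1, res_length]
      exact (hP _ _ (hA _).1 (hA _).2 _).2.2
  have hdom := (hanti.closureAntitone fun l => (hA l).1.isClosed).map_of_vanishingDiam hdiam
    fun l => (hA l).2
  have hcont := hdiam.map_continuous
  have hinj := hdisj.map_injective
  have hmem := CantorScheme.map_mem (A := A)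
  let E : (ℕ → ℕ) → M := fun b => (CantorScheme.inducedMap A).2 ⟨b, by rw [hdom]; trivial⟩
  have hEm : ∀ b n, E b ∈ A (res b n) := fun b n => hmem ⟨b, by rw [hdom]; trivial⟩ n
  have hEc : Continuous E := hcont.comp (Continuous.subtype_mk continuous_id _)
  have hEi : Function.Injective E := fun b c h => congrArg Subtype.val (hinj h)
  -- two points of the same level that share a point coincide
  have huniq : ∀ (b c : ℕ → ℕ) (m : M) (n : ℕ), m ∈ A (res b n) → m ∈ A (res c n) →
      res b n = res c n := by
    intro b c m n
    induction n with
    | zero => simp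
    | succ n ih =>
      rw [res_succ, res_succ]
      intro h1 h2
      have e := ih (hanti _ _ h1) (hanti _ _ h2)
      rw [e] at h1 ⊢
      congr 1
      by_contra hne
      exact (hdisj (res c n) hne).le_bot ⟨h1, h2⟩
  have hEs : Function.Surjective E := by
    intro m
    have hstep : ∀ l : {l : List ℕ // m ∈ A l}, ∃ k, m ∈ A (k :: l.1) := by
      rintro ⟨l, hl⟩
      rw [← hAU l] at hl
      exact mem_iUnion.1 hl
    choose k hk using hstep
    let s : ℕ → {l : List ℕ // m ∈ A l} := fun n =>
      n.rec ⟨[], trivial⟩ fun _ l => ⟨k l :: l.1, hk l⟩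
    let b : ℕ → ℕ := fun n => k (s n)
    have hb : ∀ n, res b n = (s n).1 := by
      intro n
      induction n with
      | zero => rfl
      | succ n ih => rw [res_succ, ih]
    refine ⟨b, ?_⟩
    by_contra hne
    obtain ⟨n, hn⟩ := hdiam.dist_lt (dist (E b) m) (dist_pos.2 hne) b
    exact lt_irrefl _ (hn _ (hEm b n) _ (by rw [hb]; exact (s n).2))
  have hEo : IsOpenMap E := by
    rw [isOpenMap_iff_nhds_le]
    intro b W hW
    obtain ⟨n, hn⟩ : ∃ n, cylinder b n ⊆ E ⁻¹' W := by
      obtain ⟨V, ⟨c, n, rfl⟩, hbV, hVW⟩ :=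
        ((isTopologicalBasis_cylinders fun _ : ℕ => ℕ).mem_nhds_iff).1 hW
      exact ⟨n, by rwa [mem_cylinder_iff_eq.1 hbV]⟩
    refine Filter.mem_of_superset ((hA (res b n)).1.isOpen.mem_nhds (hEm b n)) ?_
    intro m hm
    obtain ⟨c, rfl⟩ := hEs m
    apply hn
    rw [cylinder_eq_res]
    exact huniq c b _ n (hEm c n) hm
  exact ⟨((Equiv.ofBijective E ⟨hEi, hEs⟩).toHomeomorphOfContinuousOpen hEc hEo).symm⟩

/-- A closed set minus countably many closed sets is Polish. -/
theorem polish_of_diff [PolishSpace M] {ι : Type*} [Countable ι] {L : Set M} (hL : IsClosed L)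
    {F : ι → Set M} (hF : ∀ n, IsClosed (F n)) : PolishSpace ↥(L \ ⋃ n, F n) := by
  have hU : ∀ n, PolishSpace ↥((F n)ᶜ) := fun n => (hF n).isOpen_compl.polishSpace
  let j : ↥(L \ ⋃ n, F n) → M × ((n : ι) → ↥((F n)ᶜ)) := fun m =>
    (m.1, fun n => ⟨m.1, fun h => m.2.2 (mem_iUnion.2 ⟨n, h⟩)⟩)
  have hjc : Continuous j := by
    refine continuous_subtype_val.prodMk (continuous_pi fun n => ?_)
    exact Continuous.subtype_mk continuous_subtype_val _
  have hrange : range j = {p | p.1 ∈ L} ∩ ⋂ n, {p | ((p.2 n).1 : M) = p.1} := by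
    ext p
    constructor
    · rintro ⟨m, rfl⟩
      exact ⟨m.2.1, mem_iInter.2 fun n => rfl⟩
    · rintro ⟨h1, h2⟩
      rw [mem_iInter] at h2
      have h2' : ∀ n, ((p.2 n).1 : M) = p.1 := h2
      refine ⟨⟨p.1, h1, fun h => ?_⟩, ?_⟩
      · obtain ⟨n, hn⟩ := mem_iUnion.1 h
        exact (p.2 n).2 (by rwa [h2' n])
      · refine Prod.ext rfl (funext fun n => Subtype.ext ?_)
        exact (h2' n).symm
  have hcl : IsClosedEmbedding j := by
    refine ⟨⟨?_, fun a b h => Subtype.ext (congrArg Prod.fst h)⟩, ?_⟩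
    · refine IsInducing.of_comp hjc continuous_fst ?_
      exact IsInducing.subtypeVal
    · rw [hrange]
      refine (hL.preimage continuous_fst).inter (isClosed_iInter fun n => ?_)
      exact isClosed_eq (continuous_subtype_val.comp ((continuous_apply n).comp continuous_snd))
        continuous_fst
  exact hcl.polishSpace

end Baire
end AcylDyn

/-! ### Invariant copies of the Baire space -/

namespace AcylDyn
open Topology Set

/-- In a Polish `G`-space, a closed invariant set containing `x`, `y` and a third orbit, where the
orbits of `y` and `z₀` are dense, contains an invariant copy of the Baire space through `x` and
`y`: remove the orbit of `z₀` (so that no clopen set is compact) and all translates of countably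
many spheres missing the orbits of `x` and `y` (so that small balls become clopen). -/
theorem exists_baire_subset {G X : Type*} [Group G] [Countable G] [MetricSpace X] [CompleteSpace X]
    [TopologicalSpace.SeparableSpace X] [MulAction G X] [ContinuousConstSMul G X]
    {L : Set X} (hL : IsClosed L) (hinv : ∀ g : G, ∀ z ∈ L, g • z ∈ L) {x y z₀ : X}
    (hx : x ∈ L) (hy : y ∈ L) (hz : z₀ ∈ L) (hzx : ∀ g : G, g • x ≠ z₀)
    (hzy : ∀ g : G, g • y ≠ z₀)
    (hyd : L ⊆ closure (range fun g : G => g • y))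
    (hzd : L ⊆ closure (range fun g : G => g • z₀)) :
    ∃ M : Set X, M ⊆ L ∧ (∀ g : G, ∀ z ∈ M, g • z ∈ M) ∧ x ∈ M ∧ y ∈ M ∧
      Nonempty (M ≃ₜ (ℕ → ℕ)) := by
  have _ : Nonempty X := ⟨x⟩
  let c := TopologicalSpace.denseSeq X
  have hr : ∀ i n : ℕ, ∃ r : ℝ, 1 / ((n : ℝ) + 2) < r ∧ r < 1 / ((n : ℝ) + 1) ∧
      ∀ g : G, dist (g • x) (c i) ≠ r ∧ dist (g • y) (c i) ≠ r := by
    intro i n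
    have hc : ((range fun g : G => dist (g • x) (c i)) ∪
        range fun g : G => dist (g • y) (c i)).Countable :=
      (countable_range _).union (countable_range _)
    have hlt : 1 / ((n : ℝ) + 2) < 1 / ((n : ℝ) + 1) := by
      apply one_div_lt_one_div_of_lt <;> [positivity; linarith]
    obtain ⟨r, hr, h1, h2⟩ := (hc.dense_compl ℝ).exists_between hlt
    exact ⟨r, h1, h2, fun g => ⟨fun h => hr (Or.inl ⟨g, h⟩), fun h => hr (Or.inr ⟨g, h⟩)⟩⟩
  choose r hr1 hr2 hr3 using hr
  let F : G × Option (ℕ × ℕ) → Set X := fun p =>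
    p.2.elim {p.1 • z₀} fun q => {z | dist (p.1 • z) (c q.1) = r q.1 q.2}
  have hF : ∀ p, IsClosed (F p) := by
    rintro ⟨g, _ | q⟩
    · exact isClosed_singleton
    · exact isClosed_eq ((continuous_const_smul g).dist continuous_const) continuous_const
  let M : Set X := L \ ⋃ p, F p
  have hMpol : PolishSpace M := polish_of_diff hL hF
  have hM : ∀ z, z ∈ M ↔ z ∈ L ∧ (∀ g : G, z ≠ g • z₀) ∧
      ∀ (g : G) (i n : ℕ), dist (g • z) (c i) ≠ r i n := by
    intro z
    constructor
    · rintro ⟨h1, h2⟩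
      refine ⟨h1, fun g h => h2 (mem_iUnion.2 ⟨(g, none), h⟩), fun g i n h =>
        h2 (mem_iUnion.2 ⟨(g, some (i, n)), h⟩)⟩
    · rintro ⟨h1, h2, h3⟩
      refine ⟨h1, fun h => ?_⟩
      obtain ⟨⟨g, _ | q⟩, h⟩ := mem_iUnion.1 h
      · exact h2 g h
      · exact h3 g q.1 q.2 h
  have hMinv : ∀ g : G, ∀ z ∈ M, g • z ∈ M := by
    intro g z hz
    rw [hM] at hz ⊢
    refine ⟨hinv g z hz.1, fun h e => hz.2.1 (g⁻¹ * h) ?_, fun h i n e =>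
      hz.2.2 (h * g) i n (by rwa [mul_smul])⟩
    rw [mul_smul, ← e, inv_smul_smul]
  have hxM : x ∈ M := (hM x).2 ⟨hx, fun g h => hzx g⁻¹ (by rw [h, inv_smul_smul]),
    fun g i n => (hr3 i n g).1⟩
  have hyM : y ∈ M := (hM y).2 ⟨hy, fun g h => hzy g⁻¹ (by rw [h, inv_smul_smul]),
    fun g i n => (hr3 i n g).2⟩
  have _ : Nonempty M := ⟨⟨x, hxM⟩⟩
  refine ⟨M, sdiff_subset, hMinv, hxM, hyM, homeo_baire ?_ ?_⟩
  · rintro ⟨m, hm⟩ O hO hmO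
    obtain ⟨O', hO', rfl⟩ := isOpen_induced_iff.1 hO
    obtain ⟨ε, hε, hb⟩ := Metric.isOpen_iff.1 hO' m hmO
    obtain ⟨n, hn⟩ := exists_nat_one_div_lt (half_pos hε)
    obtain ⟨i, hi⟩ : ∃ i, dist m (c i) < 1 / ((n : ℝ) + 2) := by
      obtain ⟨i, hi⟩ := (TopologicalSpace.denseRange_denseSeq X).exists_dist_lt m
        (show (0 : ℝ) < 1 / ((n : ℝ) + 2) by positivity)
      exact ⟨i, hi⟩
    refine ⟨Subtype.val ⁻¹' Metric.ball (c i) (r i n), ⟨?_, ?_⟩, ?_, ?_⟩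
    · -- on `M` the open and the closed ball agree
      have : (Subtype.val ⁻¹' Metric.ball (c i) (r i n) : Set M) =
          Subtype.val ⁻¹' Metric.closedBall (c i) (r i n) := by
        ext ⟨z, hz⟩
        have := ((hM z).1 hz).2.2 1 i n
        rw [one_smul] at this
        exact ⟨fun h => Metric.ball_subset_closedBall h, fun h => lt_of_le_of_ne h this⟩
      rw [this]
      exact Metric.isClosed_closedBall.preimage continuous_subtype_val
    · exact Metric.isOpen_ball.preimage continuous_subtype_val
    · exact hi.trans (hr1 i n)
    · rintro ⟨z, hz⟩ hzb
      apply hb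
      have h1 : dist z (c i) < r i n := hzb
      have h2 := hr2 i n
      have h3 := hr1 i n
      rw [Metric.mem_ball]
      have := dist_triangle_right z m (c i)
      linarith
  · rintro K hK ⟨⟨k, hkM⟩, hkK⟩ hKc
    obtain ⟨O, hO, rfl⟩ := isOpen_induced_iff.1 hK.isOpen
    have hcl : IsClosed (Subtype.val '' (Subtype.val ⁻¹' O : Set M)) :=
      (hKc.image continuous_subtype_val).isClosed
    obtain ⟨_, hgO, g, rfl⟩ := mem_closure_iff.1 (hzd hkM.1) O hO hkK
    have hgK : g • z₀ ∉ Subtype.val '' (Subtype.val ⁻¹' O : Set M) := by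
      rintro ⟨⟨m, hm⟩, -, h⟩
      exact ((hM m).1 hm).2.1 g h
    obtain ⟨_, ⟨hhO, hhK⟩, h, rfl⟩ := mem_closure_iff.1 (hyd (hinv g z₀ hz))
      (O \ Subtype.val '' (Subtype.val ⁻¹' O : Set M)) (hO.sdiff hcl) ⟨hgO, hgK⟩
    exact hhK ⟨⟨h • y, hMinv h y hyM⟩, hhO, rfl⟩

end AcylDyn

/-! ### The Gromov completion of a group -/

namespace AcylDyn
open Topology Set Filter Uniformity UniformSpace

/-- The data of a Gromov product on a group `G` (transported from an orbit map): a symmetric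
kernel satisfying the hyperbolic inequality, quasi-invariant under left multiplication, and
bounded in the second variable. -/
structure GpFrame (G : Type*) [Group G] where
  /-- the Gromov product -/
  gp : G → G → ℝ
  /-- the hyperbolicity constant -/
  δ : ℝ
  /-- a bound for `gp g` -/
  size : G → ℝ
  δ_nonneg : 0 ≤ δ
  symm : ∀ g h, gp g h = gp h g
  tri : ∀ g h k, min (gp g k) (gp k h) ≤ gp g h + δ
  quasi : ∀ k g h, gp g h ≤ gp (k * g) (k * h) + size k
  bound : ∀ g h, gp g h ≤ size g

namespace GpFrame
variable {G : Type*} [Group G] (H : GpFrame G)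

/-- A copy of `G` carrying the uniform structure of the Gromov product. -/
@[ext]
structure Pts (_ : GpFrame G) where
  /-- the underlying group element -/
  val : G

/-- The basic entourages: equal elements, or elements with large Gromov product. -/
def ent (n : ℕ) : Set (H.Pts × H.Pts) := {p | p.1 = p.2 ∨ (n : ℝ) < H.gp p.1.val p.2.val}

theorem ent_anti {m n : ℕ} (h : m ≤ n) : H.ent n ⊆ H.ent m := by
  rintro p (hp | hp)
  · exact Or.inl hp
  · exact Or.inr (lt_of_le_of_lt (by exact_mod_cast h) hp)

/-- The filter basis of the entourages `ent n`. -/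
def basis : FilterBasis (H.Pts × H.Pts) where
  sets := range H.ent
  nonempty := ⟨_, 0, rfl⟩
  inter_sets := by
    rintro _ _ ⟨m, rfl⟩ ⟨n, rfl⟩
    exact ⟨_, ⟨max m n, rfl⟩, subset_inter (H.ent_anti (le_max_left _ _))
      (H.ent_anti (le_max_right _ _))⟩

/-- The uniform core with basis `ent n`. -/
def core : UniformSpace.Core H.Pts := by
  refine UniformSpace.Core.mkOfBasis H.basis ?_ ?_ ?_
  · rintro _ ⟨n, rfl⟩ x
    exact Or.inl rfl
  · rintro _ ⟨n, rfl⟩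
    refine ⟨_, ⟨n, rfl⟩, ?_⟩
    rintro ⟨x, y⟩ (h | h)
    · exact Or.inl h.symm
    · exact Or.inr (by rw [H.symm] at h; exact h)
  · rintro _ ⟨n, rfl⟩
    obtain ⟨m, hm⟩ := exists_nat_ge H.δ
    refine ⟨_, ⟨n + m, rfl⟩, ?_⟩
    rintro ⟨x, y⟩ ⟨z, hxz, hzy⟩
    have hsub := H.ent_anti (Nat.le_add_right n m)
    rcases hxz with hxz | hxz
    · have hxz : x = z := hxz
      rw [hxz]; exact hsub hzy
    rcases hzy with hzy | hzy
    · have hzy : z = y := hzy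
      rw [← hzy]; exact hsub (Or.inr hxz)
    right
    have h1 : ((n + m : ℕ) : ℝ) < min (H.gp x.val z.val) (H.gp z.val y.val) := lt_min hxz hzy
    have h2 := H.tri x.val y.val z.val
    push_cast at h1
    change (n : ℝ) < H.gp x.val y.val
    linarith

/-- The Gromov uniform structure. -/
@[reducible]
def unif : UniformSpace H.Pts := UniformSpace.ofCore H.core

theorem unif_basis : (@uniformity _ H.unif).HasBasis (fun _ : ℕ => True) H.ent := by
  constructor
  intro t
  have : t ∈ @uniformity _ H.unif ↔ ∃ u ∈ H.basis.sets, u ⊆ t := H.basis.mem_filter_iff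
  rw [this]
  simp [basis]

noncomputable instance : PseudoMetricSpace H.Pts := by
  let _ := H.unif
  have : (𝓤 H.Pts).IsCountablyGenerated := H.unif_basis.isCountablyGenerated
  exact UniformSpace.pseudoMetricSpace H.Pts

theorem hasBasis : (𝓤 H.Pts).HasBasis (fun _ : ℕ => True) H.ent := H.unif_basis

instance : MulAction G H.Pts where
  smul g x := ⟨g * x.val⟩
  one_smul x := Pts.ext (one_mul x.val)
  mul_smul g h x := Pts.ext (mul_assoc g h x.val)

instance : UniformContinuousConstSMul G H.Pts where
  uniformContinuous_const_smul k := by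
    refine (H.hasBasis.uniformContinuous_iff H.hasBasis).2 fun n _ => ?_
    obtain ⟨m, hm⟩ := exists_nat_ge (H.size k)
    refine ⟨n + m, trivial, fun x y h => ?_⟩
    rcases h with h | h
    · exact Or.inl (congrArg (k • ·) h)
    · right
      have h2 := H.quasi k x.val y.val
      change ((n + m : ℕ) : ℝ) < H.gp x.val y.val at h
      push_cast at h
      change (n : ℝ) < H.gp (k * x.val) (k * y.val)
      linarith

/-- The Gromov completion: `G` together with the limit points of the action. -/
abbrev Cpl : Type _ := Completion H.Pts

/-- The canonical map of `G` into its Gromov completion. -/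
noncomputable def pt (g : G) : H.Cpl := ((⟨g⟩ : H.Pts) : Completion H.Pts)

theorem smul_pt (k g : G) : k • H.pt g = H.pt (k * g) := 
  (Completion.coe_smul k (⟨g⟩ : H.Pts)).symm

theorem dense_pt : DenseRange H.pt :=
  Completion.denseRange_coe.comp (Function.Surjective.denseRange fun x : H.Pts => ⟨x.val, rfl⟩)
    (Completion.continuous_coe _)

instance [Countable G] : TopologicalSpace.SeparableSpace H.Cpl :=
  ⟨range H.pt, countable_range _, H.dense_pt⟩

theorem exists_pt {ξ : H.Cpl} {U : Set H.Cpl} (h : U ∈ 𝓝 ξ) : ∃ g, H.pt g ∈ U := by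
  obtain ⟨_, h1, g, rfl⟩ := mem_closure_iff_nhds.1 (H.dense_pt ξ) U h
  exact ⟨g, h1⟩

theorem ent_of_entourage {W : Set (H.Cpl × H.Cpl)} (hW : W ∈ 𝓤 H.Cpl) :
    ∃ n : ℕ, ∀ g h : G, (n : ℝ) < H.gp g h → (H.pt g, H.pt h) ∈ W := by
  have := (Completion.uniformContinuous_coe H.Pts) hW
  obtain ⟨n, -, hn⟩ := H.hasBasis.mem_iff.1 (mem_map.1 this)
  exact ⟨n, fun g h hgh => hn (Or.inr hgh : ((⟨g⟩, ⟨h⟩) : H.Pts × H.Pts) ∈ H.ent n)⟩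

theorem entourage_of_ent (n : ℕ) : ∃ W ∈ 𝓤 H.Cpl, ∀ g h : G, (H.pt g, H.pt h) ∈ W →
    g = h ∨ (n : ℝ) < H.gp g h := by
  have h1 := (Completion.isUniformInducing_coe H.Pts).comap_uniformity
  have h2 : H.ent n ∈ 𝓤 H.Pts := H.hasBasis.mem_of_mem trivial
  rw [← h1] at h2
  obtain ⟨W, hW, hWn⟩ := mem_comap.1 h2
  refine ⟨W, hW, fun g h hgh => ?_⟩
  have h3 : ((⟨g⟩, ⟨h⟩) : H.Pts × H.Pts) ∈ H.ent n := hWn hgh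
  exact h3.imp (congrArg Pts.val) id

/-- Elements having a large Gromov product with elements near `ξ` are themselves near `ξ`. -/
theorem near {ξ : H.Cpl} {U : Set H.Cpl} (hU : U ∈ 𝓝 ξ) : ∃ D : ℝ, ∃ O ∈ 𝓝 ξ, ∀ s t : G,
    H.pt t ∈ O → D < H.gp s t → H.pt s ∈ U := by
  obtain ⟨W, hW, hWU⟩ := UniformSpace.mem_nhds_iff.1 hU
  obtain ⟨W', hW', hWW⟩ := comp_mem_uniformity_sets hW
  obtain ⟨n, hn⟩ := H.ent_of_entourage hW'
  refine ⟨n, _, UniformSpace.ball_mem_nhds ξ hW', fun s t ht hst => hWU ?_⟩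
  exact hWW ⟨H.pt t, ht, hn t s (by rwa [H.symm])⟩

/-- Gromov products are bounded near pairs of distinct points. -/
theorem sep {ξ η : H.Cpl} (h : ξ ≠ η) : ∃ D : ℝ, ∃ O ∈ 𝓝 ξ, ∃ O' ∈ 𝓝 η, ∀ s t : G,
    H.pt s ∈ O → H.pt t ∈ O' → H.gp s t ≤ D := by
  obtain ⟨W, hW, hne⟩ : ∃ W ∈ 𝓤 H.Cpl, (ξ, η) ∉ W := by
    by_contra hcon
    push Not at hcon
    exact h (eq_of_uniformity fun {V} hV => hcon V hV)
  obtain ⟨W', ⟨hW', hcl⟩, hWW⟩ := (uniformity_hasBasis_closed (α := H.Cpl)).mem_iff.1 hW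
  have hop : W'ᶜ ∈ 𝓝 (ξ, η) := hcl.isOpen_compl.mem_nhds fun h => hne (hWW h)
  obtain ⟨O, hO, O', hO', hsub⟩ := mem_nhds_prod_iff.1 hop
  obtain ⟨n, hn⟩ := H.ent_of_entourage hW'
  refine ⟨n, O, hO, O', hO', fun s t hs ht => ?_⟩
  by_contra hcon
  exact hsub (mk_mem_prod hs ht) (hn s t (lt_of_not_ge hcon))

theorem close_aux (ξ : H.Cpl) (n : ℕ) : ∃ O ∈ 𝓝 ξ, ∀ s t : G, H.pt s ∈ O → H.pt t ∈ O →
    s = t ∨ (n : ℝ) < H.gp s t := by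
  obtain ⟨W, hW, h⟩ := H.entourage_of_ent n
  obtain ⟨W', hW', hsym, hWW⟩ := comp_symm_mem_uniformity_sets hW
  refine ⟨_, UniformSpace.ball_mem_nhds ξ hW', fun s t hs ht => h s t ?_⟩
  exact hWW ⟨ξ, hsym.symm _ _ hs, ht⟩

/-- Points of `G` are isolated in the completion. -/
theorem isOpen_pt (g : G) : IsOpen {H.pt g} := by
  obtain ⟨n, hn⟩ := exists_nat_ge (H.size g)
  obtain ⟨O, hO, h⟩ := H.close_aux (H.pt g) n
  have hOsub : ∀ s, H.pt s ∈ O → H.pt s = H.pt g := by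
    intro s hs
    rcases h g s (mem_of_mem_nhds hO) hs with h | h
    · rw [h]
    · have := H.bound g s
      linarith
  have hsub : interior O ⊆ {H.pt g} := by
    intro ξ hξ
    by_contra hne
    obtain ⟨s, hs1, hs2⟩ := H.exists_pt
      (((isOpen_interior.sdiff isClosed_singleton).mem_nhds ⟨hξ, hne⟩))
    exact hs2 (hOsub s (interior_subset hs1))
  have : interior O = {H.pt g} := by
    refine subset_antisymm hsub ?_
    rintro _ rfl
    exact mem_interior_iff_mem_nhds.2 hO
  rw [← this]
  exact isOpen_interior

/-- Gromov products tend to infinity at points that do not come from `G`. -/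
theorem close {ξ : H.Cpl} (hξ : ∀ g, ξ ≠ H.pt g) (n : ℝ) : ∃ O ∈ 𝓝 ξ, ∀ s t : G,
    H.pt s ∈ O → H.pt t ∈ O → n < H.gp s t := by
  obtain ⟨m, hm⟩ := exists_nat_ge (n + H.δ)
  obtain ⟨O, hO, h⟩ := H.close_aux ξ m
  refine ⟨O, hO, fun s t hs ht => ?_⟩
  have hd := H.δ_nonneg
  rcases h s t hs ht with rfl | h1
  · -- compare with a third element near `ξ`
    obtain ⟨u, hu, hus⟩ := H.exists_pt (inter_mem hO
      (isClosed_singleton.isOpen_compl.mem_nhds (hξ s) : {H.pt s}ᶜ ∈ 𝓝 ξ))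
    rcases h s u hs hu with rfl | h1
    · exact absurd rfl hus
    · have h2 := H.tri s s u
      rw [H.symm u s, min_self] at h2
      linarith
  · linarith

theorem exists_lim {g : ℕ → G}
    (hg : Tendsto (fun p : ℕ × ℕ => H.gp (g p.1) (g p.2)) atTop atTop) :
    ∃ ξ : H.Cpl, Tendsto (fun n => H.pt (g n)) atTop (𝓝 ξ) ∧ ∀ h, ξ ≠ H.pt h := by
  have hc : CauchySeq fun n => H.pt (g n) := by
    rw [cauchySeq_iff_tendsto, Prod.map_def]
    intro W hW
    obtain ⟨n, hn⟩ := H.ent_of_entourage hW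
    rw [mem_map]
    filter_upwards [hg.eventually (Ioi_mem_atTop (n : ℝ))] with p hp
    exact hn _ _ hp
  obtain ⟨ξ, hξ⟩ := cauchySeq_tendsto_of_complete hc
  refine ⟨ξ, hξ, ?_⟩
  rintro h rfl
  have h1 : ∀ᶠ n in atTop, H.pt (g n) = H.pt h := hξ ((H.isOpen_pt h).mem_nhds rfl)
  obtain ⟨m, hm⟩ := exists_nat_ge (H.size h)
  obtain ⟨O, hO, h2⟩ := H.close_aux (H.pt h) m
  have h3 : ∀ᶠ n in atTop, g n = h := by
    filter_upwards [h1] with n hn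
    rcases h2 h (g n) (mem_of_mem_nhds hO) (by rw [hn]; exact mem_of_mem_nhds hO) with h4 | h4
    · exact h4.symm
    · have := H.bound h (g n)
      linarith
  have h4 : ∀ᶠ n in atTop, H.size h < H.gp (g n) (g n) :=
    (hg.comp tendsto_atTop_diagonal) (Ioi_mem_atTop _)
  obtain ⟨n, hn, hn'⟩ := (h3.and h4).exists
  rw [hn] at hn'
  exact absurd (H.bound h h) (not_le.2 hn')

theorem tendsto_of_gp {ξ : H.Cpl} {g h : ℕ → G} (hg : Tendsto (fun n => H.pt (g n)) atTop (𝓝 ξ))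
    (hgh : Tendsto (fun n => H.gp (g n) (h n)) atTop atTop) :
    Tendsto (fun n => H.pt (h n)) atTop (𝓝 ξ) := by
  intro U hU
  obtain ⟨D, O, hO, hD⟩ := H.near hU
  rw [mem_map]
  filter_upwards [hg.eventually hO, hgh.eventually (Ioi_mem_atTop D)] with n h1 h2
  exact hD _ _ h1 (by rw [H.symm]; exact h2)

theorem gp_tendsto {ξ : H.Cpl} (hξ : ∀ g, ξ ≠ H.pt g) {ι : Type*} {l : Filter ι} {g h : ι → G}
    (hg : Tendsto (fun n => H.pt (g n)) l (𝓝 ξ))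
    (hh : Tendsto (fun n => H.pt (h n)) l (𝓝 ξ)) :
    Tendsto (fun n => H.gp (g n) (h n)) l atTop := by
  refine tendsto_atTop.2 fun b => ?_
  obtain ⟨O, hO, hb⟩ := H.close hξ b
  filter_upwards [hg.eventually hO, hh.eventually hO] with n h1 h2
  exact (hb _ _ h1 h2).le

theorem smul_ne_pt {ξ : H.Cpl} (hξ : ∀ g, ξ ≠ H.pt g) (k : G) : ∀ g, k • ξ ≠ H.pt g := by
  intro g h
  apply hξ (k⁻¹ * g)
  rw [← H.smul_pt, ← h, inv_smul_smul]

end GpFrame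
end AcylDyn

/-! ### Loxodromic elements -/

namespace AcylDyn
open Topology Set Filter

section Lox
variable {G S : Type*} [Group G] [MetricSpace S] [MulAction G S] [IsIsometricSMul G S] {δ : ℝ}

/-- The Gromov product of `G` coming from the orbit of the base point `e`. -/
noncomputable def orbitFrame (G : Type*) {S : Type*} [Group G] [MetricSpace S] [MulAction G S]
    [IsIsometricSMul G S] {δ : ℝ} (hf : FourPt S δ) (e : S) : GpFrame G where
  gp g h := gprod e (g • e) (h • e)
  δ := δ
  size g := dist (g • e) e
  δ_nonneg := hf.nonneg e
  symm g h := gprod_comm _ _ _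
  tri g h k := hf.gp_min _ _ _ _
  quasi k g h := by
    unfold gprod
    have h1 := dist_triangle ((k * g) • e) (k • e) e
    have h2 := dist_triangle ((k * h) • e) (k • e) e
    have h3 := dist_triangle_right ((k * g) • e) (k • e) e
    have h4 := dist_triangle_right ((k * h) • e) (k • e) e
    rw [mul_smul, dist_smul] at h1 h2 h3 h4
    rw [mul_smul, mul_smul, dist_smul]
    linarith
  bound g h := gprod_le_left _ _ _

variable (hf : FourPt S δ) (e : S)

theorem orbit_size_inv (g : G) : (orbitFrame G hf e).size g⁻¹ = (orbitFrame G hf e).size g := by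
  change dist (g⁻¹ • e) e = dist (g • e) e
  rw [← dist_smul g (g⁻¹ • e) e, smul_inv_smul, dist_comm]

theorem orbit_size_mul (g h : G) : (orbitFrame G hf e).size (g * h) =
    (orbitFrame G hf e).size g + (orbitFrame G hf e).size h - 2 * (orbitFrame G hf e).gp g⁻¹ h := by
  have h1 := orbit_size_inv hf e g
  change dist (g⁻¹ • e) e = dist (g • e) e at h1
  change dist ((g * h) • e) e = dist (g • e) e + dist (h • e) e - 2 * gprod e (g⁻¹ • e) (h • e)
  unfold gprod
  rw [← dist_smul g (g⁻¹ • e) (h • e), smul_inv_smul, mul_smul, dist_comm e, h1]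
  ring

theorem orbit_gp_mul (g h : G) : (orbitFrame G hf e).gp (g * h) g =
    (orbitFrame G hf e).size g - (orbitFrame G hf e).gp h g⁻¹ := by
  have h1 := orbit_size_mul hf e g h
  rw [(orbitFrame G hf e).symm h]
  have h2 : (orbitFrame G hf e).gp (g * h) g =
    ((orbitFrame G hf e).size (g * h) + (orbitFrame G hf e).size g -
      (orbitFrame G hf e).size h) / 2 := by
    change gprod e ((g * h) • e) (g • e) =
      (dist ((g * h) • e) e + dist (g • e) e - dist (h • e) e) / 2
    unfold gprod
    rw [mul_smul, dist_smul]
  rw [h2, h1]; ring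

theorem orbit_gp_nonneg (g h : G) : 0 ≤ (orbitFrame G hf e).gp g h := gprod_nonneg _ _ _

theorem orbit_gp_self (g : G) : (orbitFrame G hf e).gp g g = (orbitFrame G hf e).size g :=
  gprod_self _ _

theorem orbit_gp_one (g : G) : (orbitFrame G hf e).gp g 1 = 0 := by
  change gprod e (g • e) ((1 : G) • e) = 0
  unfold gprod
  rw [one_smul, dist_self]; ring

/-- `f` acts loxodromically: its powers escape linearly, and the positive and negative powers
have bounded Gromov products. -/
def Lox (f : G) : Prop := (∀ n : ℕ, (n : ℝ) ≤ (orbitFrame G hf e).size (f ^ n)) ∧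
  ∃ D, ∀ n m : ℕ, (orbitFrame G hf e).gp (f⁻¹ ^ n) (f ^ m) ≤ D

variable {hf e}

theorem Lox.inv {f : G} (h : Lox hf e f) : Lox hf e f⁻¹ := by
  refine ⟨fun n => ?_, ?_⟩
  · rw [inv_pow, orbit_size_inv]; exact h.1 n
  · obtain ⟨D, hD⟩ := h.2
    exact ⟨D, fun n m => by rw [inv_inv, (orbitFrame G hf e).symm]; exact hD m n⟩

theorem lox_step {f : G} (h : 2 * (orbitFrame G hf e).gp f f⁻¹ + 3 * δ + 1 <
    (orbitFrame G hf e).size f) (n : ℕ) :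
    (orbitFrame G hf e).gp f⁻¹ (f ^ n) ≤ (orbitFrame G hf e).gp f f⁻¹ + δ ∧
    (n : ℝ) ≤ (orbitFrame G hf e).size (f ^ n) := by
  have hδ : 0 ≤ δ := hf.nonneg e
  have ha := orbit_gp_nonneg hf e f f⁻¹
  induction n with
  | zero =>
    rw [pow_zero, orbit_gp_one]
    refine ⟨by linarith, ?_⟩
    rw [Nat.cast_zero]
    exact dist_nonneg
  | succ n ih =>
    have h1 : (orbitFrame G hf e).gp (f ^ (n + 1)) f =
        (orbitFrame G hf e).size f - (orbitFrame G hf e).gp f⁻¹ (f ^ n) := by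
      rw [pow_succ', orbit_gp_mul, (orbitFrame G hf e).symm f⁻¹]
    have h2 := orbit_size_mul hf e f (f ^ n)
    rw [← pow_succ'] at h2
    refine ⟨?_, by push_cast; linarith [ih.1, ih.2]⟩
    have h3 : min ((orbitFrame G hf e).gp f⁻¹ (f ^ (n + 1)))
        ((orbitFrame G hf e).gp (f ^ (n + 1)) f) ≤ (orbitFrame G hf e).gp f⁻¹ f + δ :=
      (orbitFrame G hf e).tri f⁻¹ f (f ^ (n + 1))
    rw [(orbitFrame G hf e).symm f⁻¹ f] at h3
    rcases min_le_iff.1 h3 with h3 | h3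
    · exact h3
    · linarith [ih.1]

/-- A local criterion for being loxodromic. -/
theorem lox_of_local {f : G} (h : 2 * (orbitFrame G hf e).gp f f⁻¹ + 3 * δ + 1 <
    (orbitFrame G hf e).size f) : Lox hf e f := by
  have hδ : 0 ≤ δ := hf.nonneg e
  have ha := orbit_gp_nonneg hf e f f⁻¹
  have h' : 2 * (orbitFrame G hf e).gp f⁻¹ f⁻¹⁻¹ + 3 * δ + 1 < (orbitFrame G hf e).size f⁻¹ := by
    rw [inv_inv, orbit_size_inv, (orbitFrame G hf e).symm]; exact h
  refine ⟨fun n => (lox_step h n).2, (orbitFrame G hf e).gp f f⁻¹ + 2 * δ, fun n m => ?_⟩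
  rcases m with _ | m
  · rw [pow_zero, orbit_gp_one]; linarith
  have h1 : (orbitFrame G hf e).gp (f ^ (m + 1)) f =
      (orbitFrame G hf e).size f - (orbitFrame G hf e).gp f⁻¹ (f ^ m) := by
    rw [pow_succ', orbit_gp_mul, (orbitFrame G hf e).symm f⁻¹]
  have h2 := (lox_step h m).1
  have h3 := (lox_step h' n).1
  rw [inv_inv, (orbitFrame G hf e).symm f, (orbitFrame G hf e).symm f⁻¹] at h3
  have h4 : min ((orbitFrame G hf e).gp (f⁻¹ ^ n) (f ^ (m + 1)))
        ((orbitFrame G hf e).gp (f ^ (m + 1)) f) ≤ (orbitFrame G hf e).gp (f⁻¹ ^ n) f + δ :=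
    (orbitFrame G hf e).tri _ _ _
  rcases min_le_iff.1 h4 with h4 | h4
  · linarith
  · linarith

/-- Two distinct boundary points force the existence of a loxodromic element: for `g`, `h` deep
near these points, one of `g`, `h`, `g * h` is loxodromic. -/
theorem exists_lox {p q : (orbitFrame G hf e).Cpl} (hpq : p ≠ q)
    (hp : ∀ g, p ≠ (orbitFrame G hf e).pt g) (hq : ∀ g, q ≠ (orbitFrame G hf e).pt g) :
    ∃ f : G, Lox hf e f := by
  set H := orbitFrame G hf e with hH
  have hδ : 0 ≤ δ := hf.nonneg e
  have tri : ∀ g h k, min (H.gp g k) (H.gp k h) ≤ H.gp g h + δ := H.tri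
  obtain ⟨D₀, O, hO, O', hO', hD⟩ := H.sep hpq
  set D := max D₀ 0
  have hD0 : 0 ≤ D := le_max_right _ _
  obtain ⟨Q, hQ, hQ'⟩ := H.close hp (4 * D + 20 * δ + 10)
  obtain ⟨Q', hR, hR'⟩ := H.close hq (4 * D + 20 * δ + 10)
  obtain ⟨g, hgO, hgQ⟩ := H.exists_pt (inter_mem hO hQ)
  obtain ⟨h, hhO, hhQ⟩ := H.exists_pt (inter_mem hO' hR)
  have hgh : H.gp g h ≤ D := (hD g h hgO hhO).trans (le_max_left _ _)
  have hg := hQ' g g hgQ hgQ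
  have hh := hR' h h hhQ hhQ
  rw [hH, orbit_gp_self, ← hH] at hg hh
  by_cases c1 : 2 * H.gp g g⁻¹ + 3 * δ + 1 < H.size g
  · exact ⟨g, lox_of_local c1⟩
  by_cases c2 : 2 * H.gp h h⁻¹ + 3 * δ + 1 < H.size h
  · exact ⟨h, lox_of_local c2⟩
  refine ⟨g * h, lox_of_local ?_⟩
  rw [← hH]
  have e1 : H.gp g⁻¹ h ≤ D + δ := by
    rcases min_le_iff.1 (tri g h g⁻¹) with h1 | h1 <;> linarith
  have e2 : H.gp g h⁻¹ ≤ D + δ := by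
    have h2 := H.symm h h⁻¹
    rcases min_le_iff.1 (tri g h h⁻¹) with h1 | h1 <;> linarith
  have e3 : H.size (g * h) = H.size g + H.size h - 2 * H.gp g⁻¹ h := orbit_size_mul hf e g h
  have e4 : H.gp (g * h) g = H.size g - H.gp h g⁻¹ := orbit_gp_mul hf e g h
  have e5 : H.gp (h⁻¹ * g⁻¹) h⁻¹ = H.size h⁻¹ - H.gp g⁻¹ h⁻¹⁻¹ := orbit_gp_mul hf e h⁻¹ g⁻¹
  have e6 : H.size h⁻¹ = H.size h := orbit_size_inv hf e h
  rw [inv_inv, ← mul_inv_rev, e6] at e5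
  rw [H.symm h] at e4
  have e7 : H.gp (g * h) h⁻¹ ≤ D + 2 * δ := by
    have h2 := H.symm g (g * h)
    rcases min_le_iff.1 (tri g h⁻¹ (g * h)) with h1 | h1 <;> linarith
  have e8 : H.gp (g * h) (g * h)⁻¹ ≤ D + 3 * δ := by
    rcases min_le_iff.1 (tri (g * h) h⁻¹ (g * h)⁻¹) with h1 | h1 <;> linarith
  linarith

end Lox
end AcylDyn

/-! ### North–south dynamics on the Gromov completion -/

namespace AcylDyn
open Topology Set Filter

/-- Uniform attraction: `f ^ n` eventually maps the complement of any neighbourhood of `x` into any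
neighbourhood of `y`. -/
def Attracts {G X : Type*} [Group G] [TopologicalSpace X] [MulAction G X] (f : G) (x y : X) :
    Prop :=
  ∀ U ∈ 𝓝 x, ∀ V ∈ 𝓝 y, ∃ N : ℕ, ∀ n, N < n → ∀ z ∉ U, f ^ n • z ∈ V

theorem Attracts.tendsto {G X : Type*} [Group G] [TopologicalSpace X] [T1Space X] [MulAction G X]
    {f : G} {x y z : X} (h : Attracts f x y) (hz : z ≠ x) :
    Tendsto (fun n : ℕ => f ^ n • z) atTop (𝓝 y) := by
  intro V hV
  obtain ⟨N, hN⟩ := h {z}ᶜ (isClosed_singleton.isOpen_compl.mem_nhds hz.symm) V hV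
  rw [mem_map]
  filter_upwards [Ioi_mem_atTop N] with n hn
  exact hN n hn z (by simp)

section
variable {G S : Type*} [Group G] [MetricSpace S] [MulAction G S] [IsIsometricSMul G S] {δ : ℝ}
  {hf : FourPt S δ} {e : S}

theorem Lox.exists_lim {f : G} (h : Lox hf e f) : ∃ y : (orbitFrame G hf e).Cpl,
    Tendsto (fun n : ℕ => (orbitFrame G hf e).pt (f ^ n)) atTop (𝓝 y) ∧
      ∀ g, y ≠ (orbitFrame G hf e).pt g := by
  obtain ⟨D, hD⟩ := h.2
  apply (orbitFrame G hf e).exists_lim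
  have key : ∀ n m : ℕ, n ≤ m → (n : ℝ) - D ≤ (orbitFrame G hf e).gp (f ^ n) (f ^ m) := by
    intro n m hnm
    have h1 := orbit_gp_mul hf e (f ^ n) (f ^ (m - n))
    rw [← pow_add, Nat.add_sub_cancel' hnm, ← inv_pow] at h1
    rw [(orbitFrame G hf e).symm, h1, (orbitFrame G hf e).symm]
    have := hD n (m - n)
    have := h.1 n
    linarith
  refine tendsto_atTop.2 fun b => ?_
  obtain ⟨N, hN⟩ := exists_nat_ge (b + D)
  filter_upwards [Ici_mem_atTop ((N, N) : ℕ × ℕ)] with p hp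
  have h1 : (N : ℝ) ≤ p.1 := by exact_mod_cast hp.1
  have h2 : (N : ℝ) ≤ p.2 := by exact_mod_cast hp.2
  rcases le_total p.1 p.2 with h3 | h3
  · linarith [key _ _ h3]
  · rw [(orbitFrame G hf e).symm]
    linarith [key _ _ h3]

theorem Lox.attracts {f : G} (h : Lox hf e f) {x y : (orbitFrame G hf e).Cpl}
    (hx : Tendsto (fun n : ℕ => (orbitFrame G hf e).pt (f⁻¹ ^ n)) atTop (𝓝 x))
    (hy : Tendsto (fun n : ℕ => (orbitFrame G hf e).pt (f ^ n)) atTop (𝓝 y)) :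
    Attracts f x y := by
  intro U hU V hV
  obtain ⟨U', hU', hUc, hUU⟩ := exists_mem_nhds_isClosed_subset hU
  obtain ⟨V', hV', hVc, hVV⟩ := exists_mem_nhds_isClosed_subset hV
  obtain ⟨D₁, O₁, hO₁, h₁⟩ := (orbitFrame G hf e).near hU'
  obtain ⟨D₂, O₂, hO₂, h₂⟩ := (orbitFrame G hf e).near hV'
  obtain ⟨m, hm⟩ := exists_nat_gt (D₁ + D₂)
  obtain ⟨N, hN⟩ := eventually_atTop.1 ((hx.eventually hO₁).and ((hy.eventually hO₂).and
    (Ioi_mem_atTop m)))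
  refine ⟨N, fun n hn z hz => hVV ?_⟩
  obtain ⟨hn1, hn2, hn3⟩ := hN n hn.le
  have hmn : (m : ℝ) < n := by exact_mod_cast (show m < n from hn3)
  have hpt : ∀ s : G, (orbitFrame G hf e).pt s ∉ U' →
      f ^ n • (orbitFrame G hf e).pt s ∈ V' := by
    intro s hs
    have h3 : (orbitFrame G hf e).gp s (f⁻¹ ^ n) ≤ D₁ := by
      by_contra hcon
      exact hs (h₁ s _ hn1 (not_le.1 hcon))
    rw [(orbitFrame G hf e).smul_pt]
    apply h₂ _ _ hn2
    rw [orbit_gp_mul, ← inv_pow]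
    have := h.1 n
    linarith
  have hcont : Continuous fun z : (orbitFrame G hf e).Cpl => f ^ n • z := continuous_const_smul _
  by_contra hcon
  obtain ⟨s, hs1, hs2⟩ := (orbitFrame G hf e).exists_pt (ξ := z) (inter_mem
    (hUc.isOpen_compl.mem_nhds fun h => hz (hUU h))
    ((hVc.isOpen_compl.preimage hcont).mem_nhds hcon))
  exact hs2 (hpt s hs1)

theorem pow_lim_fixed {f : G} {y : (orbitFrame G hf e).Cpl}
    (hy : Tendsto (fun n : ℕ => (orbitFrame G hf e).pt (f ^ n)) atTop (𝓝 y)) : f • y = y := by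
  have h1 := (continuous_const_smul f).continuousAt.tendsto.comp hy
  have h2 := (tendsto_add_atTop_iff_nat 1).2 hy
  refine tendsto_nhds_unique h1 (h2.congr fun n => ?_)
  rw [Function.comp_apply, (orbitFrame G hf e).smul_pt, pow_succ']

/-- If the powers of `f` and `f⁻¹` have distinct limits `y` and `x` forming an invariant pair, there
are no other boundary points. -/
theorem ends_of_invariant {f : G} {x y : (orbitFrame G hf e).Cpl} (hxy : x ≠ y)
    (hx : Tendsto (fun n : ℕ => (orbitFrame G hf e).pt (f⁻¹ ^ n)) atTop (𝓝 x))
    (hy : Tendsto (fun n : ℕ => (orbitFrame G hf e).pt (f ^ n)) atTop (𝓝 y))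
    (hix : ∀ g : G, g • x = x ∨ g • x = y) (hiy : ∀ g : G, g • y = x ∨ g • y = y)
    {r : (orbitFrame G hf e).Cpl} (hr : ∀ g, r ≠ (orbitFrame G hf e).pt g) : r = x ∨ r = y := by
  let H := orbitFrame G hf e
  by_contra hcon
  push Not at hcon
  obtain ⟨D₁, O₁, hO₁, O₁', hO₁', h₁⟩ := H.sep hcon.1
  obtain ⟨D₂, O₂, hO₂, O₂', hO₂', h₂⟩ := H.sep hcon.2
  obtain ⟨D₃, O₃, hO₃, O₃', hO₃', h₃⟩ := H.sep hxy
  obtain ⟨O, hO, h₄⟩ := H.close hr (D₁ + D₂ + D₃)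
  obtain ⟨s, ⟨hs1, hs2⟩, hs3⟩ := H.exists_pt (inter_mem (inter_mem hO₁ hO₂) hO)
  have hs : D₁ + D₂ + D₃ < H.size s := (h₄ s s hs3 hs3).trans_eq (orbit_gp_self hf e s)
  have hcx := ((continuous_const_smul s⁻¹).tendsto x).comp hx
  have hcy := ((continuous_const_smul s⁻¹).tendsto y).comp hy
  have hlim : ∀ᶠ n : ℕ in atTop, H.gp (s⁻¹ * f⁻¹ ^ n) (s⁻¹ * f ^ n) ≤ D₃ := by
    rcases hix s⁻¹ with hx' | hx'
    · have hy' : s⁻¹ • y = y := by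
        rcases hiy s⁻¹ with h5 | h5
        · exact absurd (smul_left_cancel s⁻¹ (hx'.trans h5.symm)) hxy
        · exact h5
      rw [hx'] at hcx
      rw [hy'] at hcy
      filter_upwards [hcx.eventually hO₃, hcy.eventually hO₃'] with n h5 h6
      rw [Function.comp_apply, H.smul_pt] at h5 h6
      exact h₃ _ _ h5 h6
    · have hy' : s⁻¹ • y = x := by
        rcases hiy s⁻¹ with h5 | h5
        · exact h5
        · exact absurd (smul_left_cancel s⁻¹ (hx'.trans h5.symm)) hxy
      rw [hx'] at hcx
      rw [hy'] at hcy
      filter_upwards [hcx.eventually hO₃', hcy.eventually hO₃] with n h5 h6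
      rw [Function.comp_apply, H.smul_pt] at h5 h6
      rw [H.symm]
      exact h₃ _ _ h6 h5
  obtain ⟨n, hn1, hn2, hn3⟩ := (hlim.and ((hx.eventually hO₁').and (hy.eventually hO₂'))).exists
  have e1 := h₁ s _ hs1 hn2
  have e2 := h₂ s _ hs2 hn3
  have e3 : 0 ≤ H.gp (f⁻¹ ^ n) (f ^ n) := orbit_gp_nonneg hf e _ _
  -- expand all Gromov products into distances
  have e4 : H.gp (s⁻¹ * f⁻¹ ^ n) (s⁻¹ * f ^ n) = H.size s - H.gp s (f⁻¹ ^ n) - H.gp s (f ^ n) +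
      H.gp (f⁻¹ ^ n) (f ^ n) := by
    change gprod e ((s⁻¹ * f⁻¹ ^ n) • e) ((s⁻¹ * f ^ n) • e) = dist (s • e) e -
      gprod e (s • e) (f⁻¹ ^ n • e) - gprod e (s • e) (f ^ n • e) + gprod e (f⁻¹ ^ n • e) (f ^ n • e)
    have a1 : ∀ a : G, dist ((s⁻¹ * a) • e) e = dist (s • e) (a • e) := by
      intro a
      rw [← dist_smul s, smul_smul, mul_inv_cancel_left, dist_comm]
    unfold gprod
    rw [a1, a1, mul_smul, mul_smul, dist_smul]
    ring
  linarith

/-- Three limit points of the action give three points of the completion outside `G`. -/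
theorem exists_three_ends (hne : NonelemAction (fun (g : G) (s : S) => g • s) e) :
    ∃ p q r : (orbitFrame G hf e).Cpl, p ≠ q ∧ q ≠ r ∧ p ≠ r ∧
      (∀ g, p ≠ (orbitFrame G hf e).pt g) ∧ (∀ g, q ≠ (orbitFrame G hf e).pt g) ∧
      (∀ g, r ≠ (orbitFrame G hf e).pt g) := by
  let H := orbitFrame G hf e
  have hgp : ∀ (s t : S) (g h : G),
      gprod e (g • s) (h • t) ≤ H.gp g h + (dist s e + dist t e) := by
    intro s t g h
    change _ ≤ gprod e (g • e) (h • e) + _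
    have h1 := gprod_lip e (g • s) (g • e) (h • t)
    have h2 := gprod_lip e (h • t) (h • e) (g • e)
    rw [gprod_comm e (h • t), gprod_comm e (h • e)] at h2
    rw [dist_smul] at h1 h2
    linarith
  have hgp' : ∀ (s t : S) (g h : G),
      H.gp g h ≤ gprod e (g • s) (h • t) + (dist s e + dist t e) := by
    intro s t g h
    change gprod e (g • e) (h • e) ≤ _
    have h1 := gprod_lip e (g • e) (g • s) (h • e)
    have h2 := gprod_lip e (h • e) (h • t) (g • s)
    rw [gprod_comm e (h • t), gprod_comm e (h • e)] at h2
    rw [dist_smul, dist_comm] at h1 h2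
    linarith
  have hpt : ∀ x ∈ limitSet (fun (g : G) (s : S) => g • s) e, ∃ (p : H.Cpl) (s : S) (g : ℕ → G),
      TendstoBd e (fun n => g n • s) x ∧ Tendsto (fun n => H.pt (g n)) atTop (𝓝 p) ∧
      ∀ h, p ≠ H.pt h := by
    rintro x ⟨s, g, hg⟩
    obtain ⟨p, hp, hp'⟩ := H.exists_lim (g := g) (by
      have hc : Tendsto (fun p : ℕ × ℕ => gprod e (g p.1 • s) (g p.2 • s)) atTop atTop := hg.1
      refine tendsto_atTop_mono (fun p => ?_)
        (tendsto_atTop_add_const_right _ (-(dist s e + dist s e)) hc)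
      linarith [hgp s s (g p.1) (g p.2)])
    exact ⟨p, s, g, hg, hp, hp'⟩
  have hne' : ∀ x y : GBoundary S e, x ≠ y → ∀ (p q : H.Cpl) (s t : S) (g h : ℕ → G),
      TendstoBd e (fun n => g n • s) x → TendstoBd e (fun n => h n • t) y →
      Tendsto (fun n => H.pt (g n)) atTop (𝓝 p) → Tendsto (fun n => H.pt (h n)) atTop (𝓝 q) →
      (∀ h, p ≠ H.pt h) → p ≠ q := by
    rintro x y hxy p q s t g h ⟨hg, rfl⟩ ⟨hh, rfl⟩ hp hq hp' rfl
    apply hxy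
    refine (mk_eq_iff hf _ _).2 ?_
    change Tendsto (fun n => gprod e (g n • s) (h n • t)) atTop atTop
    refine tendsto_atTop_mono (fun n => ?_)
      (tendsto_atTop_add_const_right _ (-(dist s e + dist t e)) (H.gp_tendsto hp' hp hq))
    linarith [hgp' s t (g n) (h n)]
  obtain ⟨x, y, z, hx, hy, hz, hxy, hyz, hxz⟩ := hne
  obtain ⟨p, s, g, p1, p2, p3⟩ := hpt x hx
  obtain ⟨q, t, h, q1, q2, q3⟩ := hpt y hy
  obtain ⟨r, u, k, r1, r2, r3⟩ := hpt z hz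
  exact ⟨p, q, r, hne' x y hxy p q s t g h p1 q1 p2 q2 p3,
    hne' y z hyz q r t u h k q1 r1 q2 r2 q3, hne' x z hxz p r s u g k p1 r1 p2 r2 p3, p3, q3, r3⟩

/-- A non-elementary action has an element with north–south dynamics on the completion, whose
attracting point is moved off the two fixed points by some group element. -/
theorem exists_north_south (hne : NonelemAction (fun (g : G) (s : S) => g • s) e) :
    ∃ (f h : G) (x y : (orbitFrame G hf e).Cpl), x ≠ y ∧ f • x = x ∧ f • y = y ∧
      Attracts f x y ∧ Attracts f⁻¹ y x ∧ (∀ g, y ≠ (orbitFrame G hf e).pt g) ∧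
      h • y ≠ x ∧ h • y ≠ y := by
  let H := orbitFrame G hf e
  obtain ⟨p, q, r, hpq, hqr, hpr, hp, hq, hr⟩ := exists_three_ends (hf := hf) hne
  obtain ⟨f, hL⟩ := exists_lox hpq hp hq
  obtain ⟨y, hy, hyG⟩ := hL.exists_lim
  obtain ⟨x, hx, hxG⟩ := hL.inv.exists_lim
  have hxy : x ≠ y := by
    rintro rfl
    obtain ⟨D, hD⟩ := hL.2
    obtain ⟨n, hn⟩ := ((H.gp_tendsto hxG hx hy).eventually (Ioi_mem_atTop D)).exists
    exact absurd (hD n n) (not_le.2 hn)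
  have hfx : f • x = x := by
    rw [eq_comm, ← inv_smul_eq_iff]
    exact pow_lim_fixed hx
  have hfy : f • y = y := pow_lim_fixed hy
  have hy' : Tendsto (fun n : ℕ => H.pt (f⁻¹⁻¹ ^ n)) atTop (𝓝 y) := by rwa [inv_inv]
  have A1 := hL.attracts hx hy
  have A2 := hL.inv.attracts hy' hx
  by_cases hcase : ∃ h : G, h • y ≠ x ∧ h • y ≠ y
  · obtain ⟨h, h1, h2⟩ := hcase
    exact ⟨f, h, x, y, hxy, hfx, hfy, A1, A2, hyG, h1, h2⟩
  by_cases hcase' : ∃ h : G, h • x ≠ y ∧ h • x ≠ x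
  · obtain ⟨h, h1, h2⟩ := hcase'
    refine ⟨f⁻¹, h, y, x, hxy.symm, ?_, ?_, A2, by rwa [inv_inv], hxG, h1, h2⟩
    · rw [inv_smul_eq_iff, hfy]
    · rw [inv_smul_eq_iff, hfx]
  exfalso
  push Not at hcase hcase'
  have hends : ∀ r : H.Cpl, (∀ g, r ≠ H.pt g) → r = x ∨ r = y := fun r hr =>
    ends_of_invariant hxy hx hy
      (fun g => by by_cases h : g • x = y; exacts [Or.inr h, Or.inl (hcase' g h)])
      (fun g => by by_cases h : g • y = x; exacts [Or.inl h, Or.inr (hcase g h)]) hr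
  rcases hends p hp with rfl | rfl <;> rcases hends q hq with rfl | rfl <;>
    rcases hends r hr with rfl | rfl <;> simp_all

end
end AcylDyn

/-! ### The invariant Baire space in the boundary -/

namespace AcylDyn
open Topology Set Filter

/-- If the orbit of `y` accumulates at `y`, its closure is uncountable. -/
theorem closure_orbit_not_countable {G X : Type*} [Group G] [MetricSpace X] [CompleteSpace X]
    [MulAction G X] [ContinuousConstSMul G X] {y : X}
    (hacc : ∀ U ∈ 𝓝 y, ∃ h : G, h • y ∈ U ∧ h • y ≠ y) :
    ¬ (closure (range fun g : G => g • y)).Countable := by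
  intro hc
  have hpre : Preperfect (range fun g : G => g • y) := by
    rintro _ ⟨g, rfl⟩
    rw [accPt_iff_nhds]
    intro U hU
    obtain ⟨h, h1, h2⟩ := hacc ((fun z => g • z) ⁻¹' U)
      ((continuous_const_smul g).continuousAt.preimage_mem_nhds hU)
    refine ⟨g • h • y, ⟨h1, g * h, mul_smul _ _ _⟩, fun h3 => h2 (smul_left_cancel g h3)⟩
  obtain ⟨φ, hφ, -, hinj⟩ := hpre.perfect_closure.exists_nat_bool_injection
    ⟨y, subset_closure ⟨1, one_smul _ _⟩⟩
  have h1 : (range φ).Countable := hc.mono hφ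
  have h2 : Countable (ℕ → Bool) := by
    have := h1.to_subtype
    exact (Set.injective_codRestrict (fun x => mem_range_self x) |>.2 hinj).countable
  obtain ⟨s, hs⟩ := exists_surjective_nat (ℕ → Bool)
  obtain ⟨n, hn⟩ := hs fun n => !(s n n)
  have := congrFun hn n
  simp at this

section
variable {G S : Type*} [Group G] [Countable G] [MetricSpace S] [MulAction G S]
  [IsIsometricSMul G S] {δ : ℝ} {hf : FourPt S δ} {e : S}

theorem exists_baire_model (hne : NonelemAction (fun (g : G) (s : S) => g • s) e) :
    ∃ (f : G) (x y : (orbitFrame G hf e).Cpl) (M : Set (orbitFrame G hf e).Cpl),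
      x ≠ y ∧ f • x = x ∧ f • y = y ∧ Attracts f x y ∧ x ∈ M ∧ y ∈ M ∧
      (∀ g : G, ∀ z ∈ M, g • z ∈ M) ∧ (∀ z ∈ M, ∀ g, z ≠ (orbitFrame G hf e).pt g) ∧
      Nonempty (M ≃ₜ (ℕ → ℕ)) := by
  let H := orbitFrame G hf e
  obtain ⟨f, h, x, y, hxy, hfx, hfy, A1, A2, hyG, h1, h2⟩ := exists_north_south (hf := hf) hne
  let L : Set H.Cpl := closure (range fun g : G => g • y)
  have hLc : IsClosed L := isClosed_closure
  have horb : ∀ g : G, g • y ∈ L := fun g => subset_closure ⟨g, rfl⟩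
  have hyL : y ∈ L := by simpa using horb 1
  -- closures of orbits are invariant
  have hcinv : ∀ w : H.Cpl, ∀ g : G, ∀ z ∈ closure (range fun k : G => k • w),
      g • z ∈ closure (range fun k : G => k • w) := by
    intro w g z hz
    have hm : MapsTo (fun z : H.Cpl => g • z) (range fun k : G => k • w)
        (range fun k : G => k • w) := by
      rintro _ ⟨k, rfl⟩
      exact ⟨g * k, mul_smul _ _ _⟩
    exact hm.closure (continuous_const_smul g) hz
  have hLinv : ∀ g : G, ∀ z ∈ L, g • z ∈ L := hcinv y
  have hxL : x ∈ L := by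
    refine hLc.mem_of_tendsto (A2.tendsto h2) (Eventually.of_forall fun n => ?_)
    exact hLinv _ _ (horb h)
  have hLG : ∀ z ∈ L, ∀ g, z ≠ H.pt g := by
    rintro z hz g rfl
    obtain ⟨_, h3, k, rfl⟩ := mem_closure_iff.1 hz _ (H.isOpen_pt g) rfl
    exact H.smul_ne_pt hyG k g h3
  have hdense : ∀ z : H.Cpl, z ≠ x → L ⊆ closure (range fun g : G => g • z) := by
    intro z hz
    have hyz : y ∈ closure (range fun g : G => g • z) :=
      mem_closure_of_tendsto (A1.tendsto hz) (Eventually.of_forall fun n => ⟨f ^ n, rfl⟩)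
    refine closure_minimal ?_ isClosed_closure
    rintro _ ⟨g, rfl⟩
    exact hcinv z g y hyz
  have hunc : ¬ L.Countable := by
    refine closure_orbit_not_countable fun U hU => ?_
    obtain ⟨n, hn⟩ := ((A1.tendsto h1).eventually hU).exists
    refine ⟨f ^ n * h, by rwa [mul_smul], fun h3 => h2 ?_⟩
    have hfn : f ^ n • y = y := by
      clear hn h3
      induction n with
      | zero => rw [pow_zero, one_smul]
      | succ n ih => rw [pow_succ, mul_smul, hfy, ih]
    rw [mul_smul] at h3
    exact smul_left_cancel (f ^ n) (h3.trans hfn.symm)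
  obtain ⟨z₀, hz₀, hz₀'⟩ : ∃ z ∈ L, z ∉ (range fun g : G => g • x) ∪ range fun g : G => g • y := by
    by_contra hcon
    push Not at hcon
    exact hunc (((countable_range _).union (countable_range _)).mono hcon)
  have hzx : ∀ g : G, g • x ≠ z₀ := fun g hg => hz₀' (Or.inl ⟨g, hg⟩)
  obtain ⟨M, hML, hMinv, hxM, hyM, hM⟩ := exists_baire_subset hLc hLinv hxL hyL hz₀ hzx
    (fun g hg => hz₀' (Or.inr ⟨g, hg⟩)) le_rfl
    (hdense z₀ fun hz => hzx 1 (by rw [one_smul, hz]))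
  exact ⟨f, x, y, M, hxy, hfx, hfy, A1, hxM, hyM, hMinv, fun z hz => hLG z (hML hz), hM⟩

end
end AcylDyn

/-! ### Condition (C) on the boundary -/

namespace AcylDyn
open Topology Set Filter

section Metric
variable {S : Type*} [MetricSpace S] {δ : ℝ}

/-- A point `w` on the way from `e` to `s` lies almost between any `P` in the direction of `s` and
any `R` whose direction diverges from that of `P`. -/
theorem between_of_deep (hf : FourPt S δ) {e w s P R : S} {D : ℝ} (hws : gprod e w s = dist w e)
    (hP : dist w e ≤ gprod e P s) (hPR : gprod e P R ≤ D) : gprod w P R ≤ D + δ := by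
  have h1 := hf.gp_min e P s w
  rw [gprod_comm e s w, hws, min_eq_right hP] at h1
  unfold gprod at *
  have h2 := dist_triangle_right R w e
  rw [dist_comm w e] at h2 h1
  rw [dist_comm e w] at h1 h2
  linarith

theorem deep_or_deep (hf : FourPt S δ) {e W a b : S} {c : ℝ} (h : gprod W a b ≤ c) :
    dist W e - c - δ ≤ gprod e a W ∨ dist W e - c - δ ≤ gprod e b W := by
  have h1 : gprod e a W + gprod e b W = dist W e + gprod e a b - gprod W a b := by
    unfold gprod; ring
  have h2 := hf.gp e a W b
  rw [gprod_comm e W b] at h2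
  rcases h2 with h2 | h2
  · right; linarith
  · left; linarith

/-- A point lying almost between each of `p`, `q` and each of `r`, `s` is close to `e`, as soon as
`p`, `q` diverge and `r`, `s` diverge as seen from `e`. -/
theorem dist_le_of_between (hf : FourPt S δ) {e W p q r s : S} {c D : ℝ} (h1 : gprod W p r ≤ c)
    (h2 : gprod W p s ≤ c) (h3 : gprod W q r ≤ c) (h4 : gprod W q s ≤ c)
    (hpq : gprod e p q ≤ D) (hrs : gprod e r s ≤ D) : dist W e ≤ D + c + 2 * δ := by
  have key : ∀ a b : S, gprod e a b ≤ D → dist W e - c - δ ≤ gprod e a W →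
      dist W e - c - δ ≤ gprod e b W → dist W e ≤ D + c + 2 * δ := by
    intro a b hab ha hb
    rw [gprod_comm e b W] at hb
    have := (le_min ha hb).trans (hf.gp_min e a W b)
    linarith
  by_cases hp : dist W e - c - δ ≤ gprod e p W
  · by_cases hq : dist W e - c - δ ≤ gprod e q W
    · exact key p q hpq hp hq
    · exact key r s hrs ((deep_or_deep hf h3).resolve_left hq)
        ((deep_or_deep hf h4).resolve_left hq)
  · exact key r s hrs ((deep_or_deep hf h1).resolve_left hp)
      ((deep_or_deep hf h2).resolve_left hp)

theorem between_shift (hf : FourPt S δ)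
    {e W p r p₀ r₀ : S} {c T : ℝ} (h : gprod W p r ≤ c) (hT : dist W e ≤ T)
    (hp : T + c + 2 * δ < gprod e p p₀) (hr : T + c + 2 * δ < gprod e r r₀) :
    gprod W p₀ r₀ ≤ c + 2 * δ := by
  have hδ := hf.nonneg e
  have h1 := gprod_lip_base e W p p₀
  have h2 := gprod_lip_base e W r r₀
  rw [dist_comm] at h1 h2
  have h3 : gprod W p₀ r ≤ c + δ := by
    rcases hf.gp W p p₀ r with h4 | h4 <;> linarith
  rcases hf.gp W p₀ r₀ r with h4 | h4
  · linarith
  · rw [gprod_comm W r₀ r] at h4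
    linarith

theorem dist_le_of_pinned (hf : FourPt S δ)
    {W W' p r : S} {c : ℝ} (h : gprod W p r ≤ c) (h' : gprod W' p r ≤ c)
    (hd : |dist W p - dist W' p| ≤ 1) : dist W W' ≤ 2 * c + 2 * δ + 1 := by
  have h1 := hf p r W W'
  unfold gprod at *
  rw [abs_le] at hd
  simp only [dist_comm p] at h1 h h'
  rcases h1 with h1 | h1 <;> linarith [hd.1, hd.2]

end Metric

section
variable {G S : Type*} [Group G] [MetricSpace S] [MulAction G S] [IsIsometricSMul G S] {δ : ℝ}
  {hf : FourPt S δ} {e : S}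

/-- Elements pulling two fixed distant points `wx`, `wy` back to points near `e` that lie almost
between `p₀` and `r₀`: two such elements for which the pulled-back points have nearly the same
distances to `p₀` differ by an element moving `wx` and `wy` little, so acylindricity leaves only
finitely many. -/
theorem finite_of_bridges (hf : FourPt S δ) (e : S)
    (hac : AcylindricalAction (fun (g : G) (s : S) => g • s)) (c : ℝ) :
    ∃ R : ℝ, 0 < R ∧ ∀ wx wy : S, R ≤ dist wx wy → ∀ (T : ℝ) (p₀ r₀ : S),
      {g : G | ∀ w, w = wx ∨ w = wy → dist (g⁻¹ • w) e ≤ T ∧ gprod (g⁻¹ • w) p₀ r₀ ≤ c}.Finite := by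
  have hδ := hf.nonneg e
  by_cases hc : c < 0
  · refine ⟨1, one_pos, fun wx wy _ T p₀ r₀ => ?_⟩
    convert Set.finite_empty
    refine eq_empty_of_forall_notMem fun g hg => ?_
    have := (hg wx (Or.inl rfl)).2
    have := gprod_nonneg (g⁻¹ • wx) p₀ r₀
    linarith
  push Not at hc
  obtain ⟨R, N, hR, -, h⟩ := hac (2 * c + 2 * δ + 1) (by linarith)
  refine ⟨R, hR, fun wx wy hw T p₀ r₀ => ?_⟩
  let φ : G → ℕ × ℕ := fun g => (⌊dist (g⁻¹ • wx) p₀⌋₊, ⌊dist (g⁻¹ • wy) p₀⌋₊)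
  refine Set.Finite.of_finite_fibers φ ?_ ?_
  · let B := ⌊T + dist p₀ e⌋₊
    refine ((Set.finite_Iic B).prod (Set.finite_Iic B)).subset ?_
    rintro _ ⟨g, hg, rfl⟩
    have : ∀ w, w = wx ∨ w = wy → ⌊dist (g⁻¹ • w) p₀⌋₊ ≤ B := by
      intro w hw
      apply Nat.floor_le_floor
      have := dist_triangle_right (g⁻¹ • w) p₀ e
      have := (hg w hw).1
      linarith
    exact ⟨this wx (Or.inl rfl), this wy (Or.inr rfl)⟩
  · rintro _ ⟨g₀, hg₀, rfl⟩
    refine ((h wx wy hw).1.image fun k => k * g₀).subset ?_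
    rintro g ⟨hg, hφ⟩
    refine ⟨g * g₀⁻¹, ?_, by simp⟩
    have hfl : ∀ a b : ℝ, 0 ≤ a → 0 ≤ b → ⌊a⌋₊ = ⌊b⌋₊ → |a - b| ≤ 1 := by
      intro a b ha hb hab
      have h1 := Nat.floor_le ha
      have h2 := Nat.lt_floor_add_one a
      have h3 := Nat.floor_le hb
      have h4 := Nat.lt_floor_add_one b
      rw [hab] at h1 h2
      rw [abs_le]
      constructor <;> linarith
    have key : ∀ w, w = wx ∨ w = wy → ⌊dist (g⁻¹ • w) p₀⌋₊ = ⌊dist (g₀⁻¹ • w) p₀⌋₊ →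
        dist w ((g * g₀⁻¹) • w) ≤ 2 * c + 2 * δ + 1 := by
      intro w hw hfloor
      have := dist_le_of_pinned hf (hg w hw).2 (hg₀ w hw).2
        (hfl _ _ dist_nonneg dist_nonneg hfloor)
      rwa [← dist_smul g, smul_inv_smul, smul_smul] at this
    have hφ' : φ g = φ g₀ := hφ
    exact ⟨key wx (Or.inl rfl) (congrArg Prod.fst hφ'), key wy (Or.inr rfl) (congrArg Prod.snd hφ')⟩

/-- Condition (C) on the boundary part of the completion, in terms of separate neighbourhoods. -/
theorem condC_core (hgeo : GeodesicSpace S)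
    (hac : AcylindricalAction (fun (g : G) (s : S) => g • s)) {ξ η : (orbitFrame G hf e).Cpl}
    (hne : ξ ≠ η) (hξ : ∀ g, ξ ≠ (orbitFrame G hf e).pt g)
    (hη : ∀ g, η ≠ (orbitFrame G hf e).pt g) :
    ∃ U V : Set (orbitFrame G hf e).Cpl, IsOpen U ∧ IsOpen V ∧ ξ ∈ U ∧ η ∈ V ∧
      ∀ p q r s : (orbitFrame G hf e).Cpl, p ≠ q → r ≠ s →
        (∀ g, p ≠ (orbitFrame G hf e).pt g) → (∀ g, r ≠ (orbitFrame G hf e).pt g) →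
        ∃ A B C D : Set (orbitFrame G hf e).Cpl, IsOpen A ∧ IsOpen B ∧ IsOpen C ∧ IsOpen D ∧
          p ∈ A ∧ q ∈ B ∧ r ∈ C ∧ s ∈ D ∧
          {g : G | (∃ z ∈ A, g • z ∈ U) ∧ (∃ z ∈ B, g • z ∈ U) ∧ (∃ z ∈ C, g • z ∈ V) ∧
            ∃ z ∈ D, g • z ∈ V}.Finite := by
  let H := orbitFrame G hf e
  have hδ := hf.nonneg e
  obtain ⟨D₀, O, hO, O', hO', hD₀⟩ := H.sep hne
  let c := D₀ + δ
  obtain ⟨R, hR, hfin⟩ := finite_of_bridges hf e hac (c + 2 * δ)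
  let ℓ := R + |D₀| + 4 * δ + 1
  have hD₀' : D₀ ≤ |D₀| := le_abs_self _
  have hD₀'' : 0 ≤ |D₀| := abs_nonneg _
  obtain ⟨Q, hQ, hQℓ⟩ := H.close hξ ℓ
  obtain ⟨Q', hQ', hQℓ'⟩ := H.close hη ℓ
  let U := interior (O ∩ Q)
  let V := interior (O' ∩ Q')
  have hUξ : ξ ∈ U := mem_interior_iff_mem_nhds.2 (inter_mem hO hQ)
  have hVη : η ∈ V := mem_interior_iff_mem_nhds.2 (inter_mem hO' hQ')
  obtain ⟨s₀, hs₀⟩ := H.exists_pt (isOpen_interior.mem_nhds hUξ)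
  obtain ⟨t₀, ht₀⟩ := H.exists_pt (isOpen_interior.mem_nhds hVη)
  have hU : ∀ s, H.pt s ∈ U → H.pt s ∈ O ∧ H.pt s ∈ Q := fun s hs =>
    interior_subset (s := O ∩ Q) hs
  have hV : ∀ s, H.pt s ∈ V → H.pt s ∈ O' ∧ H.pt s ∈ Q' := fun s hs =>
    interior_subset (s := O' ∩ Q') hs
  have hgUU : ∀ s, H.pt s ∈ U → ℓ < gprod e (s • e) (s₀ • e) := fun s hs =>
    hQℓ s s₀ (hU s hs).2 (hU _ hs₀).2
  have hgVV : ∀ s, H.pt s ∈ V → ℓ < gprod e (s • e) (t₀ • e) := fun s hs =>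
    hQℓ' s t₀ (hV s hs).2 (hV _ ht₀).2
  have hgUV : ∀ s t, H.pt s ∈ U → H.pt t ∈ V → gprod e (s • e) (t • e) ≤ D₀ := fun s t hs ht =>
    hD₀ s t (hU s hs).1 (hV t ht).1
  -- the points at distance `ℓ` from `e` on geodesics towards `ξ` and `η`
  have hw : ∀ z : S, ℓ < dist z e → ∃ w : S, dist w e = ℓ ∧ gprod e w z = ℓ := by
    intro z hz
    obtain ⟨Γ, hΓ⟩ := hgeo e z
    obtain ⟨w, -, h1, h2⟩ := seg_exists hΓ (r := ℓ) (by positivity)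
      (by rw [dist_comm]; exact hz.le)
    refine ⟨w, by rw [dist_comm]; exact h1, ?_⟩
    unfold gprod
    rw [dist_comm w e, h1, h2, dist_comm e z]
    ring
  obtain ⟨wx, hwx, hwx'⟩ := hw (s₀ • e) ((hgUU s₀ hs₀).trans_le (gprod_le_left _ _ _))
  obtain ⟨wy, hwy, hwy'⟩ := hw (t₀ • e) ((hgVV t₀ ht₀).trans_le (gprod_le_left _ _ _))
  have hwR : R ≤ dist wx wy := by
    have h1 := hgUV s₀ t₀ hs₀ ht₀
    have h2 : gprod e wx (t₀ • e) ≤ D₀ + δ := by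
      have h4 := hf.gp e (s₀ • e) wx (t₀ • e)
      rw [gprod_comm e _ wx, hwx'] at h4
      rcases h4 with h4 | h4
      · exfalso; dsimp only [ℓ] at h4; linarith
      · linarith
    have h3 : gprod e wx wy ≤ D₀ + 2 * δ := by
      have h4 := hf.gp e wx wy (t₀ • e)
      rw [hwy'] at h4
      rcases h4 with h4 | h4
      · linarith
      · exfalso; dsimp only [ℓ] at h4; linarith
    have h5 : dist wx wy = ℓ + ℓ - 2 * gprod e wx wy := by
      unfold gprod; rw [hwx, hwy]; ring
    rw [h5]; dsimp only [ℓ]; linarith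
  -- both points lie almost between any element near `ξ` and any element near `η`
  have hbr : ∀ s t, H.pt s ∈ U → H.pt t ∈ V → ∀ w, w = wx ∨ w = wy →
      gprod w (s • e) (t • e) ≤ c := by
    rintro s t hs ht w (rfl | rfl)
    · exact between_of_deep hf (hwx'.trans hwx.symm) (hwx.trans_le (hgUU s hs).le) (hgUV s t hs ht)
    · rw [gprod_comm]
      refine between_of_deep hf (hwy'.trans hwy.symm) (hwy.trans_le (hgVV t ht).le) ?_
      rw [gprod_comm]
      exact hgUV s t hs ht
  refine ⟨U, V, isOpen_interior, isOpen_interior, hUξ, hVη, ?_⟩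
  intro p q r s hpq hrs hp hr
  obtain ⟨D₁, P₁, hP₁, Q₁, hQ₁, h₁⟩ := H.sep hpq
  obtain ⟨D₂, R₂, hR₂, S₂, hS₂, h₂⟩ := H.sep hrs
  let D := max D₁ D₂
  let T := D + c + 2 * δ
  obtain ⟨P₃, hP₃, h₃⟩ := H.close hp (T + c + 2 * δ)
  obtain ⟨R₃, hR₃, h₄⟩ := H.close hr (T + c + 2 * δ)
  obtain ⟨p₀, hp₀⟩ := H.exists_pt hP₃
  obtain ⟨r₀, hr₀⟩ := H.exists_pt hR₃
  refine ⟨interior (P₁ ∩ P₃), interior Q₁, interior (R₂ ∩ R₃), interior S₂, isOpen_interior,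
    isOpen_interior, isOpen_interior, isOpen_interior,
    mem_interior_iff_mem_nhds.2 (inter_mem hP₁ hP₃), mem_interior_iff_mem_nhds.2 hQ₁,
    mem_interior_iff_mem_nhds.2 (inter_mem hR₂ hR₃), mem_interior_iff_mem_nhds.2 hS₂, ?_⟩
  refine (hfin wx wy hwR T (p₀ • e) (r₀ • e)).subset ?_
  -- by density the four witnesses may be taken in `G`
  have hap : ∀ (A W : Set H.Cpl) (g : G), IsOpen W → (∃ z ∈ interior A, g • z ∈ W) →
      ∃ k : G, H.pt k ∈ A ∧ H.pt (g * k) ∈ W := by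
    rintro A W g hW ⟨z, hz, hgz⟩
    have hcont : Continuous fun z : H.Cpl => g • z := continuous_const_smul g
    obtain ⟨k, hk1, hk2⟩ := H.exists_pt (inter_mem (isOpen_interior.mem_nhds hz)
      ((hW.preimage hcont).mem_nhds hgz))
    refine ⟨k, interior_subset hk1, ?_⟩
    rw [← H.smul_pt]
    exact hk2
  rintro g ⟨g1, g2, g3, g4⟩ w hw
  obtain ⟨p', ⟨hp1, hp2⟩, hp3⟩ := hap _ _ g isOpen_interior g1
  obtain ⟨q', hq1, hq2⟩ := hap _ _ g isOpen_interior g2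
  obtain ⟨r', ⟨hr1, hr2⟩, hr3⟩ := hap _ _ g isOpen_interior g3
  obtain ⟨s', hs1, hs2⟩ := hap _ _ g isOpen_interior g4
  have hpull : ∀ a b : G, H.pt (g * a) ∈ U → H.pt (g * b) ∈ V →
      gprod (g⁻¹ • w) (a • e) (b • e) ≤ c := by
    intro a b ha hb
    have := hbr _ _ ha hb w hw
    unfold gprod at this ⊢
    rw [← dist_smul g (a • e) (g⁻¹ • w), ← dist_smul g (b • e) (g⁻¹ • w),
      ← dist_smul g (a • e) (b • e), smul_inv_smul, smul_smul, smul_smul]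
    exact this
  have e1 : gprod e (p' • e) (q' • e) ≤ D := (h₁ p' q' hp1 hq1).trans (le_max_left _ _)
  have e2 : gprod e (r' • e) (s' • e) ≤ D := (h₂ r' s' hr1 hs1).trans (le_max_right _ _)
  have hTw : dist (g⁻¹ • w) e ≤ T := dist_le_of_between hf (hpull _ _ hp3 hr3)
    (hpull _ _ hp3 hs2) (hpull _ _ hq2 hr3) (hpull _ _ hq2 hs2) e1 e2
  exact ⟨hTw, between_shift hf (hpull _ _ hp3 hr3) hTw (h₃ p' p₀ hp2 hp₀) (h₄ r' r₀ hr2 hr₀)⟩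

end
end AcylDyn

/-! ### The action on Baire space -/

namespace AcylDyn
open Topology Set Filter

section
variable {G X B : Type*} [Group G] [TopologicalSpace X] [MulAction G X] [TopologicalSpace B]
  {M : Set X}

/-- The action on `B` transported from an invariant subset `M` along a homeomorphism. -/
def transport (hM : ∀ g : G, ∀ z ∈ M, g • z ∈ M) (φ : M ≃ₜ B) (g : G) (b : B) : B :=
  φ ⟨g • (φ.symm b : X), hM g _ (φ.symm b).2⟩

variable {hM : ∀ g : G, ∀ z ∈ M, g • z ∈ M} {φ : M ≃ₜ B}

theorem symm_transport (g : G) (b : B) : (φ.symm (transport hM φ g b) : X) = g • (φ.symm b : X) := by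
  simp [transport]

theorem transport_eq_iff (g : G) (b c : B) :
    transport hM φ g b = c ↔ g • (φ.symm b : X) = φ.symm c := by
  rw [← symm_transport (hM := hM) g b, Subtype.coe_inj, φ.symm.injective.eq_iff]

theorem transport_isActionByHomeos [ContinuousConstSMul G X] :
    IsActionByHomeos (transport hM φ) := by
  refine ⟨⟨fun b => ?_, fun g h b => ?_⟩, fun g => ?_⟩
  · rw [transport_eq_iff, one_smul]
  · rw [transport_eq_iff, symm_transport, symm_transport, mul_smul]
  · refine φ.continuous.comp (Continuous.subtype_mk ?_ _)
    exact (continuous_subtype_val.comp φ.symm.continuous).const_smul g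

theorem transport_northSouth [T2Space X] {f : G} {x y : X} (hxy : x ≠ y) (hx : f • x = x)
    (hy : f • y = y) (h : Attracts f x y) (hxM : x ∈ M) (hyM : y ∈ M) :
    NorthSouth (transport hM φ) f := by
  have hs : ∀ z : M, (φ.symm (φ z) : X) = z := fun z => by simp
  refine ⟨φ ⟨x, hxM⟩, φ ⟨y, hyM⟩, ?_, ?_, ?_⟩
  · intro h1
    exact hxy (congrArg Subtype.val (φ.injective h1))
  · intro b
    rw [transport_eq_iff]
    constructor
    · intro hb
      by_cases hbx : (φ.symm b : X) = x
      · left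
        rw [← φ.symm.injective.eq_iff, ← Subtype.coe_inj, hs]
        exact hbx
      · right
        have hpow : ∀ n : ℕ, f ^ n • (φ.symm b : X) = φ.symm b := by
          intro n
          induction n with
          | zero => simp
          | succ n ih => rw [pow_succ, mul_smul, hb, ih]
        have := h.tendsto hbx
        simp only [hpow] at this
        rw [← φ.symm.injective.eq_iff, ← Subtype.coe_inj, hs]
        exact tendsto_nhds_unique tendsto_const_nhds this
    · rintro (rfl | rfl) <;> rw [hs] <;> assumption
  · intro U V hU hV hxU hyV
    obtain ⟨O, hO, hOU⟩ := isOpen_induced_iff.1 (hU.preimage φ.continuous)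
    obtain ⟨P, hP, hPV⟩ := isOpen_induced_iff.1 (hV.preimage φ.continuous)
    have hOU' : ∀ z : M, (z : X) ∈ O ↔ φ z ∈ U := fun z => Set.ext_iff.1 hOU z
    have hPV' : ∀ z : M, (z : X) ∈ P ↔ φ z ∈ V := fun z => Set.ext_iff.1 hPV z
    obtain ⟨N, hN⟩ := h O (hO.mem_nhds ((hOU' ⟨x, hxM⟩).2 hxU)) P
      (hP.mem_nhds ((hPV' ⟨y, hyM⟩).2 hyV))
    refine ⟨N, fun n hn => ?_⟩
    rintro _ ⟨b, hb, rfl⟩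
    have h1 : (φ.symm b : X) ∉ O := by
      rw [hOU', φ.apply_symm_apply]
      exact hb
    have h2 := hN n hn _ h1
    rw [← symm_transport (hM := hM), hPV', φ.apply_symm_apply] at h2
    exact h2

end

section
variable {G S : Type*} [Group G] [MetricSpace S] [MulAction G S] [IsIsometricSMul G S] {δ : ℝ}
  {hf : FourPt S δ} {e : S}

theorem transport_conditionC {B : Type*} [TopologicalSpace B] (hgeo : GeodesicSpace S)
    (hac : AcylindricalAction (fun (g : G) (s : S) => g • s))
    {M : Set (orbitFrame G hf e).Cpl} (hM : ∀ g : G, ∀ z ∈ M, g • z ∈ M)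
    (hbd : ∀ z ∈ M, ∀ g, z ≠ (orbitFrame G hf e).pt g) (φ : M ≃ₜ B) :
    ConditionC (transport hM φ) := by
  let ι : B → (orbitFrame G hf e).Cpl := fun b => φ.symm b
  have hι : Continuous ι := continuous_subtype_val.comp φ.symm.continuous
  have hinj : Function.Injective ι := Subtype.val_injective.comp φ.symm.injective
  have hιb : ∀ b g, ι b ≠ (orbitFrame G hf e).pt g := fun b => hbd _ (φ.symm b).2
  have hact : ∀ (g : G) b, ι (transport hM φ g b) = g • ι b := fun g b => symm_transport g b
  intro u v hu hv huv
  have hne : ι u.1 ≠ ι v.1 := fun h => huv (Prod.ext (hinj h) (by rw [← hu, ← hv]; exact hinj h))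
  obtain ⟨U, V, hU, hV, huU, hvV, h⟩ := condC_core hgeo hac hne (hιb _) (hιb _)
  refine ⟨(ι ⁻¹' U) ×ˢ (ι ⁻¹' U), (ι ⁻¹' V) ×ˢ (ι ⁻¹' V), (hU.preimage hι).prod (hU.preimage hι),
    (hV.preimage hι).prod (hV.preimage hι), ⟨huU, ?_⟩, ⟨hvV, ?_⟩, ?_⟩
  · rw [← hu]; exact huU
  · rw [← hv]; exact hvV
  intro a b ha hb _
  obtain ⟨A, A', C, C', hA, hA', hC, hC', h1, h2, h3, h4, hfin⟩ :=
    h (ι a.1) (ι a.2) (ι b.1) (ι b.2) (hinj.ne ha) (hinj.ne hb) (hιb _) (hιb _)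
  refine ⟨(ι ⁻¹' A) ×ˢ (ι ⁻¹' A'), (ι ⁻¹' C) ×ˢ (ι ⁻¹' C'), (hA.preimage hι).prod (hA'.preimage hι),
    (hC.preimage hι).prod (hC'.preimage hι), ⟨h1, h2⟩, ⟨h3, h4⟩, hfin.subset ?_⟩
  rintro g ⟨⟨_, ⟨p, ⟨hp1, hp2⟩, rfl⟩, hp3, hp4⟩, ⟨_, ⟨q, ⟨hq1, hq2⟩, rfl⟩, hq3, hq4⟩⟩
  refine ⟨⟨_, hp1, ?_⟩, ⟨_, hp2, ?_⟩, ⟨_, hq1, ?_⟩, ⟨_, hq2, ?_⟩⟩ <;> rw [← hact] <;> assumption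

end

/-- A countable acylindrically hyperbolic group acts on Baire space as required: take the
restriction of its boundary action to a suitable invariant copy of Baire space. -/
theorem baire_of_ah {G : Type*} [Group G] [Countable G] (h : AcylindricallyHyperbolic G) :
    ∃ act : G → (ℕ → ℕ) → (ℕ → ℕ), IsActionByHomeos act ∧ ConditionC act ∧
      ∃ g : G, NorthSouth act g := by
  obtain ⟨S, _, act, δ, hδ, hgeo, hhyp, hact, hac, e, hne⟩ := h
  let _ : MulAction G S :=
    { smul := act
      one_smul := hact.1.1
      mul_smul := hact.1.2 }
  have _ : IsIsometricSMul G S := ⟨hact.2⟩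
  have hf := fourPt_of_slim hδ hgeo hhyp
  obtain ⟨f, x, y, M, hxy, hx, hy, hatt, hxM, hyM, hM, hbd, ⟨φ⟩⟩ :=
    exists_baire_model (G := G) (hf := hf) (e := e) hne
  exact ⟨transport hM φ, transport_isActionByHomeos, transport_conditionC hgeo hac hM hbd φ, f,
    transport_northSouth hxy hx hy hatt hxM hyM⟩

end AcylDyn

/-- A non-virtually-cyclic countable group is acylindrically hyperbolic
iff it admits an action by homeomorphisms on the Baire space `ℕ^ℕ` satisfying
condition (C), with an element having north–south dynamics. -/
theorem statement2 {G : Type*} [Group G] [Countable G] (hG : ¬ VirtuallyCyclic G) :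
    AcylindricallyHyperbolic G ↔
      ∃ act : G → (ℕ → ℕ) → (ℕ → ℕ),
        IsActionByHomeos act ∧ ConditionC act ∧ ∃ g : G, NorthSouth act g := by
  exact ⟨AcylDyn.baire_of_ah, fun ⟨_, h1, h2, _, h3⟩ => AcylDyn.ah_of_baire hG h1 h2 h3⟩
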